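/- Let p be a prime and e ≥ λ_1 ≥ ... ≥ λ_k positive integers with p > λ_1 + ... + λ_k + 1. Then Ψ_e^p(λ_1, ..., λ_k) equals the number of isomorphism classes of nilpotent Lie rings of order p^{e + λ_1 + ... + λ_k} which have type invariants (e, λ_1, ..., λ_k) and nilpotency class less than p. -/

import Mathlib

/-- `℧_1(H) = ⟨h^p : h ∈ H⟩` for a subgroup `H`. -/
def MhoOne (p : ℕ) {P : Type} [Group P] (H : Subgroup P) : Subgroup P :=
  Subgroup.closure {y : P | ∃ x ∈ H, y = x ^ p}

/-- A `p`-group `P` is regular if for all `x y : P` there is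
`z ∈ ℧_1(γ_2(⟨x,y⟩))` with `x^p * y^p = (x*y)^p * z`. -/
def IsRegularPGroup (p : ℕ) (P : Type) [Group P] : Prop :=
  ∀ x y : P,
    ∃ z ∈ MhoOne p ⁅Subgroup.closure {x, y}, Subgroup.closure {x, y}⁆,
      x ^ p * y ^ p = (x * y) ^ p * z

/-- `Ω_i(P) = ⟨x : x^(p^i) = 1⟩`. -/
def OmegaSubgroup (p : ℕ) (P : Type) [Group P] (i : ℕ) : Subgroup P :=
  Subgroup.closure {x : P | x ^ p ^ i = 1}

/-- `ω_i(P)`, defined by `p ^ ω_i(P) = |Ω_i(P)/Ω_{i-1}(P)|`. -/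
noncomputable def omegaInv (p : ℕ) (P : Type) [Group P] (i : ℕ) : ℕ :=
  ((OmegaSubgroup p P (i - 1)).relIndex (OmegaSubgroup p P i)).factorization p

/-- `μ_j(P)` (for `j ≥ 1`): the dual partition of `(ω_1(P), ω_2(P), ...)`. -/
noncomputable def muInv (p : ℕ) (P : Type) [Group P] (j : ℕ) : ℕ :=
  Nat.card {i : ℕ // 1 ≤ i ∧ j ≤ omegaInv p P i}

/-- `P` has type invariants given by the list `l`. -/
def HasTypeInvariants (p : ℕ) (P : Type) [Group P] (l : List ℕ) : Prop :=
  ∀ i : ℕ, muInv p P (i + 1) = l.getD i 0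

/-- The multiplication extracted from a group structure. -/
def mulOfGroup (G : Type) (s : Group G) : Mul G := by letI := s; infer_instance

/-- The number of isomorphism classes of groups of order `N` whose group structure
satisfies the predicate `Q`. -/
noncomputable def groupClassCount (N : ℕ) (Q : Group (Fin N) → Prop) : ℕ :=
  Nat.card (Quot fun s t : {s : Group (Fin N) // Q s} =>
    Nonempty (@MulEquiv (Fin N) (Fin N) (mulOfGroup _ s.1) (mulOfGroup _ t.1)))

/-- `Ψ_e^p(λ)`: the number of isomorphism classes of regular `p`-groups of type
`(e, λ_1, ..., λ_k)`; such a group has order `p ^ (e + λ_1 + ... + λ_k)`. -/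
noncomputable def PsiType (p e : ℕ) (l : List ℕ) : ℕ :=
  groupClassCount (p ^ (e + l.sum)) fun s =>
    letI := s
    IsRegularPGroup p (Fin (p ^ (e + l.sum))) ∧
      HasTypeInvariants p (Fin (p ^ (e + l.sum))) (e :: l)

/-- The lower central series of a Lie ring, as additive subgroups. -/
def lieLCS (L : Type) [LieRing L] : ℕ → AddSubgroup L
  | 0 => ⊤
  | (k + 1) => AddSubgroup.closure {x : L | ∃ y ∈ lieLCS L k, ∃ z : L, x = ⁅y, z⁆}

/-- A Lie ring is nilpotent if its lower central series reaches `⊥`. -/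
def IsNilpotentLieRing (L : Type) [LieRing L] : Prop :=
  ∃ c : ℕ, lieLCS L c = ⊥

/-- The nilpotency class of a Lie ring: the least `c` with `lieLCS L c = ⊥`. -/
noncomputable def lieNilClass (L : Type) [LieRing L] : ℕ :=
  sInf {c : ℕ | lieLCS L c = ⊥}

/-- `Ω_i(A) = {x : p^i • x = 0}` for an additive group `A`. -/
def aOmega (p : ℕ) (A : Type) [AddCommGroup A] (i : ℕ) : AddSubgroup A :=
  AddSubgroup.closure {x : A | p ^ i • x = 0}

/-- `ω_i(A)`. -/
noncomputable def aOmegaInv (p : ℕ) (A : Type) [AddCommGroup A] (i : ℕ) : ℕ :=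
  ((aOmega p A (i - 1)).relIndex (aOmega p A i)).factorization p

/-- `μ_j(A)` (for `j ≥ 1`). -/
noncomputable def aMuInv (p : ℕ) (A : Type) [AddCommGroup A] (j : ℕ) : ℕ :=
  Nat.card {i : ℕ // 1 ≤ i ∧ j ≤ aOmegaInv p A i}

/-- `A` has type invariants given by the list `l`. -/
def aHasType (p : ℕ) (A : Type) [AddCommGroup A] (l : List ℕ) : Prop :=
  ∀ i : ℕ, aMuInv p A (i + 1) = l.getD i 0

/-- The addition extracted from a Lie ring structure. -/
def addOfLieRing (G : Type) (s : LieRing G) : Add G := by letI := s; infer_instance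

/-- The bracket extracted from a Lie ring structure. -/
def bracketOfLieRing (G : Type) (s : LieRing G) : Bracket G G := by letI := s; infer_instance

/-- The number of isomorphism classes of Lie rings with `N` elements whose Lie ring
structure satisfies the predicate `Q`. -/
noncomputable def lieClassCount (N : ℕ) (Q : LieRing (Fin N) → Prop) : ℕ :=
  Nat.card (Quot fun s t : {s : LieRing (Fin N) // Q s} =>
    ∃ e : @AddEquiv (Fin N) (Fin N) (addOfLieRing _ s.1) (addOfLieRing _ t.1),
      ∀ x y : Fin N,
        e (@Bracket.bracket _ _ (bracketOfLieRing _ s.1) x y) =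
          @Bracket.bracket _ _ (bracketOfLieRing _ t.1) (e x) (e y))

/-!
Over `ZMod N` with `c!` invertible, the exponential series truncated at degree `c` turns a Lie ring
of class at most `c` into a group of class at most `c` and exponent dividing `N`. Inside the
truncated tensor algebra on a set `X`, the free such group is the image under `exp` of the free such
Lie ring; that the group generated by the `exp x` is no smaller is seen by comparing leading terms
along the lower central series. Ideals of the free Lie ring thus match normal subgroups of the free
group, and taking quotients gives the Lazard correspondence, which preserves orders of elements and
isomorphisms, and whose groups are regular for every prime.

It remains to see that a regular group of order `p ^ (e + m)` and exponent at least `p ^ e` has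
class at most `m + 1 < p`. Write `Φ` for the Frattini subgroup and `℧ₜ(K)` for the subgroup of
`p ^ t`-th powers of elements of `K`. As long as `|℧ₜ(G) : ℧ₜ(Φ)| ≥ p ^ 2`, commuting with `G` once
takes `℧ₜ(G)` into `℧ₜ(Φ)` and so gains a factor `p` over the generic rate of descent of the lower
central series; for the first `t` where the index is at most `p`, the group `℧ₜ(G)` is central.
-/

open scoped Nat commutatorElement

attribute [local instance] LieRing.ofAssociativeRing

section TruncatedExponential

open Finset

/-- Invertibility of `c!`, the condition under which the exponential series can be used in
nilpotency class at most `c`. -/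
class FactorialInvertible (R : Type*) [CommSemiring R] (c : ℕ) : Prop where
  isUnit_factorial : IsUnit (c ! : R)

theorem isUnit_factorial_of_le (R : Type*) [CommSemiring R] {c k : ℕ} [h : FactorialInvertible R c]
    (hk : k ≤ c) : IsUnit (k ! : R) :=
  isUnit_of_dvd_unit (Nat.cast_dvd_cast (Nat.factorial_dvd_factorial hk)) h.isUnit_factorial

theorem isUnit_natCast_of_le (R : Type*) [CommSemiring R] {c k : ℕ} [h : FactorialInvertible R c]
    (hk : k ≠ 0) (hkc : k ≤ c) : IsUnit (k : R) :=
  isUnit_of_dvd_unit (Nat.cast_dvd_cast (Nat.dvd_factorial hk.bot_lt hkc)) h.isUnit_factorial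

theorem sum_range_sum_range_eq_sum_antidiagonal {M : Type*} [AddCommMonoid M] (n : ℕ)
    (f : ℕ → ℕ → M) (hf : ∀ i j, n ≤ i + j → f i j = 0) :
    ∑ i ∈ range n, ∑ j ∈ range n, f i j = ∑ k ∈ range n, ∑ x ∈ antidiagonal k, f x.1 x.2 := by
  have hfiber : ∀ k ∈ range n, ∑ x ∈ antidiagonal k, f x.1 x.2 =
      ∑ x ∈ range n ×ˢ range n with x.1 + x.2 = k, f x.1 x.2 := by
    refine fun k hk ↦ sum_congr (ext fun x ↦ ?_) fun _ _ ↦ rfl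
    simp only [HasAntidiagonal.mem_antidiagonal, mem_filter, mem_product, mem_range] at hk ⊢
    omega
  rw [sum_congr rfl hfiber, ← sum_product', sum_fiberwise_eq_sum_filter]
  refine (sum_filter_of_ne fun x _ hx ↦ ?_).symm
  contrapose! hx
  exact hf _ _ (by simpa using hx)

variable (R : Type*) [CommRing R] (c : ℕ)

/-- The inverse of `k!` in `R`; the junk value `0` when `k!` is not invertible. -/
noncomputable def invFactorial (k : ℕ) : R := Ring.inverse (k ! : R)

/-- The exponential series truncated after the term of degree `c`. -/
noncomputable def truncExp {A : Type*} [Ring A] [Algebra R A] (a : A) : A :=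
  ∑ k ∈ range (c + 1), invFactorial R k • a ^ k

@[simp]
theorem invFactorial_zero : invFactorial R 0 = 1 := by simp [invFactorial]

theorem invFactorial_one : invFactorial R 1 = 1 := by simp [invFactorial]

variable {c}

theorem invFactorial_add_mul_choose [FactorialInvertible R c] {i j : ℕ} (h : i + j ≤ c) :
    invFactorial R (i + j) * ((i + j).choose i : R) = invFactorial R i * invFactorial R j := by
  have hi := Ring.inverse_mul_cancel _ (isUnit_factorial_of_le R (show i ≤ c by omega))
  have hj := Ring.inverse_mul_cancel _ (isUnit_factorial_of_le R (show j ≤ c by omega))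
  have hij := Ring.inverse_mul_cancel _ (isUnit_factorial_of_le R h)
  have hchoose : ((i + j)! : R) = ((i + j).choose i : R) * i ! * j ! := by
    rw [← Nat.add_choose_mul_factorial_mul_factorial i j, Nat.choose_symm_add]
    push_cast
    ring
  calc invFactorial R (i + j) * ((i + j).choose i : R)
      = invFactorial R (i + j) * ((i + j).choose i : R) *
          (invFactorial R i * (i ! : R)) * (invFactorial R j * (j ! : R)) := by
        simp only [invFactorial, hi, hj, mul_one]
    _ = invFactorial R (i + j) * ((i + j)! : R) * (invFactorial R i * invFactorial R j) := by
        rw [hchoose]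
        ring
    _ = invFactorial R i * invFactorial R j := by
        simp only [invFactorial, hij, one_mul]

section Algebra

variable {R} {A : Type*} [Ring A] [Algebra R A]

@[simp]
theorem truncExp_zero : truncExp R c (0 : A) = 1 := by
  simp [truncExp, sum_range_succ']

theorem truncExp_mulLeft (a b : A) :
    truncExp R c (LinearMap.mulLeft R a) b = truncExp R c a * b := by
  simp [truncExp, sum_mul]

theorem truncExp_mulRight (a b : A) :
    truncExp R c (LinearMap.mulRight R a) b = b * truncExp R c a := by
  simp [truncExp, mul_sum]

end Algebra

variable {R} {M : Type*} [AddCommGroup M] [Module R M]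

theorem truncExp_apply (S : Module.End R M) (v : M) :
    truncExp R c S v = ∑ k ∈ range (c + 1), invFactorial R k • (S ^ k) v := by
  simp [truncExp, LinearMap.sum_apply]

theorem truncExp_add_apply [FactorialInvertible R c] {S T : Module.End R M} (hST : Commute S T)
    {v : M} (hv : ∀ i j, c < i + j → (S ^ i) ((T ^ j) v) = 0) :
    truncExp R c (S + T) v = truncExp R c S (truncExp R c T v) := by
  have hright : truncExp R c S (truncExp R c T v) = ∑ i ∈ range (c + 1), ∑ j ∈ range (c + 1),
      (invFactorial R i * invFactorial R j) • (S ^ i) ((T ^ j) v) := by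
    simp only [truncExp_apply, map_sum, map_smul, smul_sum, mul_smul]
    rw [sum_comm]
    exact sum_congr rfl fun i _ ↦ sum_congr rfl fun j _ ↦ smul_comm _ _ _
  rw [hright, sum_range_sum_range_eq_sum_antidiagonal _
    (fun i j ↦ (invFactorial R i * invFactorial R j) • (S ^ i) ((T ^ j) v))
    (fun i j hij ↦ by rw [hv i j hij, smul_zero]), truncExp_apply]
  refine sum_congr rfl fun n hn ↦ ?_
  rw [hST.add_pow', LinearMap.sum_apply, smul_sum]
  refine sum_congr rfl fun x hx ↦ ?_
  rw [HasAntidiagonal.mem_antidiagonal] at hx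
  rw [mem_range] at hn
  rw [← invFactorial_add_mul_choose R (show x.1 + x.2 ≤ c by omega), hx, mul_smul,
    Nat.cast_smul_eq_nsmul, LinearMap.smul_apply, Module.End.mul_apply]

end TruncatedExponential

/-- A multiplicative filtration `F 0 ⊇ F 1 ⊇ ⋯ ⊇ F (c + 1) = 0` of an algebra with an element
`euler ∈ F 0` inducing multiplication by `n` on `F n / F (n + 1)`; it plays the role of
a grading by degree. -/
structure EulerFiltration (R A : Type*) [CommRing R] [Ring A] [Algebra R A] (c : ℕ) where
  F : ℕ → Submodule R A
  euler : A
  antitone : Antitone F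
  mul_mem {i j : ℕ} {a b : A} : a ∈ F i → b ∈ F j → a * b ∈ F (i + j)
  one_mem : 1 ∈ F 0
  succ_eq_bot : F (c + 1) = ⊥
  euler_mem : euler ∈ F 0
  euler_lie_sub_nsmul_mem {n : ℕ} {a : A} : a ∈ F n → ⁅euler, a⁆ - n • a ∈ F (n + 1)

namespace EulerFiltration

open Finset

variable {R A : Type*} [CommRing R] [Ring A] [Algebra R A] {c : ℕ} (Φ : EulerFiltration R A c)
  {a b : A} {i j n : ℕ}

theorem mem_of_le (h : i ≤ j) (ha : a ∈ Φ.F j) : a ∈ Φ.F i :=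
  Φ.antitone h ha

theorem eq_zero_of_mem (hn : c < n) (ha : a ∈ Φ.F n) : a = 0 := by
  simpa [Φ.succ_eq_bot] using Φ.mem_of_le hn ha

theorem lie_mem (ha : a ∈ Φ.F i) (hb : b ∈ Φ.F j) : ⁅a, b⁆ ∈ Φ.F (i + j) :=
  sub_mem (Φ.mul_mem ha hb) (by simpa only [add_comm] using Φ.mul_mem hb ha)

theorem pow_mem (ha : a ∈ Φ.F 1) (k : ℕ) : a ^ k ∈ Φ.F k := by
  induction k with
  | zero => simpa using Φ.one_mem
  | succ k ih => simpa only [pow_succ] using Φ.mul_mem ih ha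

theorem mem_zero_of_sub_one_mem (ha : a - 1 ∈ Φ.F n) : a ∈ Φ.F 0 := by
  simpa using add_mem (Φ.mem_of_le n.zero_le ha) Φ.one_mem

theorem pow_succ_sub_pow_succ_mem (ha : a ∈ Φ.F 1) (hb : b ∈ Φ.F 1) (hab : a - b ∈ Φ.F n) (k : ℕ) :
    a ^ (k + 1) - b ^ (k + 1) ∈ Φ.F (n + k) := by
  induction k with
  | zero => simpa using hab
  | succ k ih =>
    have hsplit : a ^ (k + 2) - b ^ (k + 2) =
        a * (a ^ (k + 1) - b ^ (k + 1)) + (a - b) * b ^ (k + 1) := by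
      rw [pow_succ' a, pow_succ' b (k + 1)]
      noncomm_ring
    rw [hsplit]
    exact add_mem (Φ.mem_of_le (by omega) (Φ.mul_mem ha ih)) (Φ.mul_mem hab (Φ.pow_mem hb _))

theorem truncExp_sub_truncExp_sub_mem (ha : a ∈ Φ.F 1) (hb : b ∈ Φ.F 1) (hab : a - b ∈ Φ.F n) :
    truncExp R c a - truncExp R c b - (a - b) ∈ Φ.F (n + 1) := by
  rcases c with _ | c
  · rw [Φ.eq_zero_of_mem one_pos ha, Φ.eq_zero_of_mem one_pos hb]
    simp
  have htail : truncExp R (c + 1) a - truncExp R (c + 1) b - (a - b) =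
      ∑ k ∈ range c, invFactorial R (k + 2) • (a ^ (k + 2) - b ^ (k + 2)) := by
    simp only [truncExp, smul_sub, sum_sub_distrib, sum_range_succ' _ (c + 1), sum_range_succ' _ c,
      zero_add, pow_zero, pow_one, invFactorial_zero, invFactorial_one, one_smul]
    abel
  rw [htail]
  exact sum_mem fun k _ ↦ Submodule.smul_mem _ _ <|
    Φ.mem_of_le (by omega) (Φ.pow_succ_sub_pow_succ_mem ha hb hab (k + 1))

theorem truncExp_sub_one_sub_mem (hn : 1 ≤ n) (ha : a ∈ Φ.F n) :
    truncExp R c a - 1 - a ∈ Φ.F (n + 1) := by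
  simpa using Φ.truncExp_sub_truncExp_sub_mem (Φ.mem_of_le hn ha) (zero_mem _) (by simpa using ha)

theorem truncExp_sub_one_mem (hn : 1 ≤ n) (ha : a ∈ Φ.F n) : truncExp R c a - 1 ∈ Φ.F n := by
  simpa using add_mem (Φ.mem_of_le n.le_succ (Φ.truncExp_sub_one_sub_mem hn ha)) ha

theorem sub_mem_of_truncExp_sub_mem (ha : a ∈ Φ.F 1) (hb : b ∈ Φ.F 1)
    (h : truncExp R c a - truncExp R c b ∈ Φ.F n) : a - b ∈ Φ.F n := by
  suffices ∀ m ≤ n, a - b ∈ Φ.F m from this n le_rfl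
  intro m
  induction m with
  | zero => exact fun _ ↦ Φ.mem_of_le zero_le_one (sub_mem ha hb)
  | succ m ih =>
    intro hm
    have hdiff := Φ.truncExp_sub_truncExp_sub_mem ha hb (ih (by omega))
    simpa using sub_mem (Φ.mem_of_le hm h) hdiff

theorem mem_of_truncExp_sub_one_mem (ha : a ∈ Φ.F 1) (h : truncExp R c a - 1 ∈ Φ.F n) :
    a ∈ Φ.F n := by
  simpa using Φ.sub_mem_of_truncExp_sub_mem ha (zero_mem _) (by simpa using h)

theorem truncExp_injOn : Set.InjOn (truncExp R c) (Φ.F 1 : Set A) := by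
  intro a ha b hb h
  refine sub_eq_zero.1 (Φ.eq_zero_of_mem c.lt_succ_self ?_)
  exact Φ.sub_mem_of_truncExp_sub_mem ha hb (by simp [h])

theorem commutator_sub_one_sub_lie_mem {g h : Aˣ} (hg : (g : A) - 1 ∈ Φ.F i)
    (hh : (h : A) - 1 ∈ Φ.F j) (hg' : (↑g⁻¹ : A) - 1 ∈ Φ.F 1) (hh' : (↑h⁻¹ : A) - 1 ∈ Φ.F 1) :
    ((⁅g, h⁆ : Aˣ) : A) - 1 - ⁅(g : A) - 1, (h : A) - 1⁆ ∈ Φ.F (i + j + 1) := by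
  set C := ⁅(g : A) - 1, (h : A) - 1⁆ with hC
  have hCmem : C ∈ Φ.F (i + j) := Φ.lie_mem hg hh
  have hcomm : ((⁅g, h⁆ : Aˣ) : A) - 1 = C * ↑g⁻¹ * ↑h⁻¹ := by
    have hCval : C = g * h - h * g := by
      rw [hC, Ring.lie_def]
      noncomm_ring
    rw [hCval, commutatorElement_def]
    simp [sub_mul, mul_assoc]
  have hsplit : ((⁅g, h⁆ : Aˣ) : A) - 1 - C = C * (↑g⁻¹ - 1) * ↑h⁻¹ + C * (↑h⁻¹ - 1) := by
    rw [hcomm]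
    noncomm_ring
  rw [hsplit]
  exact add_mem (by simpa using Φ.mul_mem (Φ.mul_mem hCmem hg') (Φ.mem_zero_of_sub_one_mem hh'))
    (Φ.mul_mem hCmem hh')

variable [FactorialInvertible R c]

theorem truncExp_add (ha : a ∈ Φ.F 1) (hb : b ∈ Φ.F 1) (hab : Commute a b) :
    truncExp R c (a + b) = truncExp R c a * truncExp R c b := by
  have hcomm : Commute (LinearMap.mulLeft R a) (LinearMap.mulLeft R b) :=
    LinearMap.ext fun x ↦ by simp [← mul_assoc, hab.eq]
  have hsum : LinearMap.mulLeft R (a + b) = LinearMap.mulLeft R a + LinearMap.mulLeft R b :=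
    LinearMap.ext fun x ↦ add_mul a b x
  have hadd := truncExp_add_apply (c := c) hcomm (v := (1 : A)) fun i j hij ↦ by
    simpa only [LinearMap.pow_mulLeft, LinearMap.mulLeft_apply, mul_one] using
      Φ.eq_zero_of_mem hij (Φ.mul_mem (Φ.pow_mem ha i) (Φ.pow_mem hb j))
  simpa only [← hsum, truncExp_mulLeft, mul_one] using hadd

theorem truncExp_neg_mul_truncExp (ha : a ∈ Φ.F 1) : truncExp R c (-a) * truncExp R c a = 1 := by
  rw [← Φ.truncExp_add (neg_mem ha) ha (Commute.refl a).neg_left, neg_add_cancel, truncExp_zero]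

theorem truncExp_mul_truncExp_neg (ha : a ∈ Φ.F 1) : truncExp R c a * truncExp R c (-a) = 1 := by
  simpa using Φ.truncExp_neg_mul_truncExp (neg_mem ha)

theorem truncExp_mul_mul_truncExp_neg (ha : a ∈ Φ.F 1) (hb : b ∈ Φ.F 0) :
    truncExp R c a * b * truncExp R c (-a) = truncExp R c (LieAlgebra.ad R A a) b := by
  have hcomm : Commute (LinearMap.mulLeft R a) (LinearMap.mulRight R (-a)) :=
    LinearMap.ext fun x ↦ by simp [mul_assoc]
  have hsum : LieAlgebra.ad R A a = LinearMap.mulLeft R a + LinearMap.mulRight R (-a) :=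
    LinearMap.ext fun x ↦ by simp [Ring.lie_def, sub_eq_add_neg]
  rw [hsum, truncExp_add_apply hcomm, truncExp_mulRight, truncExp_mulLeft, mul_assoc]
  intro i j hij
  simp only [LinearMap.pow_mulLeft, LinearMap.mulLeft_apply, LinearMap.pow_mulRight,
    LinearMap.mulRight_apply]
  exact Φ.eq_zero_of_mem (n := i + (0 + j)) (by omega)
    (Φ.mul_mem (Φ.pow_mem ha i) (Φ.mul_mem hb (Φ.pow_mem (neg_mem ha) j)))

/-- A homogeneous element of degree `n` lying in `F (n + 1)` vanishes, because `ad euler` acts on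
`F m / F (m + 1)` by `m`, and `m - n` is invertible for `n < m ≤ c`. -/
theorem eq_zero_of_euler_lie_eq_nsmul (h : ⁅Φ.euler, a⁆ = n • a) (ha : a ∈ Φ.F (n + 1)) :
    a = 0 := by
  suffices ∀ m, a ∈ Φ.F (n + 1 + m) from Φ.eq_zero_of_mem (by omega) (this c)
  intro m
  induction m with
  | zero => exact ha
  | succ m ih =>
    by_cases hm : n + 1 + m ≤ c
    · have hsmul : ((m + 1 : ℕ) : R) • a ∈ Φ.F (n + 1 + m + 1) := by
        have hdiff := neg_mem (Φ.euler_lie_sub_nsmul_mem ih)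
        rwa [h, show n + 1 + m = n + (m + 1) by ring, add_nsmul, sub_add_cancel_left, neg_neg,
          ← Nat.cast_smul_eq_nsmul R, ← add_assoc, add_right_comm n] at hdiff
      exact (Submodule.smul_mem_iff_of_isUnit _
        (isUnit_natCast_of_le R (c := c) m.succ_ne_zero (by omega))).1 hsmul
    · exact (Φ.eq_zero_of_mem (by omega) ih).symm ▸ zero_mem _

end EulerFiltration

namespace EulerFiltration

open Finset

variable {R A : Type*} [CommRing R] [Ring A] [Algebra R A] {c : ℕ}

/-- Lie subalgebras of `F 1` normalised by the Euler element; their exponentials form a group. -/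
structure IsAdapted (Φ : EulerFiltration R A c) (𝔏 : LieSubalgebra R A) : Prop where
  mem_one {z : A} : z ∈ 𝔏 → z ∈ Φ.F 1
  euler_lie_mem {z : A} : z ∈ 𝔏 → ⁅Φ.euler, z⁆ ∈ 𝔏

/-- The closed conditions satisfied by all exponentials of elements of `𝔏`: being unipotent,
normalising `𝔏`, and fixing the Euler element modulo `𝔏`. -/
structure IsExpLike (Φ : EulerFiltration R A c) (𝔏 : LieSubalgebra R A) (g : Aˣ) : Prop where
  sub_one_mem : (g : A) - 1 ∈ Φ.F 1
  inv_sub_one_mem : (↑g⁻¹ : A) - 1 ∈ Φ.F 1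
  conj_mem {z : A} : z ∈ 𝔏 → g * z * ↑g⁻¹ ∈ 𝔏
  conj_euler_sub_mem : g * Φ.euler * ↑g⁻¹ - Φ.euler ∈ 𝔏

variable {Φ : EulerFiltration R A c} {𝔏 : LieSubalgebra R A}

theorem mul_sub_one_mem {g h : A} (hg : g - 1 ∈ Φ.F 1) (hh : h - 1 ∈ Φ.F 1) :
    g * h - 1 ∈ Φ.F 1 := by
  have hsplit : g * h - 1 = (g - 1) * h + (h - 1) := by noncomm_ring
  rw [hsplit]
  exact add_mem (Φ.mul_mem hg (Φ.mem_zero_of_sub_one_mem hh)) hh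

theorem IsExpLike.mul {g h : Aˣ} (hg : Φ.IsExpLike 𝔏 g) (hh : Φ.IsExpLike 𝔏 h) :
    Φ.IsExpLike 𝔏 (g * h) where
  sub_one_mem := mul_sub_one_mem hg.sub_one_mem hh.sub_one_mem
  inv_sub_one_mem := by
    rw [mul_inv_rev, Units.val_mul]
    exact mul_sub_one_mem hh.inv_sub_one_mem hg.inv_sub_one_mem
  conj_mem hz := by simpa [mul_assoc] using hg.conj_mem (hh.conj_mem hz)
  conj_euler_sub_mem := by
    convert add_mem (hg.conj_mem hh.conj_euler_sub_mem) hg.conj_euler_sub_mem using 1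
    rw [mul_inv_rev]
    push_cast
    noncomm_ring

section ExpUnit

variable [FactorialInvertible R c] (Φ)

/-- The exponential of an element of `F 1`, as a unit. -/
noncomputable def expUnit {a : A} (ha : a ∈ Φ.F 1) : Aˣ :=
  ⟨truncExp R c a, truncExp R c (-a), Φ.truncExp_mul_truncExp_neg ha,
    Φ.truncExp_neg_mul_truncExp ha⟩

theorem val_expUnit {a : A} (ha : a ∈ Φ.F 1) : (Φ.expUnit ha : A) = truncExp R c a := rfl

theorem val_inv_expUnit {a : A} (ha : a ∈ Φ.F 1) :
    ((Φ.expUnit ha)⁻¹.val) = truncExp R c (-a) := rfl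

end ExpUnit

theorem truncExp_ad_sub_mem {z : A} (hz : z ∈ 𝔏) {b : A} (hb : ⁅z, b⁆ ∈ 𝔏) :
    truncExp R c (LieAlgebra.ad R A z) b - b ∈ 𝔏 := by
  have hpow (k : ℕ) : (LieAlgebra.ad R A z ^ (k + 1)) b ∈ 𝔏 := by
    induction k with
    | zero => simpa
    | succ k ih =>
      rw [pow_succ', Module.End.mul_apply]
      exact 𝔏.lie_mem hz ih
  rw [truncExp_apply, sum_range_succ', pow_zero, invFactorial_zero, one_smul,
    Module.End.one_apply, add_sub_cancel_right]
  exact sum_mem fun k _ ↦ 𝔏.smul_mem _ (hpow k)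

namespace IsAdapted

variable [FactorialInvertible R c] (h𝔏 : Φ.IsAdapted 𝔏)

include h𝔏

theorem isExpLike_expUnit {z : A} (hz : z ∈ 𝔏) : Φ.IsExpLike 𝔏 (Φ.expUnit (h𝔏.mem_one hz)) where
  sub_one_mem := Φ.truncExp_sub_one_mem le_rfl (h𝔏.mem_one hz)
  inv_sub_one_mem := Φ.truncExp_sub_one_mem le_rfl (neg_mem (h𝔏.mem_one hz))
  conj_mem {y} hy := by
    rw [val_expUnit, val_inv_expUnit, Φ.truncExp_mul_mul_truncExp_neg (h𝔏.mem_one hz)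
      (Φ.mem_of_le zero_le_one (h𝔏.mem_one hy))]
    simpa using 𝔏.add_mem (truncExp_ad_sub_mem hz (𝔏.lie_mem hz hy)) hy
  conj_euler_sub_mem := by
    rw [val_expUnit, val_inv_expUnit, Φ.truncExp_mul_mul_truncExp_neg (h𝔏.mem_one hz) Φ.euler_mem]
    refine truncExp_ad_sub_mem hz ?_
    rw [← lie_skew]
    exact 𝔏.neg_mem (h𝔏.euler_lie_mem hz)

omit h𝔏 in
/-- If `g = 1 + T` with `T ∈ F n`, then `g E g⁻¹ - E = [T, E] g⁻¹ ≡ -n T`, so that the leading term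
of `g` can be read off an element of `𝔏`. -/
theorem _root_.EulerFiltration.IsExpLike.exists_sub_mem {g : Aˣ} (hg : Φ.IsExpLike 𝔏 g) {n : ℕ}
    (hn : n ≠ 0) (hnc : n ≤ c) (hgn : (g : A) - 1 ∈ Φ.F n) :
    ∃ S ∈ 𝔏, (g : A) - 1 - S ∈ Φ.F (n + 1) := by
  obtain ⟨u, hu⟩ := isUnit_natCast_of_le R hn hnc
  set T := (g : A) - 1 with hT
  set D := ⁅Φ.euler, T⁆ with hD
  have hDT : D - n • T ∈ Φ.F (n + 1) := Φ.euler_lie_sub_nsmul_mem hgn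
  have hconj : (g : A) * Φ.euler * ↑g⁻¹ - Φ.euler = -(D * ↑g⁻¹) := by
    have hDval : D = Φ.euler * g - g * Φ.euler := by
      rw [hD, hT, Ring.lie_def]
      noncomm_ring
    simp [hDval, sub_mul, mul_assoc]
  have hlead : n • T - D * ↑g⁻¹ ∈ Φ.F (n + 1) := by
    have hDmem : D ∈ Φ.F (0 + n) := Φ.lie_mem Φ.euler_mem hgn
    rw [zero_add] at hDmem
    have hsplit : n • T - D * ↑g⁻¹ = -(D * (↑g⁻¹ - 1)) - (D - n • T) := by noncomm_ring
    rw [hsplit]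
    exact sub_mem (neg_mem (Φ.mul_mem hDmem hg.inv_sub_one_mem)) hDT
  refine ⟨-((↑u⁻¹ : R) • (g * Φ.euler * ↑g⁻¹ - Φ.euler)),
    𝔏.neg_mem (𝔏.smul_mem _ hg.conj_euler_sub_mem), ?_⟩
  have hscale := Submodule.smul_mem _ (↑u⁻¹ : R) hlead
  rwa [smul_sub, ← Nat.cast_smul_eq_nsmul R, smul_smul, ← hu, Units.inv_mul, one_smul,
    ← neg_neg (D * _), ← hconj, smul_neg] at hscale

/-- Successive approximation: once `exp z` agrees with `g` modulo `F (n + 1)`, the leading term of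
`exp (-z) g` corrects `z` modulo `F (n + 2)`. -/
theorem exists_truncExp_eq {g : Aˣ} (hg : Φ.IsExpLike 𝔏 g) : ∃ z ∈ 𝔏, truncExp R c z = g := by
  suffices ∀ n ≤ c, ∃ z ∈ 𝔏, (g : A) - truncExp R c z ∈ Φ.F (n + 1) by
    obtain ⟨z, hz, hgz⟩ := this c le_rfl
    exact ⟨z, hz, (sub_eq_zero.1 (Φ.eq_zero_of_mem c.lt_succ_self hgz)).symm⟩
  intro n
  induction n with
  | zero => exact fun _ ↦ ⟨0, 𝔏.zero_mem, by simpa using hg.sub_one_mem⟩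
  | succ n ih =>
    intro hn
    obtain ⟨z, hz, hgz⟩ := ih (by omega)
    have hz1 := h𝔏.mem_one hz
    set g' : Aˣ := Φ.expUnit (neg_mem hz1) * g with hg'
    have hgg' : (g : A) = truncExp R c z * g' := by
      rw [hg', Units.val_mul, val_expUnit, ← mul_assoc, Φ.truncExp_mul_truncExp_neg hz1, one_mul]
    have hg'n : (g' : A) - 1 ∈ Φ.F (n + 1) := by
      have hval : (g' : A) - 1 = truncExp R c (-z) * (g - truncExp R c z) := by
        rw [mul_sub, Φ.truncExp_neg_mul_truncExp hz1, hg', Units.val_mul, val_expUnit]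
      rw [hval, ← zero_add (n + 1)]
      exact Φ.mul_mem (Φ.mem_zero_of_sub_one_mem (Φ.truncExp_sub_one_mem le_rfl (neg_mem hz1))) hgz
    obtain ⟨S, hS, hSg'⟩ := ((h𝔏.isExpLike_expUnit (𝔏.neg_mem hz)).mul hg).exists_sub_mem
      n.succ_ne_zero hn hg'n
    have hSn : S ∈ Φ.F (n + 1) := by
      have hdiff := sub_mem hg'n (Φ.mem_of_le (by omega) hSg')
      rwa [sub_sub_cancel] at hdiff
    have hexp := Φ.truncExp_sub_truncExp_sub_mem (h𝔏.mem_one (𝔏.add_mem hz hS)) hz1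
      (by simpa using hSn)
    have hcross : (truncExp R c z - 1) * (g' - 1) ∈ Φ.F (n + 1 + 1) := by
      rw [add_comm (n + 1)]
      exact Φ.mul_mem (Φ.truncExp_sub_one_mem le_rfl hz1) hg'n
    refine ⟨z + S, 𝔏.add_mem hz hS, ?_⟩
    convert sub_mem (add_mem hcross hSg') hexp using 1
    rw [hgg']
    noncomm_ring

/-- The group of exponentials of an adapted Lie algebra. -/
noncomputable def expSubgroup : Subgroup Aˣ where
  carrier := {g | ∃ z ∈ 𝔏, truncExp R c z = g}
  one_mem' := ⟨0, 𝔏.zero_mem, truncExp_zero⟩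
  mul_mem' := by
    rintro g h ⟨u, hu, hug⟩ ⟨v, hv, hvh⟩
    obtain ⟨z, hz, hexp⟩ := h𝔏.exists_truncExp_eq
      ((h𝔏.isExpLike_expUnit hu).mul (h𝔏.isExpLike_expUnit hv))
    exact ⟨z, hz, by rw [hexp, Units.val_mul, val_expUnit, val_expUnit, hug, hvh, Units.val_mul]⟩
  inv_mem' := by
    rintro g ⟨u, hu, hug⟩
    obtain rfl : Φ.expUnit (h𝔏.mem_one hu) = g := Units.ext hug
    exact ⟨-u, 𝔏.neg_mem hu, rfl⟩

/-- The exponential bijection from an adapted Lie algebra onto its group of exponentials. -/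
noncomputable def exp : 𝔏 ≃ h𝔏.expSubgroup :=
  Equiv.ofBijective (fun z ↦ ⟨Φ.expUnit (h𝔏.mem_one z.2), z, z.2, rfl⟩) <| by
    refine ⟨fun u v huv ↦ Subtype.ext ?_, ?_⟩
    · exact Φ.truncExp_injOn (h𝔏.mem_one u.2) (h𝔏.mem_one v.2)
        (congrArg (fun g : h𝔏.expSubgroup ↦ (g : Aˣ).val) huv)
    · rintro ⟨g, z, hz, hzg⟩
      exact ⟨⟨z, hz⟩, Subtype.ext (Units.ext hzg)⟩

variable (u v : 𝔏)

theorem val_exp : ((h𝔏.exp u : Aˣ) : A) = truncExp R c (u : A) := rfl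

omit [FactorialInvertible R c] h𝔏 in
theorem expSubgroup_ext [FactorialInvertible R c] {h𝔏 : Φ.IsAdapted 𝔏} {g g' : h𝔏.expSubgroup}
    (h : ((g : Aˣ) : A) = (g' : Aˣ)) : g = g' :=
  Subtype.ext (Units.ext h)

@[simp]
theorem exp_zero : h𝔏.exp 0 = 1 :=
  expSubgroup_ext truncExp_zero

@[simp]
theorem exp_neg : h𝔏.exp (-u) = (h𝔏.exp u)⁻¹ :=
  Subtype.ext (Units.ext rfl)

variable {u v} in
theorem exp_add_of_commute (huv : Commute (u : A) v) : h𝔏.exp (u + v) = h𝔏.exp u * h𝔏.exp v :=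
  expSubgroup_ext (Φ.truncExp_add (h𝔏.mem_one u.2) (h𝔏.mem_one v.2) huv)

theorem exp_nsmul (k : ℕ) : h𝔏.exp (k • u) = h𝔏.exp u ^ k := by
  induction k with
  | zero => simp
  | succ k ih =>
    rw [succ_nsmul, h𝔏.exp_add_of_commute, ih, pow_succ]
    exact (Commute.refl (u : A)).smul_left k

/-- The Baker-Campbell-Hausdorff product. -/
noncomputable def bch : 𝔏 := h𝔏.exp.symm (h𝔏.exp u * h𝔏.exp v)

@[simp]
theorem exp_bch : h𝔏.exp (h𝔏.bch u v) = h𝔏.exp u * h𝔏.exp v :=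
  h𝔏.exp.apply_symm_apply _

theorem bch_assoc (w : 𝔏) : h𝔏.bch (h𝔏.bch u v) w = h𝔏.bch u (h𝔏.bch v w) :=
  h𝔏.exp.injective <| by simp only [exp_bch, mul_assoc]

theorem bch_zero_left : h𝔏.bch 0 u = u :=
  h𝔏.exp.injective <| by rw [exp_bch, exp_zero, one_mul]

theorem bch_neg_left : h𝔏.bch (-u) u = 0 :=
  h𝔏.exp.injective <| by rw [exp_bch, exp_neg, inv_mul_cancel, exp_zero]

end IsAdapted

end EulerFiltration

section Brackets

variable {X L M : Type*}

/-- The value of a bracket arrangement when its leaves are substituted by `f`. -/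
def bracketEval [Bracket L L] (f : X → L) : FreeMagma X → L
  | .of x => f x
  | .mul a b => ⁅bracketEval f a, bracketEval f b⁆

theorem map_bracketEval [Bracket L L] [Bracket M M] {g : L → M} (hg : ∀ a b, g ⁅a, b⁆ = ⁅g a, g b⁆)
    (f : X → L) (m : FreeMagma X) : g (bracketEval f m) = bracketEval (g ∘ f) m := by
  induction m with
  | ih1 x => rfl
  | ih2 a b iha ihb => exact (hg _ _).trans (congrArg₂ _ iha ihb)

variable (R : Type*) [CommRing R] [LieRing L] [LieAlgebra R L] (f : X → L)

theorem bracketEval_mem_lieSpan (m : FreeMagma X) :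
    bracketEval f m ∈ LieSubalgebra.lieSpan R L (Set.range f) := by
  induction m with
  | ih1 x => exact LieSubalgebra.subset_lieSpan ⟨x, rfl⟩
  | ih2 a b iha ihb => exact LieSubalgebra.lie_mem _ iha ihb

theorem span_range_bracketEval : Submodule.span R (Set.range (bracketEval f)) =
    (LieSubalgebra.lieSpan R L (Set.range f)).toSubmodule := by
  refine le_antisymm (Submodule.span_le.2 ?_) fun y hy ↦ ?_
  · rintro _ ⟨m, rfl⟩
    exact bracketEval_mem_lieSpan R f m
  induction hy using LieSubalgebra.lieSpan_induction with
  | mem y hy => obtain ⟨x, rfl⟩ := hy; exact Submodule.subset_span ⟨.of x, rfl⟩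
  | zero => exact zero_mem _
  | add y z _ _ hy hz => exact add_mem hy hz
  | smul r y _ hy => exact Submodule.smul_mem _ r hy
  | lie y z hy' hz' hy hz =>
    clear hy' hz'
    induction hy, hz using Submodule.span_induction₂ with
    | mem_mem y z hy hz =>
      obtain ⟨⟨a, rfl⟩, b, rfl⟩ := hy, hz
      exact Submodule.subset_span ⟨.mul a b, rfl⟩
    | zero_left => simp
    | zero_right => simp
    | add_left _ _ _ _ _ _ h h' => rw [add_lie]; exact add_mem h h'
    | add_right _ _ _ _ _ _ h h' => rw [lie_add]; exact add_mem h h'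
    | smul_left r _ _ _ _ h => rw [smul_lie]; exact Submodule.smul_mem _ r h
    | smul_right r _ _ _ _ h => rw [lie_smul]; exact Submodule.smul_mem _ r h

end Brackets

section LowerCentralSeries

open LieModule

variable {R L X : Type*} [CommRing R] [LieRing L] [LieAlgebra R L]

theorem lie_mem_lowerCentralSeries_succ {n : ℕ} (x : L) {y : L}
    (hy : y ∈ lowerCentralSeries R L L n) : ⁅x, y⁆ ∈ lowerCentralSeries R L L (n + 1) := by
  rw [lowerCentralSeries_succ]
  exact LieSubmodule.lie_mem_lie (LieSubmodule.mem_top x) hy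

theorem lie_mem_lowerCentralSeries {i j : ℕ} {x y : L} (hx : x ∈ lowerCentralSeries R L L i)
    (hy : y ∈ lowerCentralSeries R L L j) : ⁅x, y⁆ ∈ lowerCentralSeries R L L (i + j + 1) := by
  induction i generalizing x y j with
  | zero => simpa using lie_mem_lowerCentralSeries_succ x hy
  | succ i ih =>
    rw [lowerCentralSeries_succ, ← LieSubmodule.mem_toSubmodule,
      LieSubmodule.lieIdeal_oper_eq_linear_span] at hx
    induction hx using Submodule.span_induction with
    | mem x hx =>
      obtain ⟨⟨a, -⟩, ⟨b, hb⟩, rfl⟩ := hx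
      rw [lie_lie]
      refine sub_mem ?_ ?_
      · simpa only [add_right_comm] using lie_mem_lowerCentralSeries_succ a (ih hb hy)
      · simpa only [add_right_comm, add_assoc] using ih hb (lie_mem_lowerCentralSeries_succ a hy)
    | zero => simp
    | add _ _ _ _ h h' => rw [add_lie]; exact add_mem h h'
    | smul r _ _ h => rw [smul_lie]; exact SMulMemClass.smul_mem r h

theorem bracketEval_mem_lowerCentralSeries (f : X → L) (m : FreeMagma X) :
    bracketEval f m ∈ lowerCentralSeries R L L (m.length - 1) := by
  induction m with
  | ih1 x => simp
  | ih2 a b iha ihb =>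
    have ha := a.length_pos
    have hb := b.length_pos
    have hlen : (a * b).length - 1 = a.length - 1 + (b.length - 1) + 1 := by
      change a.length + b.length - 1 = _
      omega
    rw [hlen]
    exact lie_mem_lowerCentralSeries iha ihb

theorem eq_zero_of_mem_lowerCentralSeries {c n : ℕ} (hL : lowerCentralSeries R L L c = ⊥)
    (hn : c ≤ n) {x : L} (hx : x ∈ lowerCentralSeries R L L n) : x = 0 := by
  simpa [hL] using antitone_lowerCentralSeries R L L hn hx

theorem lowerCentralSeries_eq_bot_of_filtration {F : ℕ → Submodule R L} {c : ℕ} (htop : F 1 = ⊤)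
    (hlie : ∀ x : L, ∀ n, ∀ y ∈ F n, ⁅x, y⁆ ∈ F (n + 1)) (hbot : F (c + 1) = ⊥) :
    lowerCentralSeries R L L c = ⊥ := by
  suffices ∀ n, (lowerCentralSeries R L L n).toSubmodule ≤ F (n + 1) by
    simpa [hbot] using this c
  intro n
  induction n with
  | zero => simp [htop]
  | succ n ih =>
    rw [lowerCentralSeries_succ, LieSubmodule.lieIdeal_oper_eq_linear_span, Submodule.span_le]
    rintro _ ⟨⟨x, -⟩, ⟨y, hy⟩, rfl⟩
    exact hlie x _ y (ih hy)

end LowerCentralSeries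

/-- The module of noncommutative polynomials in `X` modulo the monomials of degree greater
than `c`. Endomorphisms of it replace the truncated free associative algebra. -/
abbrev WordModule (R X : Type*) [CommRing R] (c : ℕ) := {w : List X // w.length ≤ c} →₀ R

namespace WordModule

variable {R X : Type*} [CommRing R] {c : ℕ}

variable (R c) in
/-- The basis vector of a word; words longer than `c` are sent to `0`. -/
noncomputable def word (w : List X) : WordModule R X c :=
  if h : w.length ≤ c then Finsupp.single ⟨w, h⟩ 1 else 0

theorem word_of_length_le {w : List X} (h : w.length ≤ c) :
    word R c w = Finsupp.single ⟨w, h⟩ 1 :=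
  dif_pos h

theorem word_eq_zero {w : List X} (h : c < w.length) : word R c w = 0 :=
  dif_neg h.not_ge

section Lift

variable {M : Type*} [AddCommGroup M] [Module R M]

/-- The linear map with prescribed values on the words of length at most `c`. -/
noncomputable def lift (g : List X → M) : WordModule R X c →ₗ[R] M :=
  Finsupp.linearCombination R fun w ↦ g w.1

theorem lift_word {g : List X → M} {w : List X} (hg : c < w.length → g w = 0) :
    lift g (word R c w) = g w := by
  by_cases h : w.length ≤ c
  · simp [word_of_length_le h, lift]
  · rw [word_eq_zero (not_le.1 h), hg (not_le.1 h), map_zero]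

theorem hom_ext {S T : WordModule R X c →ₗ[R] M} (h : ∀ w, S (word R c w) = T (word R c w)) :
    S = T := by
  refine Finsupp.lhom_ext' fun w ↦ LinearMap.ext_ring ?_
  simpa [word_of_length_le w.2] using h w.1

end Lift

/-- The span of the words of length at least `k`. -/
noncomputable def tail (k : ℕ) : Submodule R (WordModule R X c) :=
  Submodule.span R (word R c '' {w | k ≤ w.length})

theorem word_mem_tail {k : ℕ} {w : List X} (h : k ≤ w.length) : word R c w ∈ tail k :=
  Submodule.subset_span ⟨w, h, rfl⟩

theorem tail_antitone : Antitone (tail : ℕ → Submodule R (WordModule R X c)) :=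
  fun _ _ h ↦ Submodule.span_mono (Set.image_mono fun _ ↦ h.trans)

theorem tail_succ_eq_bot : tail (c + 1) = (⊥ : Submodule R (WordModule R X c)) := by
  rw [tail, Submodule.span_eq_bot]
  rintro _ ⟨w, hw, rfl⟩
  exact word_eq_zero hw

theorem map_mem_of_mem_tail {M : Type*} [AddCommGroup M] [Module R M] {N : Submodule R M} {k : ℕ}
    {T : WordModule R X c →ₗ[R] M} (hT : ∀ w, k ≤ w.length → T (word R c w) ∈ N)
    {v : WordModule R X c} (hv : v ∈ tail k) : T v ∈ N := by
  have hle : tail k ≤ N.comap T := Submodule.span_le.2 <| by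
    rintro _ ⟨w, hw, rfl⟩
    exact hT w hw
  exact hle hv

end WordModule

/-- The endomorphism algebra of the word module. -/
def WordOp (R X : Type*) [CommRing R] (c : ℕ) := Module.End R (WordModule R X c)

namespace WordOp

open WordModule

section Instances

variable (R X : Type*) [CommRing R] (c : ℕ)

noncomputable instance : Ring (WordOp R X c) := inferInstanceAs (Ring (Module.End R _))

noncomputable instance : Algebra R (WordOp R X c) := inferInstanceAs (Algebra R (Module.End R _))

noncomputable instance : Module (WordOp R X c) (WordModule R X c) :=
  inferInstanceAs (Module (Module.End R (WordModule R X c)) _)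

instance : IsScalarTower R (WordOp R X c) (WordModule R X c) :=
  inferInstanceAs (IsScalarTower R (Module.End R (WordModule R X c)) _)

instance : SMulCommClass (WordOp R X c) R (WordModule R X c) :=
  inferInstanceAs (SMulCommClass (Module.End R (WordModule R X c)) R _)

end Instances

variable {R X : Type*} [CommRing R] {c : ℕ}

theorem ext_word {S T : WordOp R X c} (h : ∀ w : List X, S • word R c w = T • word R c w) : S = T :=
  WordModule.hom_ext h

/-- The operator with prescribed values on the words of length at most `c`. -/
noncomputable def ofWords (g : List X → WordModule R X c) : WordOp R X c := WordModule.lift g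

theorem ofWords_smul_word {g : List X → WordModule R X c} {w : List X}
    (hg : c < w.length → g w = 0) : ofWords g • word R c w = g w :=
  lift_word hg

variable (R X c) in
/-- The operators raising the length of words by at least `n`. -/
noncomputable def raising (n : ℕ) : Submodule R (WordOp R X c) :=
  ⨅ w : List X, (tail (w.length + n)).comap
    ((LinearMap.toSpanSingleton (WordOp R X c) _ (word R c w)).restrictScalars R)

theorem mem_raising {n : ℕ} {T : WordOp R X c} :
    T ∈ raising R X c n ↔ ∀ w : List X, T • word R c w ∈ tail (w.length + n) := by
  simp [raising]

theorem smul_mem_tail {n k : ℕ} {T : WordOp R X c} (hT : T ∈ raising R X c n)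
    {v : WordModule R X c} (hv : v ∈ tail k) : T • v ∈ tail (k + n) :=
  map_mem_of_mem_tail (T := DistribSMul.toLinearMap R _ T)
    (fun w hw ↦ tail_antitone (by omega) (mem_raising.1 hT w)) hv

variable (R X c) in
/-- The operator multiplying words by their length. -/
noncomputable def degree : WordOp R X c := ofWords fun w ↦ w.length • word R c w

theorem degree_smul_word (w : List X) : degree R X c • word R c w = w.length • word R c w :=
  ofWords_smul_word fun h ↦ by rw [word_eq_zero h, smul_zero]

theorem degree_smul_sub_nsmul_mem {k : ℕ} {v : WordModule R X c} (hv : v ∈ tail k) :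
    degree R X c • v - k • v ∈ tail (k + 1) := by
  refine map_mem_of_mem_tail (T := DistribSMul.toLinearMap R _ (degree R X c) - k • LinearMap.id)
    (fun w hw ↦ ?_) hv
  rw [LinearMap.sub_apply, DistribSMul.toLinearMap_apply, degree_smul_word]
  rcases hw.eq_or_lt with rfl | hw
  · simp
  · exact sub_mem (nsmul_mem (word_mem_tail hw) _) (nsmul_mem (word_mem_tail hw) _)

/-- The length filtration on the operators of the word module. -/
noncomputable def eulerFiltration : EulerFiltration R (WordOp R X c) c where
  F := raising R X c
  euler := degree R X c
  antitone _ _ h _ hT := mem_raising.2 fun w ↦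
    tail_antitone (by omega) (mem_raising.1 hT w)
  mul_mem {i j S T} hS hT := mem_raising.2 fun w ↦ by
    rw [add_comm i, ← add_assoc, mul_smul]
    exact smul_mem_tail hS (mem_raising.1 hT w)
  one_mem := mem_raising.2 fun _ ↦ by
    rw [one_smul]
    exact word_mem_tail le_rfl
  succ_eq_bot := by
    refine (Submodule.eq_bot_iff _).2 fun T hT ↦ ext_word fun w ↦ ?_
    have hw : T • word R c w ∈ tail (c + 1) := tail_antitone (by omega) (mem_raising.1 hT w)
    simpa [tail_succ_eq_bot] using hw
  euler_mem := mem_raising.2 fun w ↦ by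
    rw [degree_smul_word]
    exact nsmul_mem (word_mem_tail le_rfl) _
  euler_lie_sub_nsmul_mem {n T} hT := mem_raising.2 fun w ↦ by
    rw [← add_assoc]
    convert degree_smul_sub_nsmul_mem (mem_raising.1 hT w) using 1
    rw [Ring.lie_def, sub_smul, sub_smul, mul_smul, mul_smul, degree_smul_word, smul_assoc,
      smul_comm T, add_nsmul]
    abel

variable (R c) in
/-- Left multiplication by a letter. -/
noncomputable def letter (x : X) : WordOp R X c := ofWords fun w ↦ word R c (x :: w)

theorem letter_smul_word (x : X) (w : List X) : letter R c x • word R c w = word R c (x :: w) :=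
  ofWords_smul_word fun h ↦ word_eq_zero (h.trans (by simp))

theorem letter_mem (x : X) : letter R c x ∈ raising R X c 1 := mem_raising.2 fun w ↦ by
  rw [letter_smul_word]
  exact word_mem_tail (by simp)

theorem degree_lie_letter (x : X) : ⁅degree R X c, letter R c x⁆ = letter R c x := by
  refine ext_word fun w ↦ ?_
  rw [Ring.lie_def, sub_smul, mul_smul, mul_smul, letter_smul_word, degree_smul_word,
    degree_smul_word, smul_comm (letter R c x), letter_smul_word, List.length_cons, succ_nsmul,
    add_sub_cancel_left]

end WordOp

section FreeNilpotentLie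

open LieModule WordModule WordOp

variable (R X : Type*) [CommRing R] (c : ℕ)

/-- The Lie algebra generated by the letters; it is free among the Lie algebras of class at
most `c` over `R` when `c!` is invertible. -/
noncomputable def freeNilpotentLie : LieSubalgebra R (WordOp R X c) :=
  LieSubalgebra.lieSpan R _ (Set.range (letter R c))

namespace freeNilpotentLie

variable {X} in
/-- The generators of `freeNilpotentLie R X c`. -/
noncomputable def of (x : X) : freeNilpotentLie R X c :=
  ⟨letter R c x, LieSubalgebra.subset_lieSpan ⟨x, rfl⟩⟩

variable {R X c}

theorem val_bracketEval_of (m : FreeMagma X) :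
    (bracketEval (of R c) m).val = bracketEval (letter R c) m :=
  map_bracketEval (g := ((↑) : freeNilpotentLie R X c → WordOp R X c)) (fun _ _ ↦ rfl) (of R c) m

theorem span_range_bracketEval_of :
    Submodule.span R (Set.range (bracketEval (of (X := X) R c))) = ⊤ := by
  refine Submodule.map_injective_of_injective
    (f := (freeNilpotentLie R X c).toSubmodule.subtype) Subtype.val_injective ?_
  rw [Submodule.map_span, ← Set.range_comp, Submodule.map_top, Submodule.range_subtype]
  refine Eq.trans ?_ (span_range_bracketEval R (letter R c))
  exact congrArg _ (congrArg _ (funext val_bracketEval_of))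

theorem bracketEval_of_mem (m : FreeMagma X) :
    (bracketEval (of R c) m).val ∈ raising R X c m.length := by
  induction m with
  | ih1 x => exact letter_mem x
  | ih2 a b iha ihb => exact eulerFiltration.lie_mem iha ihb

variable (R X c) in
/-- The elements homogeneous of degree `n`. -/
noncomputable def homogeneous (n : ℕ) : Submodule R (WordOp R X c) :=
  LinearMap.eqLocus (LieAlgebra.ad R _ (degree R X c)) (n • LinearMap.id)

theorem lie_mem_homogeneous {i j : ℕ} {S T : WordOp R X c} (hS : S ∈ homogeneous R X c i)
    (hT : T ∈ homogeneous R X c j) : ⁅S, T⁆ ∈ homogeneous R X c (i + j) := by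
  change ⁅degree R X c, S⁆ = i • S at hS
  change ⁅degree R X c, T⁆ = j • T at hT
  change ⁅degree R X c, ⁅S, T⁆⁆ = (i + j) • ⁅S, T⁆
  rw [leibniz_lie, hS, hT, nsmul_lie, lie_nsmul, add_nsmul]

theorem bracketEval_of_mem_homogeneous (m : FreeMagma X) :
    (bracketEval (of R c) m).val ∈ homogeneous R X c m.length := by
  induction m with
  | ih1 x => exact (degree_lie_letter x).trans (one_nsmul _).symm
  | ih2 a b iha ihb => exact lie_mem_homogeneous iha ihb

/-- The span of the monomials of degree at least `n`. -/
noncomputable def above (n : ℕ) : Submodule R (freeNilpotentLie R X c) :=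
  Submodule.span R (bracketEval (of R c) '' {m | n ≤ m.length})

theorem coe_mem_raising_of_mem_above {n : ℕ} {u : freeNilpotentLie R X c} (hu : u ∈ above n) :
    (u : WordOp R X c) ∈ raising R X c n := by
  have hle : above n ≤ (raising R X c n).comap (freeNilpotentLie R X c).toSubmodule.subtype := by
    refine Submodule.span_le.2 ?_
    rintro _ ⟨m, hm, rfl⟩
    exact eulerFiltration.mem_of_le hm (bracketEval_of_mem m)
  exact hle hu

theorem mem_above_one (u : freeNilpotentLie R X c) : u ∈ above 1 := by
  have huniv : {m : FreeMagma X | 1 ≤ m.length} = Set.univ :=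
    Set.eq_univ_of_forall fun m ↦ m.length_pos
  rw [above, huniv, Set.image_univ, span_range_bracketEval_of]
  trivial

theorem isAdapted : eulerFiltration.IsAdapted (freeNilpotentLie R X c) where
  mem_one {z} hz := coe_mem_raising_of_mem_above (mem_above_one ⟨z, hz⟩)
  euler_lie_mem {z} hz := by
    suffices ∀ z ∈ Submodule.span R (Set.range (bracketEval (letter R c))),
        ⁅degree R X c, z⁆ ∈ freeNilpotentLie R X c by
      refine this z ?_
      rwa [span_range_bracketEval]
    intro z hz
    induction hz using Submodule.span_induction with
    | mem z hz =>
      obtain ⟨m, rfl⟩ := hz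
      have hdegree : ⁅degree R X c, (bracketEval (of R c) m).val⁆ = _ :=
        bracketEval_of_mem_homogeneous m
      rw [← val_bracketEval_of, hdegree]
      exact nsmul_mem (bracketEval (of R c) m).2 _
    | zero => rw [lie_zero]; exact zero_mem _
    | add _ _ _ _ h h' => rw [lie_add]; exact add_mem h h'
    | smul r _ _ h => rw [lie_smul]; exact SMulMemClass.smul_mem r h

theorem lowerCentralSeries_eq_bot :
    LieModule.lowerCentralSeries R (freeNilpotentLie R X c) (freeNilpotentLie R X c) c = ⊥ := by
  refine lowerCentralSeries_eq_bot_of_filtration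
    (F := fun n ↦ (raising R X c n).comap (freeNilpotentLie R X c).toSubmodule.subtype) ?_ ?_ ?_
  · exact eq_top_iff.2 fun u _ ↦ isAdapted.mem_one u.2
  · intro x n y hy
    rw [add_comm]
    exact eulerFiltration.lie_mem (isAdapted.mem_one x.2) hy
  · exact (Submodule.eq_bot_iff _).2 fun u hu ↦
      Subtype.ext (eulerFiltration.eq_zero_of_mem c.lt_succ_self hu)

section Hom

variable {L : Type*} [LieRing L] [LieAlgebra R L]

theorem map_lie_of_map_bracketEval {g : freeNilpotentLie R X c →ₗ[R] L} {f : X → L}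
    (hg : ∀ m, g (bracketEval (of R c) m) = bracketEval f m) (u v : freeNilpotentLie R X c) :
    g ⁅u, v⁆ = ⁅g u, g v⁆ := by
  have hspan (w : freeNilpotentLie R X c) :
      w ∈ Submodule.span R (Set.range (bracketEval (of R c))) := by
    rw [span_range_bracketEval_of]
    trivial
  have hu := hspan u
  have hv := hspan v
  induction hu, hv using Submodule.span_induction₂ with
  | mem_mem y z hy hz =>
    obtain ⟨⟨a, rfl⟩, b, rfl⟩ := hy, hz
    rw [hg, hg]
    exact hg (.mul a b)
  | zero_left => simp
  | zero_right => simp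
  | add_left _ _ _ _ _ _ h h' => rw [add_lie, map_add, h, h', map_add, add_lie]
  | add_right _ _ _ _ _ _ h h' => rw [lie_add, map_add, h, h', map_add, lie_add]
  | smul_left r _ _ _ _ h => rw [smul_lie, map_smul, h, map_smul, smul_lie]
  | smul_right r _ _ _ _ h => rw [lie_smul, map_smul, h, map_smul, lie_smul]

theorem hom_ext {g h : freeNilpotentLie R X c →ₗ⁅R⁆ L}
    (hgh : ∀ x, g (of R c x) = h (of R c x)) : g = h := by
  refine LieHom.ext fun u ↦ LinearMap.congr_fun (f := (g : freeNilpotentLie R X c →ₗ[R] L))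
    (g := h) (LinearMap.ext_on_range span_range_bracketEval_of fun m ↦ ?_) u
  change g (bracketEval (of R c) m) = h (bracketEval (of R c) m)
  rw [map_bracketEval g.map_lie, map_bracketEval h.map_lie, show g ∘ of R c = h ∘ of R c from
    funext hgh]

end Hom

theorem mem_above_of_coe_mem_raising [FactorialInvertible R c] {n : ℕ} {u : freeNilpotentLie R X c}
    (hu : (u : WordOp R X c) ∈ raising R X c n) : u ∈ above n := by
  induction n with
  | zero => exact Submodule.span_mono (Set.image_mono fun _ _ ↦ Nat.zero_le _) (mem_above_one u)
  | succ n ih =>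
    have hun : u ∈ Submodule.span R (bracketEval (of R c) '' {m | m.length = n}) ⊔
        above (n + 1) := by
      rw [above, ← Submodule.span_union, ← Set.image_union]
      refine Submodule.span_mono (Set.image_mono fun m hm ↦ ?_)
        (ih (eulerFiltration.mem_of_le n.le_succ hu))
      exact (eq_or_lt_of_le hm).imp Eq.symm id
    obtain ⟨s, hs, t, ht, rfl⟩ := Submodule.mem_sup.1 hun
    have hsn : ⁅degree R X c, s.val⁆ = n • s.val := by
      have hle : Submodule.span R (bracketEval (of R c) '' {m | m.length = n}) ≤
          (homogeneous R X c n).comap (freeNilpotentLie R X c).toSubmodule.subtype := by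
        refine Submodule.span_le.2 ?_
        rintro _ ⟨m, rfl, rfl⟩
        exact bracketEval_of_mem_homogeneous m
      exact hle hs
    have hs0 : s = 0 := Subtype.ext <| eulerFiltration.eq_zero_of_euler_lie_eq_nsmul hsn <| by
      change s.val ∈ raising R X c (n + 1)
      simpa using sub_mem hu (coe_mem_raising_of_mem_above ht)
    rwa [hs0, zero_add]

end freeNilpotentLie

end FreeNilpotentLie

section DynkinSpechtWever

open WordModule WordOp

variable {R X L : Type*} [CommRing R] [LieRing L] [LieAlgebra R L] {c : ℕ}

/-- The right-normed bracket of a word. -/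
def rightNormed (f : X → L) : List X → L
  | [] => 0
  | [x] => f x
  | x :: y :: w => ⁅f x, rightNormed f (y :: w)⁆

theorem rightNormed_cons (f : X → L) (x : X) {w : List X} (hw : w ≠ []) :
    rightNormed f (x :: w) = ⁅f x, rightNormed f w⁆ := by
  obtain ⟨y, w, rfl⟩ := List.exists_cons_of_ne_nil hw
  rfl

theorem rightNormed_mem_lowerCentralSeries (f : X → L) (w : List X) :
    rightNormed f w ∈ LieModule.lowerCentralSeries R L L (w.length - 1) := by
  induction w with
  | nil => exact zero_mem _
  | cons x w ih =>
    rcases eq_or_ne w [] with rfl | hw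
    · simp
    · rw [rightNormed_cons f x hw, List.length_cons, Nat.add_sub_cancel,
        ← Nat.sub_add_cancel (List.length_pos_of_ne_nil hw)]
      exact lie_mem_lowerCentralSeries_succ (f x) ih

variable (hL : LieModule.lowerCentralSeries R L L c = ⊥) (f : X → L)

variable (R c) in
/-- The Dynkin operator, sending a word to its right-normed bracket. -/
noncomputable def dynkin : WordModule R X c →ₗ[R] L := lift (rightNormed f)

variable (R c) in
/-- The Dynkin operator divided by the degree; the choice made in degree `0` is irrelevant since
the Dynkin operator vanishes there. -/
noncomputable def dynkinDiv : WordModule R X c →ₗ[R] L :=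
  lift fun w ↦ Ring.inverse (w.length : R) • rightNormed f w

include hL in
theorem dynkin_word (w : List X) : dynkin R c f (word R c w) = rightNormed f w :=
  lift_word fun hw ↦ eq_zero_of_mem_lowerCentralSeries hL (Nat.le_sub_one_of_lt hw)
    (rightNormed_mem_lowerCentralSeries f w)

theorem dynkinDiv_degree_smul [FactorialInvertible R c] (v : WordModule R X c) :
    dynkinDiv R c f (degree R X c • v) = dynkin R c f v := by
  suffices dynkinDiv R c f ∘ₗ DistribSMul.toLinearMap R _ (degree R X c) = dynkin R c f from
    LinearMap.congr_fun this v
  refine WordModule.hom_ext fun w ↦ ?_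
  rw [LinearMap.comp_apply, DistribSMul.toLinearMap_apply, degree_smul_word, map_nsmul]
  rcases lt_or_ge c w.length with hw | hw
  · simp [word_eq_zero hw]
  rw [dynkin, dynkinDiv, lift_word fun h ↦ absurd hw h.not_ge, lift_word fun h ↦ absurd hw h.not_ge]
  rcases eq_or_ne w [] with rfl | hne
  · simp [rightNormed]
  · rw [← Nat.cast_smul_eq_nsmul R, smul_smul, Ring.mul_inverse_cancel _ (isUnit_natCast_of_le R
      (c := c) (List.length_pos_of_ne_nil hne).ne' hw), one_smul]

theorem bracketEval_letter_smul_mem (m : FreeMagma X) {v : WordModule R X c} {k : ℕ}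
    (hv : v ∈ tail k) : bracketEval (letter R c) m • v ∈ tail (k + 1) := by
  rw [← freeNilpotentLie.val_bracketEval_of]
  exact smul_mem_tail (freeNilpotentLie.coe_mem_raising_of_mem_above
    (freeNilpotentLie.mem_above_one _)) hv

include hL

theorem dynkin_bracketEval_smul (m : FreeMagma X) {v : WordModule R X c} (hv : v ∈ tail 1) :
    dynkin R c f (bracketEval (letter R c) m • v) = ⁅bracketEval f m, dynkin R c f v⁆ := by
  induction m generalizing v with
  | ih1 x =>
    refine sub_eq_zero.1 <| (Submodule.mem_bot R).1 <| map_mem_of_mem_tail (N := ⊥)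
      (T := dynkin R c f ∘ₗ DistribSMul.toLinearMap R _ (letter R c x) -
        LieAlgebra.ad R L (f x) ∘ₗ dynkin R c f) (fun w hw ↦ (Submodule.mem_bot R).2 ?_) hv
    rw [LinearMap.sub_apply, LinearMap.comp_apply, LinearMap.comp_apply, LieAlgebra.ad_apply,
      DistribSMul.toLinearMap_apply, letter_smul_word, dynkin_word hL, dynkin_word hL,
      rightNormed_cons f x (List.length_pos_iff.1 hw), sub_self]
  | ih2 a b iha ihb =>
    have htail (m : FreeMagma X) : bracketEval (letter R c) m • v ∈ tail 1 :=
      tail_antitone (by omega) (bracketEval_letter_smul_mem m hv)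
    change dynkin R c f (⁅bracketEval _ a, bracketEval _ b⁆ • v) =
      ⁅⁅bracketEval f a, bracketEval f b⁆, _⁆
    rw [Ring.lie_def, sub_smul, mul_smul, mul_smul, map_sub, iha (htail b), ihb (htail a), iha hv,
      ihb hv, lie_lie]

theorem dynkin_bracketEval_smul_word_nil (m : FreeMagma X) :
    dynkin R c f (bracketEval (letter R c) m • word R c []) = m.length • bracketEval f m := by
  induction m with
  | ih1 x =>
    change dynkin R c f (letter R c x • _) = 1 • f x
    rw [letter_smul_word, dynkin_word hL, one_nsmul]
    rfl
  | ih2 a b iha ihb =>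
    have htail (m : FreeMagma X) : bracketEval (letter R c) m • word R c [] ∈ tail 1 :=
      bracketEval_letter_smul_mem m (word_mem_tail (Nat.zero_le _))
    change dynkin R c f (⁅bracketEval _ a, bracketEval _ b⁆ • _) =
      (a.length + b.length) • ⁅bracketEval f a, bracketEval f b⁆
    rw [Ring.lie_def, sub_smul, mul_smul, mul_smul, map_sub,
      dynkin_bracketEval_smul hL f a (htail b), dynkin_bracketEval_smul hL f b (htail a), iha, ihb,
      lie_nsmul, lie_nsmul, ← lie_skew (bracketEval f b), smul_neg, sub_neg_eq_add, add_comm,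
      add_nsmul]

theorem dynkinDiv_bracketEval_smul_word_nil [FactorialInvertible R c] (m : FreeMagma X) :
    dynkinDiv R c f (bracketEval (letter R c) m • word R c []) = bracketEval f m := by
  set T := bracketEval (letter R c) m with hT
  rcases lt_or_ge c m.length with hm | hm
  · have hT0 : T = 0 := by
      rw [hT, ← freeNilpotentLie.val_bracketEval_of]
      exact eulerFiltration.eq_zero_of_mem hm (freeNilpotentLie.bracketEval_of_mem m)
    rw [hT0, zero_smul, map_zero, eq_zero_of_mem_lowerCentralSeries hL (Nat.le_sub_one_of_lt hm)
      (bracketEval_mem_lowerCentralSeries f m)]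
  have hdegree : degree R X c • T • word R c ([] : List X) =
      m.length • T • word R c ([] : List X) := by
    have hlie := congrArg (fun S : WordOp R X c ↦ S • word R c ([] : List X))
      (freeNilpotentLie.bracketEval_of_mem_homogeneous m)
    simpa [freeNilpotentLie.val_bracketEval_of, ← hT, Ring.lie_def, sub_smul, mul_smul,
      degree_smul_word, Nat.cast_smul_eq_nsmul] using hlie
  refine (isUnit_natCast_of_le R m.length_pos.ne' hm).smul_left_cancel.1 ?_
  rw [Nat.cast_smul_eq_nsmul, Nat.cast_smul_eq_nsmul, ← map_nsmul, ← hdegree,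
    dynkinDiv_degree_smul, hT, dynkin_bracketEval_smul_word_nil hL]

namespace freeNilpotentLie

variable [FactorialInvertible R c]

/-- The universal property of `freeNilpotentLie R X c`. On monomials it is the division by the
degree of the identity of Dynkin, Specht and Wever. -/
noncomputable def lift : freeNilpotentLie R X c →ₗ⁅R⁆ L where
  toLinearMap := dynkinDiv R c f ∘ₗ
    (LinearMap.toSpanSingleton (WordOp R X c) _ (word R c [])).restrictScalars R ∘ₗ
      (freeNilpotentLie R X c).toSubmodule.subtype
  map_lie' {u v} := map_lie_of_map_bracketEval (f := f) (fun m ↦ by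
    change dynkinDiv R c f ((bracketEval (of R c) m).val • word R c []) = _
    rw [val_bracketEval_of, dynkinDiv_bracketEval_smul_word_nil hL]) u v

theorem lift_of (x : X) : lift hL f (of R c x) = f x :=
  dynkinDiv_bracketEval_smul_word_nil hL f (.of x)

end freeNilpotentLie

end DynkinSpechtWever

namespace freeNilpotentLie

open EulerFiltration WordModule WordOp

section Naturality

variable {R X A : Type*} [CommRing R] [Ring A] [Algebra R A] {c : ℕ} {Φ : EulerFiltration R A c}
  {𝔏 : LieSubalgebra R A} (h𝔏 : Φ.IsAdapted 𝔏) (f : freeNilpotentLie R X c →ₗ⁅R⁆ 𝔏)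

/-- Evaluation of noncommutative polynomials at the images of the generators under `f`. -/
noncomputable def evalWords : WordModule R X c →ₗ[R] A :=
  WordModule.lift fun w ↦ (w.map fun x ↦ (f (of R c x) : A)).prod

include h𝔏

theorem prod_map_mem (w : List X) : (w.map fun x ↦ (f (of R c x) : A)).prod ∈ Φ.F w.length := by
  induction w with
  | nil => exact Φ.one_mem
  | cons x w ih =>
    rw [List.map_cons, List.prod_cons, List.length_cons, add_comm]
    exact Φ.mul_mem (h𝔏.mem_one (f (of R c x)).2) ih

theorem evalWords_word (w : List X) :
    evalWords f (word R c w) = (w.map fun x ↦ (f (of R c x) : A)).prod :=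
  lift_word fun hw ↦ Φ.eq_zero_of_mem hw (prod_map_mem h𝔏 f w)

theorem evalWords_bracketEval_smul (m : FreeMagma X) (v : WordModule R X c) :
    evalWords f (bracketEval (letter R c) m • v) =
      bracketEval (fun x ↦ (f (of R c x) : A)) m * evalWords f v := by
  induction m generalizing v with
  | ih1 x =>
    suffices evalWords f ∘ₗ DistribSMul.toLinearMap R _ (letter R c x) =
        LinearMap.mulLeft R (f (of R c x) : A) ∘ₗ evalWords f from LinearMap.congr_fun this v
    refine WordModule.hom_ext fun w ↦ ?_
    simp only [LinearMap.comp_apply, DistribSMul.toLinearMap_apply, letter_smul_word,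
      evalWords_word h𝔏, LinearMap.mulLeft_apply, List.map_cons, List.prod_cons]
  | ih2 a b iha ihb =>
    change evalWords f (⁅_, _⁆ • v) = ⁅_, _⁆ * _
    rw [Ring.lie_def, Ring.lie_def, sub_smul, map_sub, mul_smul, mul_smul, iha, ihb, ihb, iha,
      sub_mul, mul_assoc, mul_assoc]

theorem evalWords_smul (u : freeNilpotentLie R X c) (v : WordModule R X c) :
    evalWords f ((u : WordOp R X c) • v) = f u * evalWords f v := by
  suffices evalWords f ∘ₗ ((LinearMap.toSpanSingleton (WordOp R X c) _ v).restrictScalars R) ∘ₗ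
      (freeNilpotentLie R X c).toSubmodule.subtype =
      LinearMap.mulRight R (evalWords f v) ∘ₗ 𝔏.toSubmodule.subtype ∘ₗ f from
    LinearMap.congr_fun this u
  refine LinearMap.ext_on_range span_range_bracketEval_of fun m ↦ ?_
  change evalWords f ((bracketEval (of R c) m).val • v) = (f (bracketEval (of R c) m)).val * _
  rw [val_bracketEval_of, evalWords_bracketEval_smul h𝔏, map_bracketEval f.map_lie,
    map_bracketEval (g := ((↑) : 𝔏 → A)) (fun _ _ ↦ rfl)]
  rfl

theorem evalWords_truncExp_smul (u : freeNilpotentLie R X c) (v : WordModule R X c) :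
    evalWords f (truncExp R c (u : WordOp R X c) • v) = truncExp R c (f u : A) * evalWords f v := by
  have hpow (k : ℕ) : evalWords f (((u : WordOp R X c) ^ k) • v) =
      (f u : A) ^ k * evalWords f v := by
    induction k with
    | zero => simp
    | succ k ih => rw [pow_succ', mul_smul, evalWords_smul h𝔏, ih, pow_succ', mul_assoc]
  simp_rw [truncExp, Finset.sum_smul, Finset.sum_mul, map_sum, smul_assoc, map_smul, hpow,
    smul_mul_assoc]

/-- The Baker-Campbell-Hausdorff product is a universal Lie polynomial, hence preserved by
homomorphisms. -/
theorem map_bch [FactorialInvertible R c] (u v : freeNilpotentLie R X c) :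
    f (isAdapted.bch u v) = h𝔏.bch (f u) (f v) := by
  refine h𝔏.exp.injective (IsAdapted.expSubgroup_ext ?_)
  have hone : evalWords f (word R c []) = 1 := evalWords_word h𝔏 f []
  have hexp (u : freeNilpotentLie R X c) :
      truncExp R c (f u : A) = evalWords f (truncExp R c (u : WordOp R X c) • word R c []) := by
    rw [evalWords_truncExp_smul h𝔏, hone, mul_one]
  have hbch : truncExp R c (isAdapted.bch u v : WordOp R X c) =
      truncExp R c (u : WordOp R X c) * truncExp R c (v : WordOp R X c) :=
    congrArg (fun g : isAdapted.expSubgroup ↦ (g : (WordOp R X c)ˣ).val) (isAdapted.exp_bch u v)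
  rw [h𝔏.exp_bch, IsAdapted.val_exp, hexp, hbch, mul_smul, evalWords_truncExp_smul h𝔏, ← hexp v]
  rfl

end Naturality

end freeNilpotentLie

section GroupCommutators

variable {G : Type*} [Group G]

theorem commutator_commutator_le_of_rotate {N H₁ H₂ H₃ : Subgroup G} [N.Normal]
    (h₁ : ⁅⁅H₂, H₃⁆, H₁⁆ ≤ N) (h₂ : ⁅⁅H₃, H₁⁆, H₂⁆ ≤ N) : ⁅⁅H₁, H₂⁆, H₃⁆ ≤ N := by
  have hmap (K : Subgroup G) : K ≤ N ↔ K.map (QuotientGroup.mk' N) = ⊥ := by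
    rw [Subgroup.map_eq_bot_iff, QuotientGroup.ker_mk']
  simp only [hmap, Subgroup.map_commutator] at *
  exact Subgroup.commutator_commutator_eq_bot_of_rotate h₁ h₂

variable {a b c : G}

theorem commutator_mul_left (h : ⁅b, c⁆ ∈ Subgroup.center G) : ⁅a * b, c⁆ = ⁅a, c⁆ * ⁅b, c⁆ := by
  rw [commutatorElement_mul_left_eq_conj_mul, Subgroup.mem_center_iff.1 h, mul_inv_cancel_right,
    Subgroup.mem_center_iff.1 h]

theorem commutator_mul_right (h : ⁅a, c⁆ ∈ Subgroup.center G) : ⁅a, b * c⁆ = ⁅a, b⁆ * ⁅a, c⁆ := by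
  rw [commutatorElement_mul_right_eq_mul_conj, mul_assoc ⁅a, b⁆, Subgroup.mem_center_iff.1 h,
    ← mul_assoc, mul_inv_cancel_right]

/-- The Hall-Witt identity when the triple commutators are central and the double ones commute. -/
theorem commutator_commutator_eq_mul (hbac : ⁅b, ⁅a, c⁆⁆ ∈ Subgroup.center G)
    (habc : ⁅⁅a, b⁆, c⁆ ∈ Subgroup.center G) (hab_ac : Commute ⁅a, b⁆ ⁅a, c⁆)
    (hac_bc : Commute ⁅a, c⁆ ⁅b, c⁆) (hab_bc : Commute ⁅a, b⁆ ⁅b, c⁆) :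
    ⁅a, ⁅b, c⁆⁆ = ⁅⁅a, b⁆, c⁆ * ⁅b, ⁅a, c⁆⁆ := by
  have hconj : ⁅a, ⁅b, c⁆⁆ = ⁅⁅a, b⁆ * b, ⁅a, c⁆ * c⁆ * ⁅b, c⁆⁻¹ := by
    simp only [commutatorElement_def]
    group
  have hleft : ⁅⁅a, b⁆, ⁅a, c⁆ * c⁆ = ⁅⁅a, b⁆, c⁆ := by
    rw [commutator_mul_right habc, hab_ac.commutator_eq, one_mul]
  have hright : ⁅b, ⁅a, c⁆ * c⁆ = ⁅b, ⁅a, c⁆⁆ * ⁅b, c⁆ := by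
    rw [commutatorElement_mul_right_eq_mul_conj, mul_assoc ⁅b, ⁅a, c⁆⁆, hac_bc.eq, ← mul_assoc,
      mul_inv_cancel_right]
  rw [hconj, commutatorElement_mul_left_eq_conj_mul, hleft, hright, ← mul_assoc ⁅a, b⁆,
    Subgroup.mem_center_iff.1 hbac, mul_assoc ⁅b, ⁅a, c⁆⁆, hab_bc.eq, ← mul_assoc,
    mul_inv_cancel_right, mul_assoc, ← Subgroup.mem_center_iff.1 habc, mul_assoc,
    mul_inv_cancel_left, Subgroup.mem_center_iff.1 habc]

end GroupCommutators

section GammaSeries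

variable (G : Type*) [Group G]

/-- The lower central series in the classical indexing `γ₁ = G`; moreover `γ₀ = G`. -/
def gammaSeries (n : ℕ) : Subgroup G := (⊤ : Subgroup G).lowerCentralSeries (n - 1)

instance (n : ℕ) : (gammaSeries G n).Normal := Subgroup.lowerCentralSeries_normal _ _

theorem gammaSeries_antitone : Antitone (gammaSeries G) :=
  fun _ _ h ↦ Subgroup.lowerCentralSeries_antitone _ (Nat.sub_le_sub_right h 1)

theorem gammaSeries_succ_succ (n : ℕ) :
    gammaSeries G (n + 2) = ⁅gammaSeries G (n + 1), ⊤⁆ := rfl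

theorem commutator_gammaSeries_le (i j : ℕ) :
    ⁅gammaSeries G i, gammaSeries G j⁆ ≤ gammaSeries G (i + j) := by
  rcases j with _ | j
  · exact Subgroup.commutator_le_left _ _
  induction j generalizing i with
  | zero =>
    rcases i with _ | i
    · exact le_top
    · exact le_rfl
  | succ j ih =>
    rw [Subgroup.commutator_comm, gammaSeries_succ_succ]
    refine commutator_commutator_le_of_rotate ?_ (Subgroup.commutator_mono (ih i) le_rfl)
    rcases i with _ | i
    · exact (ih 2).trans (gammaSeries_antitone G (by lia))
    · rw [Subgroup.commutator_comm ⊤, ← gammaSeries_succ_succ]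
      exact (ih (i + 2)).trans (gammaSeries_antitone G (by lia))

variable {G}

theorem gammaSeries_le_of_commutator_le {P : ℕ → Subgroup G} (hone : P 1 = ⊤)
    (hcomm : ∀ n, 1 ≤ n → ⁅P n, P 1⁆ ≤ P (n + 1)) {n : ℕ} (hn : 1 ≤ n) :
    gammaSeries G n ≤ P n := by
  induction n, hn using Nat.le_induction with
  | base => exact hone ▸ le_top
  | succ n hn ih =>
    obtain ⟨n, rfl⟩ := Nat.exists_eq_succ_of_ne_zero (Nat.ne_zero_of_lt hn)
    exact (Subgroup.commutator_mono ih hone.ge).trans (hcomm _ hn)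

theorem map_mem_gammaSeries {H : Type*} [Group H] (f : G →* H) {n : ℕ} {g : G}
    (hg : g ∈ gammaSeries G n) : f g ∈ gammaSeries H n := by
  have hmap := Subgroup.mem_map_of_mem f hg
  rw [gammaSeries, Subgroup.map_lowerCentralSeries] at hmap
  exact Subgroup.lowerCentralSeries_mono _ le_top hmap

theorem commutator_mem_gammaSeries {i j n : ℕ} (hn : n ≤ i + j) {a b : G}
    (ha : a ∈ gammaSeries G i) (hb : b ∈ gammaSeries G j) : ⁅a, b⁆ ∈ gammaSeries G n :=
  gammaSeries_antitone G hn
    (commutator_gammaSeries_le G i j (Subgroup.commutator_mem_commutator ha hb))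

theorem mk_mem_center_of_mem_gammaSeries {n : ℕ} {a : G} (ha : a ∈ gammaSeries G n) :
    (a : G ⧸ gammaSeries G (n + 1)) ∈ Subgroup.center (G ⧸ gammaSeries G (n + 1)) := by
  refine Subgroup.mem_center_iff.2 fun g ↦ ?_
  induction g using QuotientGroup.induction_on with
  | H g =>
    refine (commutatorElement_eq_one_iff_commute.1 ?_).symm
    exact (QuotientGroup.eq_one_iff _).2
      (commutator_mem_gammaSeries (j := 1) le_rfl ha (Subgroup.mem_top g))

theorem mk_commutator_mul_left {i j : ℕ} (a : G) {b c : G} (hb : b ∈ gammaSeries G i)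
    (hc : c ∈ gammaSeries G j) :
    ((⁅a * b, c⁆ : G) : G ⧸ gammaSeries G (i + j + 1)) = (⁅a, c⁆ * ⁅b, c⁆ : G) :=
  commutator_mul_left (a := (a : G ⧸ gammaSeries G (i + j + 1)))
    (b := (b : G ⧸ gammaSeries G (i + j + 1))) (c := (c : G ⧸ gammaSeries G (i + j + 1)))
    (mk_mem_center_of_mem_gammaSeries (commutator_mem_gammaSeries le_rfl hb hc))

theorem mk_commutator_mul_right {i j : ℕ} {a c : G} (b : G) (ha : a ∈ gammaSeries G i)
    (hc : c ∈ gammaSeries G j) :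
    ((⁅a, b * c⁆ : G) : G ⧸ gammaSeries G (i + j + 1)) = (⁅a, b⁆ * ⁅a, c⁆ : G) :=
  commutator_mul_right (a := (a : G ⧸ gammaSeries G (i + j + 1)))
    (b := (b : G ⧸ gammaSeries G (i + j + 1))) (c := (c : G ⧸ gammaSeries G (i + j + 1)))
    (mk_mem_center_of_mem_gammaSeries (commutator_mem_gammaSeries le_rfl ha hc))

theorem mk_commutator_commutator {i j k : ℕ} (hi : 1 ≤ i) (hj : 1 ≤ j) (hk : 1 ≤ k) {a b c : G}
    (ha : a ∈ gammaSeries G i) (hb : b ∈ gammaSeries G j) (hc : c ∈ gammaSeries G k) :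
    ((⁅a, ⁅b, c⁆⁆ : G) : G ⧸ gammaSeries G (i + j + k + 1)) =
      (⁅⁅a, b⁆, c⁆ * ⁅b, ⁅a, c⁆⁆ : G) := by
  have hab := commutator_mem_gammaSeries le_rfl ha hb
  have hac := commutator_mem_gammaSeries le_rfl ha hc
  have hbc := commutator_mem_gammaSeries le_rfl hb hc
  have hcommute {m n : ℕ} (hmn : i + j + k + 1 ≤ m + n) {x y : G} (hx : x ∈ gammaSeries G m)
      (hy : y ∈ gammaSeries G n) :
      Commute (x : G ⧸ gammaSeries G (i + j + k + 1)) (y : G ⧸ gammaSeries G (i + j + k + 1)) :=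
    commutatorElement_eq_one_iff_commute.1
      ((QuotientGroup.eq_one_iff _).2 (commutator_mem_gammaSeries hmn hx hy))
  have hcentral {x : G} (hx : x ∈ gammaSeries G (i + j + k)) :=
    mk_mem_center_of_mem_gammaSeries hx
  exact commutator_commutator_eq_mul (a := (a : G ⧸ gammaSeries G (i + j + k + 1)))
    (b := (b : G ⧸ gammaSeries G (i + j + k + 1))) (c := (c : G ⧸ gammaSeries G (i + j + k + 1)))
    (hcentral (commutator_mem_gammaSeries (by lia) hb hac))
    (hcentral (commutator_mem_gammaSeries le_rfl hab hc))
    (hcommute (by lia) hab hac) (hcommute (by lia) hac hbc) (hcommute (by lia) hab hbc)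

end GammaSeries

/-- The `n`-th factor of the lower central series. -/
def GammaFactor (G : Type*) [Group G] (n : ℕ) : Type _ :=
  gammaSeries G n ⧸ (gammaSeries G (n + 1)).subgroupOf (gammaSeries G n)

namespace GammaFactor

variable {G : Type*} [Group G] {n i j : ℕ}

instance : Group (GammaFactor G n) := QuotientGroup.Quotient.group _

/-- The class of an element of the `n`-th term of the lower central series. -/
def mk (n : ℕ) : gammaSeries G n →* GammaFactor G n := QuotientGroup.mk' _

theorem mk_surjective : Function.Surjective (mk n : gammaSeries G n →* GammaFactor G n) :=
  QuotientGroup.mk'_surjective _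

theorem mk_eq_mk {g h : gammaSeries G n} :
    mk n g = mk n h ↔ ((g : G) : G ⧸ gammaSeries G (n + 1)) = (h : G) :=
  QuotientGroup.eq.trans (QuotientGroup.eq (s := gammaSeries G (n + 1))).symm

theorem mk_eq_one {g : gammaSeries G n} : mk n g = 1 ↔ (g : G) ∈ gammaSeries G (n + 1) :=
  QuotientGroup.eq_one_iff g

instance : CommGroup (GammaFactor G n) where
  mul_comm x y := by
    obtain ⟨g, rfl⟩ := mk_surjective x
    obtain ⟨h, rfl⟩ := mk_surjective y
    rw [← map_mul, ← map_mul, mk_eq_mk]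
    exact Subgroup.mem_center_iff.1 (mk_mem_center_of_mem_gammaSeries h.2) (g : G)

/-- The commutator of two elements of the lower central series, as an element of the series. -/
def gammaCommutator (a : gammaSeries G i) (b : gammaSeries G j) : gammaSeries G (i + j) :=
  ⟨⁅(a : G), (b : G)⁆, commutator_mem_gammaSeries le_rfl a.2 b.2⟩

/-- The pairing of the factors of the lower central series induced by commutators. -/
def commutator (i j : ℕ) : GammaFactor G i →* GammaFactor G j →* GammaFactor G (i + j) :=
  QuotientGroup.lift _
    (MonoidHom.mk'
      (fun a ↦ QuotientGroup.lift _
        (MonoidHom.mk' (fun b ↦ mk (i + j) (gammaCommutator a b)) fun b c ↦ by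
          rw [← map_mul]
          exact mk_eq_mk.2 (mk_commutator_mul_right _ a.2 c.2))
        fun b hb ↦ mk_eq_one.2 (commutator_mem_gammaSeries (i := i) le_rfl a.2 hb))
      fun a b ↦ by
        ext c
        obtain ⟨c, rfl⟩ := mk_surjective c
        exact (mk_eq_mk (h := gammaCommutator a c * gammaCommutator b c)).2
          (mk_commutator_mul_left _ b.2 c.2))
    fun a ha ↦ by
      ext c
      obtain ⟨c, rfl⟩ := mk_surjective c
      exact mk_eq_one.2 (commutator_mem_gammaSeries (by lia) ha c.2)

end GammaFactor

open DirectSum in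
/-- The graded Lie ring of the lower central series. Its component of degree `0` is trivial. -/
abbrev GammaGraded (G : Type*) [Group G] : Type _ := ⨁ n, Additive (GammaFactor G n)

namespace GammaGraded

variable {G : Type*} [Group G] {m n i j : ℕ} {g h : G}

/-- The map from the `n`-th term of the lower central series to the component of degree `n`. -/
def symbolHom (n : ℕ) : Additive (gammaSeries G n) →+ GammaGraded G :=
  (DirectSum.of (fun n ↦ Additive (GammaFactor G n)) n).comp
    (MonoidHom.toAdditive (GammaFactor.mk n))

/-- The class of an element of the `n`-th term of the lower central series, in degree `n`. -/
def symbol (hg : g ∈ gammaSeries G n) : GammaGraded G := symbolHom n (.ofMul ⟨g, hg⟩)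

theorem symbol_eq_zero (hg : g ∈ gammaSeries G n) :
    symbol hg = 0 ↔ g ∈ gammaSeries G (n + 1) :=
  ((DirectSum.of_injective n).eq_iff' (map_zero _)).trans GammaFactor.mk_eq_one

theorem symbol_eq_symbol (hmn : m = n) (hg : g ∈ gammaSeries G m) (hh : h ∈ gammaSeries G n)
    (hgh : (g : G ⧸ gammaSeries G (n + 1)) = (h : G ⧸ gammaSeries G (n + 1))) :
    symbol hg = symbol hh := by
  subst hmn
  exact congrArg (DirectSum.of (fun n ↦ Additive (GammaFactor G n)) m) (GammaFactor.mk_eq_mk.2 hgh)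

theorem symbol_one : symbol (one_mem (gammaSeries G n)) = 0 := map_zero (symbolHom n)

theorem symbol_mul (hg : g ∈ gammaSeries G n) (hh : h ∈ gammaSeries G n) :
    symbol (mul_mem hg hh) = symbol hg + symbol hh :=
  map_add (symbolHom n) (.ofMul ⟨g, hg⟩) (.ofMul ⟨h, hh⟩)

theorem symbol_inv (hg : g ∈ gammaSeries G n) : symbol (inv_mem hg) = -symbol hg :=
  map_neg (symbolHom n) (.ofMul ⟨g, hg⟩)

theorem symbol_pow (hg : g ∈ gammaSeries G n) (k : ℕ) :
    symbol (pow_mem hg k) = k • symbol hg :=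
  map_nsmul (symbolHom (G := G) n) k (.ofMul ⟨g, hg⟩)

theorem symbol_induction {motive : GammaGraded G → Prop} (zero : motive 0)
    (symbol : ∀ (n : ℕ) (g : G) (hg : g ∈ gammaSeries G n), motive (symbol hg))
    (add : ∀ x y, motive x → motive y → motive (x + y)) (x : GammaGraded G) : motive x := by
  induction x using DirectSum.induction_on with
  | zero => exact zero
  | of n x =>
    obtain ⟨g, rfl⟩ := GammaFactor.mk_surjective x
    exact symbol n g g.2
  | add x y hx hy => exact add x y hx hy

/-- The product is the Lie bracket, see `GammaGraded.lie_symbol`. -/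
instance : DirectSum.GNonUnitalNonAssocSemiring (fun n ↦ Additive (GammaFactor G n)) where
  mul {i j} a b := .ofMul (GammaFactor.commutator i j a.toMul b.toMul)
  mul_zero _ := map_one (GammaFactor.commutator _ _ _)
  zero_mul _ := DFunLike.congr_fun (map_one (GammaFactor.commutator _ _)) _
  mul_add _ _ _ := map_mul (GammaFactor.commutator _ _ _) _ _
  add_mul _ _ _ := DFunLike.congr_fun (map_mul (GammaFactor.commutator _ _) _ _) _

theorem symbol_mul_symbol (hg : g ∈ gammaSeries G i) (hh : h ∈ gammaSeries G j) :
    symbol hg * symbol hh =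
      symbol (commutator_mem_gammaSeries le_rfl hg hh : ⁅g, h⁆ ∈ gammaSeries G (i + j)) :=
  DirectSum.of_mul_of _ _

theorem mul_add_mul_swap (x y : GammaGraded G) : x * y + y * x = 0 := by
  induction x using symbol_induction with
  | zero => rw [zero_mul, mul_zero, add_zero]
  | add x x' hx hx' => rw [add_mul, mul_add, add_add_add_comm, hx, hx', add_zero]
  | symbol i g hg =>
    induction y using symbol_induction with
    | zero => rw [zero_mul, mul_zero, add_zero]
    | add y y' hy hy' => rw [add_mul, mul_add, add_add_add_comm, hy, hy', add_zero]
    | symbol j h hh =>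
      rw [symbol_mul_symbol, symbol_mul_symbol, add_eq_zero_iff_eq_neg, ← symbol_inv]
      exact symbol_eq_symbol (add_comm i j) _ _ (by rw [commutatorElement_inv])

theorem mul_self (x : GammaGraded G) : x * x = 0 := by
  induction x using symbol_induction with
  | zero => exact zero_mul 0
  | add x y hx hy =>
    rw [add_mul, mul_add, mul_add, hx, hy, zero_add, add_zero, mul_add_mul_swap]
  | symbol i g hg =>
    rw [symbol_mul_symbol, symbol_eq_zero, commutatorElement_self]
    exact one_mem _

theorem symbol_eq_zero_of_zero (hg : g ∈ gammaSeries G 0) : symbol hg = 0 :=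
  (symbol_eq_zero hg).2 (Subgroup.mem_top g)

theorem mul_mul (x y z : GammaGraded G) : x * (y * z) = x * y * z + y * (x * z) := by
  induction x using symbol_induction with
  | zero => simp only [zero_mul, mul_zero, add_zero]
  | add x x' hx hx' => simp only [add_mul, mul_add, hx, hx', add_add_add_comm]
  | symbol i a ha =>
  induction y using symbol_induction with
  | zero => simp only [zero_mul, mul_zero, add_zero]
  | add y y' hy hy' => simp only [add_mul, mul_add, hy, hy', add_add_add_comm]
  | symbol j b hb =>
  induction z using symbol_induction with
  | zero => simp only [mul_zero, add_zero]
  | add z z' hz hz' => simp only [mul_add, hz, hz', add_add_add_comm]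
  | symbol k c hc =>
    obtain rfl | hi := i.eq_zero_or_pos
    · simp only [symbol_eq_zero_of_zero, zero_mul, mul_zero, add_zero]
    obtain rfl | hj := j.eq_zero_or_pos
    · simp only [symbol_eq_zero_of_zero, zero_mul, mul_zero, add_zero]
    obtain rfl | hk := k.eq_zero_or_pos
    · simp only [symbol_eq_zero_of_zero, mul_zero, add_zero]
    simp only [symbol_mul_symbol]
    rw [symbol_eq_symbol (add_left_comm j i k) _
        (commutator_mem_gammaSeries (by lia) hb (commutator_mem_gammaSeries le_rfl ha hc)) rfl,
      symbol_eq_symbol (add_assoc i j k) _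
        (commutator_mem_gammaSeries (by lia) (commutator_mem_gammaSeries le_rfl ha hb) hc) rfl,
      ← symbol_mul]
    refine symbol_eq_symbol rfl _ _ ?_
    have := mk_commutator_commutator hi hj hk ha hb hc
    rwa [add_assoc i j k] at this

instance : LieRing (GammaGraded G) where
  bracket x y := x * y
  add_lie := add_mul
  lie_add := mul_add
  lie_self := mul_self
  leibniz_lie := mul_mul

theorem lie_symbol (hg : g ∈ gammaSeries G i) (hh : h ∈ gammaSeries G j) :
    ⁅symbol hg, symbol hh⁆ =
      symbol (commutator_mem_gammaSeries le_rfl hg hh : ⁅g, h⁆ ∈ gammaSeries G (i + j)) :=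
  symbol_mul_symbol hg hh

section Nilpotent

variable {R : Type*} [CommRing R] [LieAlgebra R (GammaGraded G)]

variable (G R) in
/-- The part of the graded Lie ring of degree at least `n`. -/
def above (n : ℕ) : Submodule R (GammaGraded G) :=
  Submodule.span R {x | ∃ m, n ≤ m ∧ ∃ (g : G) (hg : g ∈ gammaSeries G m), symbol hg = x}

theorem symbol_mem_above (hn : n ≤ m) (hg : g ∈ gammaSeries G m) : symbol hg ∈ above G R n :=
  Submodule.subset_span ⟨m, hn, g, hg, rfl⟩

theorem lie_mem_above (x : GammaGraded G) (n : ℕ) {y : GammaGraded G} (hy : y ∈ above G R n) :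
    ⁅x, y⁆ ∈ above G R (n + 1) := by
  induction x using symbol_induction with
  | zero => exact (zero_lie (L := GammaGraded G) y).symm ▸ zero_mem _
  | add x x' hx hx' => exact add_lie x x' y ▸ add_mem hx hx'
  | symbol i g hg =>
    obtain rfl | hi := i.eq_zero_or_pos
    · exact symbol_eq_zero_of_zero hg ▸ (zero_lie (L := GammaGraded G) y).symm ▸ zero_mem _
    induction hy using Submodule.span_induction with
    | mem _ hx =>
      obtain ⟨m, hnm, h, hh, rfl⟩ := hx
      exact lie_symbol hg hh ▸ symbol_mem_above (by lia) _
    | zero => exact (lie_zero (M := GammaGraded G) (symbol hg)).symm ▸ zero_mem _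
    | add x y _ _ hx hy => exact lie_add (symbol hg) x y ▸ add_mem hx hy
    | smul r x _ hx => exact lie_smul r (symbol hg) x ▸ Submodule.smul_mem _ r hx

theorem lowerCentralSeries_eq_bot {c : ℕ} (hc : gammaSeries G (c + 1) = ⊥) :
    LieModule.lowerCentralSeries R (GammaGraded G) (GammaGraded G) c = ⊥ := by
  refine lowerCentralSeries_eq_bot_of_filtration (F := above G R) ?_
    (fun x n y hy ↦ lie_mem_above x n hy) ?_
  · refine Submodule.eq_top_iff'.2 fun x ↦ ?_
    induction x using symbol_induction with
    | zero => exact zero_mem _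
    | add x y hx hy => exact add_mem hx hy
    | symbol n g hg =>
      obtain rfl | hn := n.eq_zero_or_pos
      · exact symbol_eq_zero_of_zero hg ▸ zero_mem _
      · exact symbol_mem_above hn hg
  · refine Submodule.span_eq_bot.2 ?_
    rintro _ ⟨m, hm, g, hg, rfl⟩
    have hg1 : g = 1 := by
      rw [← Subgroup.mem_bot, ← hc]
      exact gammaSeries_antitone G hm hg
    exact (symbol_eq_zero hg).2 (hg1 ▸ one_mem _)

end Nilpotent

theorem nsmul_eq_zero {N : ℕ} (hN : ∀ g : G, g ^ N = 1) (x : GammaGraded G) : N • x = 0 := by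
  induction x using symbol_induction with
  | zero => exact smul_zero N
  | add x y hx hy => rw [smul_add, hx, hy, add_zero]
  | symbol n g hg =>
    rw [← symbol_pow, symbol_eq_zero, hN]
    exact one_mem _

end GammaGraded

/-- A Lie ring annihilated by `N` is a Lie algebra over `ZMod N`. -/
abbrev lieAlgebraZMod {L : Type*} [LieRing L] {N : ℕ} (hN : ∀ x : L, N • x = 0) :
    LieAlgebra (ZMod N) L where
  __ := AddCommGroup.zmodModule hN
  lie_smul r x y :=
    letI := AddCommGroup.zmodModule hN
    ZMod.map_smul (LieRingModule.toEnd L L x) r y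

namespace EulerFiltration.IsAdapted

variable {R A : Type*} [CommRing R] [Ring A] [Algebra R A] {c : ℕ} [FactorialInvertible R c]
  {Φ : EulerFiltration R A c} {𝔏 : LieSubalgebra R A} {h𝔏 : Φ.IsAdapted 𝔏}

theorem sub_one_mem (g : h𝔏.expSubgroup) : ((g : Aˣ) : A) - 1 ∈ Φ.F 1 := by
  obtain ⟨u, rfl⟩ := h𝔏.exp.surjective g
  exact Φ.truncExp_sub_one_mem le_rfl (h𝔏.mem_one u.2)

/-- `T` is the component of degree `n` of `g`, whose components of degrees `1, …, n - 1` vanish. -/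
structure IsLeadingTerm (n : ℕ) (g : h𝔏.expSubgroup) (T : 𝔏) : Prop where
  mem : (T : A) ∈ Φ.F n
  sub_one_sub_mem : ((g : Aˣ) : A) - 1 - T ∈ Φ.F (n + 1)

variable {m n : ℕ} {g h : h𝔏.expSubgroup} {S T : 𝔏}

theorem isLeadingTerm_exp (hn : 1 ≤ n) (hT : (T : A) ∈ Φ.F n) :
    IsLeadingTerm n (h𝔏.exp T) T :=
  ⟨hT, Φ.truncExp_sub_one_sub_mem hn hT⟩

theorem isLeadingTerm_one (hT : (T : A) ∈ Φ.F (n + 1)) : IsLeadingTerm n (1 : h𝔏.expSubgroup) T :=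
  ⟨Φ.mem_of_le n.le_succ hT, by simpa using hT⟩

namespace IsLeadingTerm

theorem sub_one_mem (hg : IsLeadingTerm n g T) : ((g : Aˣ) : A) - 1 ∈ Φ.F n := by
  simpa using add_mem (Φ.mem_of_le n.le_succ hg.sub_one_sub_mem) hg.mem

theorem mul (hg : IsLeadingTerm n g S) (hh : IsLeadingTerm n h T) :
    IsLeadingTerm n (g * h) (S + T) where
  mem := add_mem hg.mem hh.mem
  sub_one_sub_mem := by
    have hcross := Φ.mul_mem hg.sub_one_mem (IsAdapted.sub_one_mem h)
    convert add_mem hcross (add_mem hg.sub_one_sub_mem hh.sub_one_sub_mem) using 1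
    push_cast
    noncomm_ring

theorem inv (hg : IsLeadingTerm n g T) : IsLeadingTerm n g⁻¹ (-T) where
  mem := neg_mem hg.mem
  sub_one_sub_mem := by
    have hcross := Φ.mul_mem hg.sub_one_mem (IsAdapted.sub_one_mem g⁻¹)
    convert neg_mem (add_mem hcross hg.sub_one_sub_mem) using 1
    push_cast
    rw [sub_mul, mul_sub, Units.mul_inv]
    noncomm_ring

theorem commutator (hg : IsLeadingTerm m g S) (hh : IsLeadingTerm n h T) :
    IsLeadingTerm (m + n) ⁅g, h⁆ ⁅S, T⁆ where
  mem := Φ.lie_mem hg.mem hh.mem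
  sub_one_sub_mem := by
    have hleft := Φ.lie_mem hg.sub_one_sub_mem hh.sub_one_mem
    have hright := Φ.lie_mem hg.mem hh.sub_one_sub_mem
    rw [add_right_comm] at hleft
    have hcomm : ((⁅g, h⁆ : h𝔏.expSubgroup) : Aˣ).val - 1 - ⁅(g : Aˣ).val - 1, (h : Aˣ).val - 1⁆ ∈
        Φ.F (m + n + 1) := Φ.commutator_sub_one_sub_lie_mem hg.sub_one_mem hh.sub_one_mem
      (IsAdapted.sub_one_mem g⁻¹) (IsAdapted.sub_one_mem h⁻¹)
    convert add_mem hcomm (add_mem hleft hright) using 1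
    simp only [sub_lie, lie_sub]
    push_cast
    abel

end IsLeadingTerm

theorem exists_isLeadingTerm_of_mem_gammaSeries (hn : 1 ≤ n) (hg : g ∈ gammaSeries _ n) :
    ∃ T, IsLeadingTerm n g T := by
  let P (n : ℕ) : Subgroup h𝔏.expSubgroup :=
    { carrier := {g | ∃ T, IsLeadingTerm n g T}
      one_mem' := ⟨0, isLeadingTerm_one (zero_mem _)⟩
      mul_mem' := fun ⟨S, hS⟩ ⟨T, hT⟩ ↦ ⟨S + T, hS.mul hT⟩
      inv_mem' := fun ⟨T, hT⟩ ↦ ⟨-T, hT.inv⟩ }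
  have hone : P 1 = ⊤ := Subgroup.eq_top_iff' _ |>.2 fun g ↦ by
    obtain ⟨u, rfl⟩ := h𝔏.exp.surjective g
    exact ⟨u, isLeadingTerm_exp le_rfl (h𝔏.mem_one u.2)⟩
  refine gammaSeries_le_of_commutator_le hone (fun n _ ↦ Subgroup.commutator_le.2 ?_) hn hg
  exact fun _ ⟨S, hS⟩ _ ⟨T, hT⟩ ↦ ⟨⁅S, T⁆, hS.commutator hT⟩

variable (h𝔏) in
theorem gammaSeries_expSubgroup_eq_bot : gammaSeries h𝔏.expSubgroup (c + 1) = ⊥ := by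
  refine (Subgroup.eq_bot_iff_forall _).2 fun g hg ↦ ?_
  obtain ⟨T, hT⟩ := exists_isLeadingTerm_of_mem_gammaSeries c.succ_pos hg
  exact expSubgroup_ext (sub_eq_zero.1 (Φ.eq_zero_of_mem c.lt_succ_self hT.sub_one_mem))

end EulerFiltration.IsAdapted

section FreeGroup

open EulerFiltration EulerFiltration.IsAdapted WordOp freeNilpotentLie

variable {N : ℕ} {X : Type*} {c : ℕ} [FactorialInvertible (ZMod N) c]

variable (N X c) in
/-- The free group of class `c` and exponent `N` on the letters `X`, realised as the group of
exponentials of the free nilpotent Lie algebra. -/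
noncomputable abbrev FreeExpGroup : Subgroup (WordOp (ZMod N) X c)ˣ :=
  (isAdapted (R := ZMod N) (X := X) (c := c)).expSubgroup

namespace FreeExpGroup

/-- The exponential of the free nilpotent Lie algebra. -/
noncomputable abbrev exp : freeNilpotentLie (ZMod N) X c ≃ FreeExpGroup N X c := isAdapted.exp

theorem pow_eq_one (g : FreeExpGroup N X c) : g ^ N = 1 := by
  obtain ⟨u, rfl⟩ := exp.surjective g
  rw [← exp_nsmul, ← Nat.cast_smul_eq_nsmul (ZMod N), ZMod.natCast_self, zero_smul, exp_zero]

variable (N c) in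
/-- The free generators. -/
noncomputable def of (x : X) : FreeExpGroup N X c := exp (freeNilpotentLie.of _ c x)

theorem isLeadingTerm_bracketEval_of (m : FreeMagma X) :
    IsLeadingTerm m.length (bracketEval (of N c) m) (bracketEval (freeNilpotentLie.of _ c) m) := by
  induction m with
  | ih1 x => exact isLeadingTerm_exp le_rfl (letter_mem x)
  | ih2 x y hx hy => exact hx.commutator hy

theorem exists_isLeadingTerm {H : Subgroup (FreeExpGroup N X c)} {n : ℕ}
    (hH : ∀ m : FreeMagma X, n ≤ m.length → bracketEval (of N c) m ∈ H)
    {u : freeNilpotentLie (ZMod N) X c} (hu : u.val ∈ raising (ZMod N) X c n) :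
    ∃ h ∈ H, IsLeadingTerm n h u := by
  let V : AddSubgroup (freeNilpotentLie (ZMod N) X c) :=
    { carrier := {v | ∃ h ∈ H, IsLeadingTerm n h v}
      zero_mem' := ⟨1, one_mem H, isLeadingTerm_one (zero_mem _)⟩
      add_mem' := fun ⟨g, hg, hu⟩ ⟨h, hh, hv⟩ ↦ ⟨g * h, mul_mem hg hh, hu.mul hv⟩
      neg_mem' := fun ⟨g, hg, hu⟩ ↦ ⟨g⁻¹, inv_mem hg, hu.inv⟩ }
  have hV : above n ≤ AddSubgroup.toZModSubmodule N V := by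
    refine Submodule.span_le.2 ?_
    rintro _ ⟨m, hm, rfl⟩
    obtain rfl | hlt := eq_or_lt_of_le (show n ≤ m.length from hm)
    · exact ⟨_, hH m hm, isLeadingTerm_bracketEval_of m⟩
    · exact ⟨1, one_mem H, isLeadingTerm_one (eulerFiltration.mem_of_le hlt (bracketEval_of_mem m))⟩
  exact hV (mem_above_of_coe_mem_raising hu)

theorem exp_mem_of_bracketEval_mem {H : Subgroup (FreeExpGroup N X c)} {n : ℕ} (hn : 1 ≤ n)
    (hH : ∀ m : FreeMagma X, n ≤ m.length → bracketEval (of N c) m ∈ H)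
    {u : freeNilpotentLie (ZMod N) X c} (hu : u.val ∈ raising (ZMod N) X c n) : exp u ∈ H := by
  by_cases hc : c < n
  · have hu0 : u = 0 := Subtype.ext (eulerFiltration.eq_zero_of_mem hc hu)
    rw [hu0, exp_zero]
    exact one_mem H
  obtain ⟨h, hh, hlead⟩ := exists_isLeadingTerm hH hu
  obtain ⟨v, hv⟩ := exp.surjective (h⁻¹ * exp u)
  have hvmem : v.val ∈ raising (ZMod N) X c (n + 1) := by
    have hlead' := hlead.inv.mul (isLeadingTerm_exp hn hu)
    rw [neg_add_cancel] at hlead'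
    refine eulerFiltration.mem_of_truncExp_sub_one_mem (isAdapted.mem_one v.2) ?_
    have := hlead'.sub_one_sub_mem
    rw [ZeroMemClass.coe_zero, sub_zero] at this
    change (exp v).val.val - 1 ∈ _
    exact hv ▸ this
  rw [← mul_inv_cancel_left h (exp u), ← hv]
  exact mul_mem hh <|
    exp_mem_of_bracketEval_mem (hn.trans n.le_succ) (fun m hm ↦ hH m (by lia)) hvmem
termination_by c + 1 - n

theorem closure_range_of :
    Subgroup.closure (Set.range (of N c)) = (⊤ : Subgroup (FreeExpGroup N X c)) := by
  refine (Subgroup.eq_top_iff' _).2 fun g ↦ ?_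
  obtain ⟨u, rfl⟩ := exp.surjective g
  refine exp_mem_of_bracketEval_mem le_rfl (fun m _ ↦ ?_) (isAdapted.mem_one u.2)
  clear * -
  induction m with
  | ih1 x => exact Subgroup.subset_closure ⟨x, rfl⟩
  | ih2 x y hx hy =>
    exact Subgroup.commutator_le_self _ (Subgroup.commutator_mem_commutator hx hy)

theorem hom_ext {G : Type*} [Group G] {f g : FreeExpGroup N X c →* G}
    (h : ∀ x, f (of N c x) = g (of N c x)) : f = g :=
  MonoidHom.eq_of_eqOn_dense closure_range_of (Set.forall_mem_range.2 h)

theorem exp_mem_commutator {u : freeNilpotentLie (ZMod N) X c}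
    (hu : u.val ∈ raising (ZMod N) X c 2) : exp u ∈ _root_.commutator (FreeExpGroup N X c) := by
  refine exp_mem_of_bracketEval_mem one_le_two (fun m hm ↦ ?_) hu
  cases m with
  | of x => simp at hm
  | mul x y => exact Subgroup.commutator_mem_commutator trivial trivial

section Injective

variable {K : Type*} [Group K] {κ : X → K} (hκ : Subgroup.closure (Set.range κ) = ⊤)
  {α : K →* FreeExpGroup N X c} (hα : ∀ x, α (κ x) = of N c x)
include hκ hα

theorem exists_homogeneous_isLeadingTerm [LieAlgebra (ZMod N) (GammaGraded K)]
    {ev : freeNilpotentLie (ZMod N) X c →ₗ⁅ZMod N⁆ GammaGraded K}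
    (hev : ∀ x, ev (freeNilpotentLie.of _ c x) =
      GammaGraded.symbol (n := 1) (Subgroup.mem_top (κ x)))
    {n : ℕ} (hn : 1 ≤ n) {g : K} (hg : g ∈ gammaSeries K n) :
    ∃ T, ev T = GammaGraded.symbol hg ∧ T.val ∈ homogeneous (ZMod N) X c n ∧
      IsLeadingTerm n (α g) T := by
  let P (n : ℕ) : Subgroup K :=
    { carrier := {g | ∃ (hg : g ∈ gammaSeries K n) (T : _), ev T = GammaGraded.symbol hg ∧
        T.val ∈ homogeneous (ZMod N) X c n ∧ IsLeadingTerm n (α g) T}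
      one_mem' := ⟨one_mem _, 0, by rw [map_zero, GammaGraded.symbol_one], zero_mem _,
        map_one α ▸ isLeadingTerm_one (zero_mem _)⟩
      mul_mem' := fun ⟨hg, S, hgS, hS, hlS⟩ ⟨hh, T, hhT, hT, hlT⟩ ↦ ⟨mul_mem hg hh, S + T,
        by rw [map_add, hgS, hhT, GammaGraded.symbol_mul], add_mem hS hT,
        map_mul α _ _ ▸ hlS.mul hlT⟩
      inv_mem' := fun ⟨hg, T, hgT, hT, hlT⟩ ↦ ⟨inv_mem hg, -T,
        by rw [map_neg, hgT, GammaGraded.symbol_inv], neg_mem hT, map_inv α _ ▸ hlT.inv⟩ }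
  have hone : P 1 = ⊤ := by
    rw [eq_top_iff, ← hκ, Subgroup.closure_le]
    rintro _ ⟨x, rfl⟩
    exact ⟨Subgroup.mem_top _, freeNilpotentLie.of _ c x, hev x,
      bracketEval_of_mem_homogeneous (FreeMagma.of x),
      hα x ▸ isLeadingTerm_bracketEval_of (FreeMagma.of x)⟩
  refine (gammaSeries_le_of_commutator_le (P := P) hone (fun n _ ↦ ?_) hn hg).2
  refine Subgroup.commutator_le.2 ?_
  rintro g ⟨hg, S, hgS, hS, hlS⟩ h ⟨hh, T, hhT, hT, hlT⟩
  refine ⟨commutator_mem_gammaSeries le_rfl hg hh, ⁅S, T⁆, ?_, lie_mem_homogeneous hS hT, ?_⟩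
  · rw [LieHom.map_lie, hgS, hhT, GammaGraded.lie_symbol]
  · exact map_commutatorElement α g h ▸ hlS.commutator hlT

theorem injective_of_map_eq_of (hpow : ∀ g : K, g ^ N = 1) (hc : gammaSeries K (c + 1) = ⊥) :
    Function.Injective α := by
  let _ := lieAlgebraZMod (GammaGraded.nsmul_eq_zero hpow)
  let ev := freeNilpotentLie.lift (GammaGraded.lowerCentralSeries_eq_bot (R := ZMod N) hc)
    fun x ↦ GammaGraded.symbol (n := 1) (Subgroup.mem_top (κ x))
  refine (injective_iff_map_eq_one α).2 fun g hg ↦ ?_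
  have hmem (n : ℕ) : g ∈ gammaSeries K (n + 1) := by
    induction n with
    | zero => exact Subgroup.mem_top g
    | succ n ih =>
      obtain ⟨T, hgT, hT, hlT⟩ := exists_homogeneous_isLeadingTerm hκ hα (ev := ev)
        (fun x ↦ freeNilpotentLie.lift_of _ _ x) n.succ_pos ih
      have hTmem : T.val ∈ eulerFiltration.F (n + 1 + 1) := by
        simpa [hg] using hlT.sub_one_sub_mem
      have hT0 : T = 0 := Subtype.ext (eulerFiltration.eq_zero_of_euler_lie_eq_nsmul hT hTmem)
      rw [← GammaGraded.symbol_eq_zero ih, ← hgT, hT0, map_zero]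
  exact Subgroup.mem_bot.1 (hc ▸ hmem c)

end Injective

section Lift

variable {G : Type*} [Group G] (hpow : ∀ g : G, g ^ N = 1) (hc : gammaSeries G (c + 1) = ⊥)
  (f : X → G)
include hpow hc

theorem bijective_fst_closure :
    Function.Bijective ((MonoidHom.fst (FreeExpGroup N X c) G).comp
      (Subgroup.closure (Set.range fun x ↦ (of N c x, f x))).subtype) := by
  set K := Subgroup.closure (Set.range fun x ↦ (of N c x, f x))
  have hκ : Subgroup.closure (Set.range fun x : X ↦
      (⟨(of N c x, f x), Subgroup.subset_closure ⟨x, rfl⟩⟩ : K)) = ⊤ := by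
    rw [← Subgroup.closure_closure_coe_preimage]
    congr 1
    ext ⟨g, hg⟩
    simp [Subtype.ext_iff]
  refine ⟨injective_of_map_eq_of hκ (fun _ ↦ rfl) (fun g ↦ ?_) ?_, ?_⟩
  · exact Subtype.ext (Prod.ext (pow_eq_one _) (hpow _))
  · refine (Subgroup.eq_bot_iff_forall _).2 fun g hg ↦ Subtype.ext (Prod.ext ?_ ?_)
    · have := map_mem_gammaSeries ((MonoidHom.fst _ _).comp K.subtype) hg
      rwa [gammaSeries_expSubgroup_eq_bot] at this
    · have := map_mem_gammaSeries ((MonoidHom.snd _ _).comp K.subtype) hg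
      rwa [hc] at this
  · refine MonoidHom.range_eq_top.1 (top_le_iff.1 ?_)
    rw [← closure_range_of, Subgroup.closure_le]
    rintro _ ⟨x, rfl⟩
    exact ⟨⟨_, Subgroup.subset_closure ⟨x, rfl⟩⟩, rfl⟩

/-- The universal property of `FreeExpGroup N X c`: the subgroup of `FreeExpGroup N X c × G`
generated by the pairs `(of x, f x)` is the graph of the homomorphism. -/
noncomputable def lift : FreeExpGroup N X c →* G :=
  ((MonoidHom.snd _ G).comp (Subgroup.subtype _)).comp
    (MulEquiv.ofBijective _ (bijective_fst_closure hpow hc f)).symm.toMonoidHom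

theorem lift_of (x : X) : lift hpow hc f (of N c x) = f x := by
  have hfst : (MulEquiv.ofBijective _ (bijective_fst_closure hpow hc f)).symm (of N c x) =
      ⟨(of N c x, f x), Subgroup.subset_closure ⟨x, rfl⟩⟩ :=
    (MulEquiv.symm_apply_eq _).2 rfl
  exact congrArg (fun g ↦ g.1.2) hfst

end Lift

end FreeExpGroup

end FreeGroup

section Bch

open EulerFiltration EulerFiltration.IsAdapted WordOp

theorem EulerFiltration.IsAdapted.bch_sub_add_mem {R A : Type*} [CommRing R] [Ring A] [Algebra R A]
    {c : ℕ} [FactorialInvertible R c] {Φ : EulerFiltration R A c} {𝔏 : LieSubalgebra R A}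
    (h𝔏 : Φ.IsAdapted 𝔏) (u v : 𝔏) : ((h𝔏.bch u v - (u + v) : 𝔏) : A) ∈ Φ.F 2 := by
  have hlead (w : 𝔏) : IsLeadingTerm 1 (h𝔏.exp w) w := isLeadingTerm_exp le_rfl (h𝔏.mem_one w.2)
  have hmul := (hlead u).mul (hlead v)
  rw [← h𝔏.exp_bch] at hmul
  simpa using sub_mem hmul.sub_one_sub_mem (hlead (h𝔏.bch u v)).sub_one_sub_mem

theorem bracketEval_mul_eq_zero {X L : Type*} [LieRing L] {f : X → L} (hf : ∀ x y, ⁅f x, f y⁆ = 0)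
    (a b : FreeMagma X) : bracketEval f (a * b) = 0 := by
  have hleaf (m : FreeMagma X) : bracketEval f m = 0 ∨ ∃ x, bracketEval f m = f x := by
    induction m with
    | ih1 x => exact .inr ⟨x, rfl⟩
    | ih2 a b iha ihb =>
      change ⁅bracketEval f a, bracketEval f b⁆ = 0 ∨ _
      obtain ha | ⟨x, ha⟩ := iha <;> obtain hb | ⟨y, hb⟩ := ihb <;> simp [ha, hb, hf]
  change ⁅bracketEval f a, bracketEval f b⁆ = 0
  obtain ha | ⟨x, ha⟩ := hleaf a <;> obtain hb | ⟨y, hb⟩ := hleaf b <;> simp [ha, hb, hf]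

/-- The quotient map of a Lie ideal, as a homomorphism of Lie algebras. -/
def lieQuotientMk {R L : Type*} [CommRing R] [LieRing L] [LieAlgebra R L] (I : LieIdeal R L) :
    L →ₗ⁅R⁆ L ⧸ I where
  __ := (LieSubmodule.Quotient.mk' I : L →ₗ[R] L ⧸ I)
  map_lie' {x y} := LieSubmodule.Quotient.mk_bracket I x y

namespace freeNilpotentLie

variable {R X L : Type*} [CommRing R] {c : ℕ} [FactorialInvertible R c] [LieRing L] [LieAlgebra R L]

/-- The homomorphism substituting `x` and `y` for the generators `false` and `true`. -/
noncomputable def subst (hL : LieModule.lowerCentralSeries R L L c = ⊥) (x y : L) :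
    freeNilpotentLie R Bool c →ₗ⁅R⁆ L :=
  lift hL fun b ↦ cond b y x

section Subst

variable (hL : LieModule.lowerCentralSeries R L L c = ⊥) (x y : L)

@[simp]
theorem subst_of_false : subst hL x y (of R c false) = x := lift_of hL _ false

@[simp]
theorem subst_of_true : subst hL x y (of R c true) = y := lift_of hL _ true

end Subst

variable (R c) in
/-- The Baker-Campbell-Hausdorff series in two variables, truncated after degree `c`. -/
noncomputable def bchPoly : freeNilpotentLie R Bool c := isAdapted.bch (of R c false) (of R c true)

theorem subst_bchPoly (u v : freeNilpotentLie R X c) :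
    subst lowerCentralSeries_eq_bot u v (bchPoly R c) = isAdapted.bch u v := by
  rw [bchPoly, map_bch isAdapted, subst_of_false, subst_of_true]

theorem map_bch_eq_add (f : freeNilpotentLie R X c →ₗ⁅R⁆ L) {u v : freeNilpotentLie R X c}
    (huv : ⁅f u, f v⁆ = 0) : f (isAdapted.bch u v) = f u + f v := by
  let g := f.comp (subst lowerCentralSeries_eq_bot u v)
  have hcomm : ∀ b b', ⁅g (of R c b), g (of R c b')⁆ = 0 := by
    have hvu : ⁅f v, f u⁆ = 0 := by rw [← lie_skew, huv, neg_zero]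
    simp [g, huv, hvu]
  have hker : above 2 ≤ g.ker.toSubmodule := by
    refine Submodule.span_le.2 ?_
    rintro _ ⟨m, hm, rfl⟩
    cases m with
    | of x => simp at hm
    | mul a b => exact (map_bracketEval g.map_lie _ _).trans (bracketEval_mul_eq_zero hcomm a b)
  have hg : g (bchPoly R c - (of R c false + of R c true)) = 0 :=
    hker (mem_above_of_coe_mem_raising (isAdapted.bch_sub_add_mem _ _))
  rw [map_sub, sub_eq_zero] at hg
  simpa [g, subst_bchPoly] using hg

theorem lie_mem_above_two (u v : freeNilpotentLie R X c) : ⁅u, v⁆ ∈ above 2 := by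
  have hmem : ⁅u.val, v.val⁆ ∈ raising R X c (1 + 1) :=
    eulerFiltration.lie_mem (isAdapted.mem_one u.2) (isAdapted.mem_one v.2)
  exact mem_above_of_coe_mem_raising hmem

variable (R X c) in
/-- The ideal of the multiples by `k` of the elements without component of degree one. -/
noncomputable def nsmulIdeal (k : ℕ) : LieIdeal R (freeNilpotentLie R X c) where
  __ := (above 2).map (k • LinearMap.id)
  lie_mem := by
    rintro x _ ⟨y, -, rfl⟩
    exact ⟨⁅x, y⁆, lie_mem_above_two x y, (lie_nsmul x y k).symm⟩

omit [FactorialInvertible R c] in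
theorem nsmul_map_eq_zero {f : freeNilpotentLie R X c →ₗ⁅R⁆ L} {k : ℕ}
    (hf : ∀ x, k • f (of R c x) = 0) (u : freeNilpotentLie R X c) : k • f u = 0 := by
  suffices k • (f : freeNilpotentLie R X c →ₗ[R] L) = 0 from LinearMap.congr_fun this u
  refine LinearMap.ext_on_range span_range_bracketEval_of fun m ↦ ?_
  change k • f (bracketEval (of R c) m) = 0
  induction m with
  | ih1 x => exact hf x
  | ih2 a b iha _ =>
    change k • f ⁅_, _⁆ = 0
    rw [LieHom.map_lie, ← nsmul_lie, iha, zero_lie]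

end freeNilpotentLie

namespace FreeExpGroup

open freeNilpotentLie

variable {N : ℕ} {X : Type*} {c : ℕ} [FactorialInvertible (ZMod N) c]

/-- Modulo `k` times the elements of degree at least two, both `(exp u) ^ k * (exp v) ^ k` and
`(exp u * exp v) ^ k` are the exponential of `k • (u + v)`. -/
theorem exists_pow_mul_pow_eq (g h : FreeExpGroup N X c) (k : ℕ) :
    ∃ z ∈ commutator (FreeExpGroup N X c), g ^ k * h ^ k = (g * h) ^ k * z ^ k := by
  obtain ⟨u, rfl⟩ := exp.surjective g
  obtain ⟨v, rfl⟩ := exp.surjective h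
  let I := nsmulIdeal (ZMod N) X c k
  let q := lieQuotientMk I
  have hI {x} : q x = 0 ↔ ∃ y ∈ above 2, k • y = x := LieSubmodule.Quotient.mk_eq_zero (N := I)
  have hsum : q (k • isAdapted.bch u v) = k • q u + k • q v := by
    have hzero := hI.2 ⟨_, mem_above_of_coe_mem_raising (isAdapted.bch_sub_add_mem u v), rfl⟩
    rwa [smul_sub, map_sub, sub_eq_zero, smul_add, map_add, map_nsmul q k u, map_nsmul q k v]
      at hzero
  have hprod : q (isAdapted.bch (k • u) (k • v)) = k • q u + k • q v := by
    rw [map_bch_eq_add q, map_nsmul q k u, map_nsmul q k v]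
    rw [← LieHom.map_lie, hI]
    exact ⟨⁅u, k • v⁆, lie_mem_above_two u _, (nsmul_lie u _ k).symm⟩
  have hdiff : q (isAdapted.bch (-(k • isAdapted.bch u v))
      (isAdapted.bch (k • u) (k • v))) = 0 := by
    rw [map_bch_eq_add q, map_neg q, hsum, hprod, neg_add_cancel]
    rw [map_neg q, hsum, hprod, neg_lie, lie_self, neg_zero]
  obtain ⟨y, hy, hky⟩ := hI.1 hdiff
  refine ⟨exp y, exp_mem_commutator (coe_mem_raising_of_mem_above hy), ?_⟩
  rw [← exp_nsmul _ y, hky, exp_bch, exp_neg, exp_nsmul, exp_bch, exp_bch, exp_nsmul, exp_nsmul,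
    mul_inv_cancel_left]

end FreeExpGroup

end Bch

section Lazard

open EulerFiltration EulerFiltration.IsAdapted freeNilpotentLie

variable (N c : ℕ) [FactorialInvertible (ZMod N) c]

/-- A bijection from a Lie algebra onto a group is a Lazard correspondence if it turns the
Baker-Campbell-Hausdorff series into the product of the group. The series is evaluated at `x` and
`y` by a homomorphism out of the free nilpotent Lie algebra. -/
def IsLazard {L G : Type*} [LieRing L] [LieAlgebra (ZMod N) L] [Group G] (θ : L ≃ G) : Prop :=
  ∀ f : freeNilpotentLie (ZMod N) Bool c →ₗ⁅ZMod N⁆ L,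
    θ (f (bchPoly (ZMod N) c)) = θ (f (of _ c false)) * θ (f (of _ c true))

variable {N c} {L L' G G' X : Type*} [LieRing L] [LieAlgebra (ZMod N) L] [LieRing L']
  [LieAlgebra (ZMod N) L'] [Group G] [Group G']

namespace IsLazard

variable {θ : L ≃ G} {θ' : L' ≃ G}

section

variable (hθ : IsLazard N c θ)
include hθ

theorem map_bch (f : freeNilpotentLie (ZMod N) X c →ₗ⁅ZMod N⁆ L)
    (u v : freeNilpotentLie (ZMod N) X c) :
    θ (f (isAdapted.bch u v)) = θ (f u) * θ (f v) := by
  simpa [subst_bchPoly] using hθ (f.comp (subst lowerCentralSeries_eq_bot u v))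

/-- The homomorphism of groups induced by a homomorphism out of the free nilpotent Lie algebra. -/
noncomputable def expHom (f : freeNilpotentLie (ZMod N) X c →ₗ⁅ZMod N⁆ L) :
    FreeExpGroup N X c →* G :=
  MonoidHom.mk' (fun g ↦ θ (f (FreeExpGroup.exp.symm g))) fun g h ↦ by
    rw [← hθ.map_bch, bch, Equiv.apply_symm_apply, Equiv.apply_symm_apply]

theorem expHom_exp (f : freeNilpotentLie (ZMod N) X c →ₗ⁅ZMod N⁆ L)
    (u : freeNilpotentLie (ZMod N) X c) : hθ.expHom f (FreeExpGroup.exp u) = θ (f u) :=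
  congrArg (fun u ↦ θ (f u)) (FreeExpGroup.exp.symm_apply_apply u)

theorem expHom_of (f : freeNilpotentLie (ZMod N) X c →ₗ⁅ZMod N⁆ L) (x : X) :
    hθ.expHom f (FreeExpGroup.of N c x) = θ (f (of _ c x)) :=
  hθ.expHom_exp f _

theorem map_zero : θ 0 = 1 := by
  have hexp := hθ.expHom_exp (X := Empty) 0 0
  rw [exp_zero, map_one] at hexp
  exact hexp.symm

theorem symm_trans (e : L ≃ₗ⁅ZMod N⁆ L') : IsLazard N c (e.toLinearEquiv.symm.toEquiv.trans θ) :=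
  fun f ↦ hθ (e.symm.toLieHom.comp f)

end

section

variable (hL : LieModule.lowerCentralSeries (ZMod N) L L c = ⊥)
include hL

theorem map_nsmul (hθ : IsLazard N c θ) (k : ℕ) (x : L) : θ (k • x) = θ x ^ k := by
  let f := lift hL fun _ : Unit ↦ x
  have hf : f (of _ c ()) = x := lift_of hL _ _
  have hexp := hθ.expHom_exp f (k • of _ c ())
  rwa [exp_nsmul, map_pow, hθ.expHom_exp, _root_.map_nsmul f k, hf, eq_comm] at hexp

theorem apply_mul (hθ : IsLazard N c θ) (x y : L) :
    θ (subst hL x y (bchPoly _ c)) = θ x * θ y := by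
  simpa using hθ (subst hL x y)

theorem mul_pow_eq_one (hθ : IsLazard N c θ) {k : ℕ} {g h : G} (hg : g ^ k = 1) (hh : h ^ k = 1) :
    (g * h) ^ k = 1 := by
  obtain ⟨x, rfl⟩ := θ.surjective g
  obtain ⟨y, rfl⟩ := θ.surjective h
  rw [← hθ.map_nsmul hL, ← hθ.map_zero, θ.injective.eq_iff] at hg hh
  rw [← hθ.apply_mul hL, ← hθ.map_nsmul hL, ← hθ.map_zero, θ.injective.eq_iff]
  exact nsmul_map_eq_zero (by simp [hg, hh]) _

/-- Two groups in Lazard correspondence with the same Lie algebra are isomorphic. -/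
noncomputable def mulEquiv {θ' : L ≃ G'} (hθ : IsLazard N c θ) (hθ' : IsLazard N c θ') : G ≃* G' :=
  MulEquiv.mk' (θ.symm.trans θ') fun g h ↦ by
    obtain ⟨x, rfl⟩ := θ.surjective g
    obtain ⟨y, rfl⟩ := θ.surjective h
    simp [← hθ.apply_mul hL, ← hθ'.apply_mul hL]

theorem symm_comp_subst (hθ : IsLazard N c θ) {θ' : L' ≃ G}
    (hL' : LieModule.lowerCentralSeries (ZMod N) L' L' c = ⊥) (hθ' : IsLazard N c θ') (x y : L)
    (u : freeNilpotentLie (ZMod N) Bool c) :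
    θ'.symm (θ (subst hL x y u)) = subst hL' (θ'.symm (θ x)) (θ'.symm (θ y)) u := by
  have hhom : hθ.expHom (subst hL x y) =
      hθ'.expHom (subst hL' (θ'.symm (θ x)) (θ'.symm (θ y))) := by
    refine FreeExpGroup.hom_ext fun b ↦ ?_
    cases b <;> simp [expHom_of]
  rw [Equiv.symm_apply_eq, ← expHom_exp hθ, hhom, expHom_exp]

/-- Two Lie algebras in Lazard correspondence with the same group are isomorphic. -/
noncomputable def lieEquiv (hθ : IsLazard N c θ) {θ' : L' ≃ G}
    (hL' : LieModule.lowerCentralSeries (ZMod N) L' L' c = ⊥) (hθ' : IsLazard N c θ') :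
    L ≃ₗ⁅ZMod N⁆ L' where
  __ := θ.trans θ'.symm
  map_add' x y := by
    have hadd := hθ.symm_comp_subst hL hL' hθ' x y (of _ c false + of _ c true)
    rwa [map_add (subst hL _ _), map_add (subst hL' _ _), subst_of_false, subst_of_true,
      subst_of_false, subst_of_true] at hadd
  map_smul' a x := by
    have hsmul := hθ.symm_comp_subst hL hL' hθ' x x (a • of _ c false)
    rwa [map_smul (subst hL _ _), map_smul (subst hL' _ _), subst_of_false, subst_of_false] at hsmul
  map_lie' {x y} := by
    have hlie := hθ.symm_comp_subst hL hL' hθ' x y ⁅of (ZMod N) c false, of _ c true⁆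
    rwa [LieHom.map_lie, LieHom.map_lie, subst_of_false, subst_of_true, subst_of_false,
      subst_of_true] at hlie

end

theorem isRegularPGroup {L G : Type} [LieRing L] [LieAlgebra (ZMod N) L] [Group G] {θ : L ≃ G}
    (hL : LieModule.lowerCentralSeries (ZMod N) L L c = ⊥) (hθ : IsLazard N c θ) (p : ℕ) :
    IsRegularPGroup p G := by
  intro g h
  let f : FreeExpGroup N Bool c →* G := hθ.expHom (subst hL (θ.symm g) (θ.symm h))
  have hfg : f (FreeExpGroup.of N c false) = g := by simp [f, expHom_of]
  have hfh : f (FreeExpGroup.of N c true) = h := by simp [f, expHom_of]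
  have hrange : (⊤ : Subgroup (FreeExpGroup N Bool c)).map f ≤ Subgroup.closure {g, h} := by
    rw [← FreeExpGroup.closure_range_of, MonoidHom.map_closure, Subgroup.closure_le]
    rintro _ ⟨_, ⟨b, rfl⟩, rfl⟩
    cases b
    · exact Subgroup.subset_closure (.inl hfg)
    · exact Subgroup.subset_closure (.inr hfh)
  obtain ⟨z, hz, hpow⟩ :=
    FreeExpGroup.exists_pow_mul_pow_eq (FreeExpGroup.of N c false) (FreeExpGroup.of N c true) p
  refine ⟨f z ^ p, Subgroup.subset_closure ⟨f z, ?_, rfl⟩, ?_⟩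
  · refine Subgroup.commutator_mono hrange hrange ?_
    rw [← Subgroup.map_commutator]
    exact Subgroup.mem_map_of_mem f hz
  · simpa [hfg, hfh] using congrArg f hpow

end IsLazard

end Lazard

section LazardExistence

open EulerFiltration EulerFiltration.IsAdapted freeNilpotentLie

variable {N c : ℕ} [FactorialInvertible (ZMod N) c]

theorem lieQuotientMk_surjective {R L : Type*} [CommRing R] [LieRing L] [LieAlgebra R L]
    {I : LieIdeal R L} : Function.Surjective (lieQuotientMk I) :=
  Submodule.Quotient.mk_surjective _

theorem lowerCentralSeries_eq_bot_of_surjective {R L L' : Type*} [CommRing R] [LieRing L]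
    [LieAlgebra R L] [LieRing L'] [LieAlgebra R L'] {f : L →ₗ⁅R⁆ L'} (hf : Function.Surjective f)
    {n : ℕ} (hL : LieModule.lowerCentralSeries R L L n = ⊥) :
    LieModule.lowerCentralSeries R L' L' n = ⊥ := by
  rw [← LieSubmodule.toSubmodule_inj,
    ← hf.lieModule_lcs_map_eq (g := f) (fun x y ↦ (f.map_lie x y).symm) hf, hL]
  simp

namespace FreeExpGroup

theorem isLazard_exp {X : Type*} :
    IsLazard N c (exp : freeNilpotentLie (ZMod N) X c ≃ FreeExpGroup N X c) := fun f ↦ by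
  rw [bchPoly, freeNilpotentLie.map_bch isAdapted, exp_bch]

section Kernel

variable {X G : Type*} [Group G] (Λ : FreeExpGroup N X c →* G)

theorem map_exp_subst_congr {u u' v v' : freeNilpotentLie (ZMod N) X c}
    (hu : Λ (exp u) = Λ (exp u')) (hv : Λ (exp v) = Λ (exp v'))
    (w : freeNilpotentLie (ZMod N) Bool c) :
    Λ (exp (subst lowerCentralSeries_eq_bot u v w)) =
      Λ (exp (subst lowerCentralSeries_eq_bot u' v' w)) := by
  have hhom : Λ.comp (isLazard_exp.expHom (subst lowerCentralSeries_eq_bot u v)) =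
      Λ.comp (isLazard_exp.expHom (subst lowerCentralSeries_eq_bot u' v')) := by
    refine hom_ext fun b ↦ ?_
    cases b <;> simpa [IsLazard.expHom_of]
  simpa [IsLazard.expHom_exp] using DFunLike.congr_fun hhom (exp w)

theorem map_exp_add_congr {u u' v v' : freeNilpotentLie (ZMod N) X c}
    (hu : Λ (exp u) = Λ (exp u')) (hv : Λ (exp v) = Λ (exp v')) :
    Λ (exp (u + v)) = Λ (exp (u' + v')) := by
  have hadd := map_exp_subst_congr Λ hu hv
    (freeNilpotentLie.of _ c false + freeNilpotentLie.of _ c true)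
  rwa [map_add (subst _ u v), map_add (subst _ u' v'), subst_of_false, subst_of_true,
    subst_of_false, subst_of_true] at hadd

theorem map_exp_smul_congr {u u' : freeNilpotentLie (ZMod N) X c} (hu : Λ (exp u) = Λ (exp u'))
    (a : ZMod N) : Λ (exp (a • u)) = Λ (exp (a • u')) := by
  have hsmul := map_exp_subst_congr Λ hu hu (a • freeNilpotentLie.of _ c false)
  rwa [map_smul (subst _ u u), map_smul (subst _ u' u'), subst_of_false, subst_of_false] at hsmul

theorem map_exp_lie_congr {u u' v v' : freeNilpotentLie (ZMod N) X c}
    (hu : Λ (exp u) = Λ (exp u')) (hv : Λ (exp v) = Λ (exp v')) :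
    Λ (exp ⁅u, v⁆) = Λ (exp ⁅u', v'⁆) := by
  have hlie := map_exp_subst_congr Λ hu hv
    ⁅freeNilpotentLie.of (ZMod N) c false, freeNilpotentLie.of _ c true⁆
  rwa [LieHom.map_lie, LieHom.map_lie, subst_of_false, subst_of_true, subst_of_false,
    subst_of_true] at hlie

/-- The Lie ideal formed by the logarithms of the elements of the kernel. -/
noncomputable def kerIdeal : LieIdeal (ZMod N) (freeNilpotentLie (ZMod N) X c) where
  carrier := {u | Λ (exp u) = Λ (exp 0)}
  zero_mem' := rfl
  add_mem' hu hv := (map_exp_add_congr Λ hu hv).trans (by rw [add_zero])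
  smul_mem' a u hu := (map_exp_smul_congr Λ hu a).trans (by rw [smul_zero])
  lie_mem hu := (map_exp_lie_congr Λ rfl hu).trans (by rw [lie_zero])

theorem mk_kerIdeal_eq_iff {u v : freeNilpotentLie (ZMod N) X c} :
    lieQuotientMk (kerIdeal Λ) u = lieQuotientMk (kerIdeal Λ) v ↔ Λ (exp u) = Λ (exp v) := by
  refine (Submodule.Quotient.eq _).trans ⟨fun huv ↦ ?_, fun huv ↦ ?_⟩
  · simpa using map_exp_add_congr Λ huv (rfl : Λ (exp v) = _)
  · change Λ (exp (u - v)) = Λ (exp 0)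
    simpa [sub_eq_add_neg] using map_exp_add_congr Λ huv (rfl : Λ (exp (-v)) = _)

variable {Λ} (hΛ : Function.Surjective Λ)
include hΛ

theorem bijective_lift_kerIdeal : Function.Bijective
    (Quotient.lift (fun u ↦ Λ (exp u)) fun _ _ huv ↦
      (mk_kerIdeal_eq_iff Λ).1 (Quotient.sound huv) :
      freeNilpotentLie (ZMod N) X c ⧸ kerIdeal Λ → G) := by
  refine ⟨?_, Quotient.lift_surjective _ _ (hΛ.comp exp.surjective)⟩
  rintro ⟨u⟩ ⟨v⟩ huv
  exact (mk_kerIdeal_eq_iff Λ).2 huv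

/-- The bijection onto `G` which the exponential induces on the quotient by `kerIdeal Λ`. -/
noncomputable def quotientKerIdealEquiv : freeNilpotentLie (ZMod N) X c ⧸ kerIdeal Λ ≃ G :=
  .ofBijective _ (bijective_lift_kerIdeal hΛ)

theorem isLazard_quotientKerIdealEquiv : IsLazard N c (quotientKerIdealEquiv hΛ) := by
  intro f
  obtain ⟨u, hu⟩ := lieQuotientMk_surjective (f (freeNilpotentLie.of _ c false))
  obtain ⟨v, hv⟩ := lieQuotientMk_surjective (f (freeNilpotentLie.of _ c true))
  have hf : f = (lieQuotientMk (kerIdeal Λ)).comp (subst lowerCentralSeries_eq_bot u v) := by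
    refine freeNilpotentLie.hom_ext fun b ↦ ?_
    cases b <;> simp [hu, hv]
  rw [← hu, ← hv, hf, LieHom.comp_apply, subst_bchPoly]
  change Λ (exp (isAdapted.bch u v)) = Λ (exp u) * Λ (exp v)
  rw [exp_bch, map_mul]

end Kernel

end FreeExpGroup

/-- The Lie ring `L` and the group `G` are related by a Lazard correspondence for the coefficients
`ZMod N` and the class `c`. -/
def LazardCorrespondent (N c : ℕ) [FactorialInvertible (ZMod N) c] (L G : Type*) [LieRing L]
    [Group G] : Prop :=
  ∃ _ : LieAlgebra (ZMod N) L, LieModule.lowerCentralSeries (ZMod N) L L c = ⊥ ∧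
    ∃ θ : L ≃ G, IsLazard N c θ

theorem exists_lieRing_lazardCorrespondent {G : Type*} [Group G] (hpow : ∀ g : G, g ^ N = 1)
    (hc : gammaSeries G (c + 1) = ⊥) : ∃ _ : LieRing G, LazardCorrespondent N c G G := by
  let Λ : FreeExpGroup N G c →* G := FreeExpGroup.lift hpow hc id
  have hΛ : Function.Surjective Λ := fun g ↦ ⟨_, FreeExpGroup.lift_of hpow hc id g⟩
  let θ := FreeExpGroup.quotientKerIdealEquiv hΛ
  let e := θ.symm.lieEquiv (ZMod N)
  let := θ.symm.lieRing
  let := θ.symm.lieAlgebra (ZMod N)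
  have hL : LieModule.lowerCentralSeries (ZMod N) G G c = ⊥ :=
    lowerCentralSeries_eq_bot_of_surjective (f := e.symm.toLieHom.comp (lieQuotientMk _))
      (e.symm.surjective.comp lieQuotientMk_surjective) freeNilpotentLie.lowerCentralSeries_eq_bot
  exact ⟨_, _, hL, _, (FreeExpGroup.isLazard_quotientKerIdealEquiv hΛ).symm_trans e.symm⟩

section BchGroup

variable {L : Type*} [LieRing L] [LieAlgebra (ZMod N) L]
  (hL : LieModule.lowerCentralSeries (ZMod N) L L c = ⊥)

theorem map_bch_eq_subst {X : Type*} (f : freeNilpotentLie (ZMod N) X c →ₗ⁅ZMod N⁆ L)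
    (u v : freeNilpotentLie (ZMod N) X c) :
    f (isAdapted.bch u v) = subst hL (f u) (f v) (bchPoly _ c) := by
  rw [← subst_bchPoly, ← LieHom.comp_apply]
  congr 1
  refine freeNilpotentLie.hom_ext fun b ↦ ?_
  cases b <;> simp

/-- The group structure defined on `L` by the Baker-Campbell-Hausdorff series. The group axioms
hold in the free nilpotent Lie algebra on the elements of `L`, which maps onto `L`. -/
noncomputable abbrev bchGroup : Group L :=
  letI : Mul L := ⟨fun x y ↦ subst hL x y (bchPoly _ c)⟩
  letI : One L := ⟨0⟩
  letI : Inv L := ⟨Neg.neg⟩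
  let q : freeNilpotentLie (ZMod N) L c →ₗ⁅ZMod N⁆ L := lift hL id
  have hq (x : L) : q (of _ c x) = x := lift_of hL id x
  have hmul (u v : freeNilpotentLie (ZMod N) L c) : q u * q v = q (isAdapted.bch u v) :=
    (map_bch_eq_subst hL q u v).symm
  have hone : (1 : L) = q 0 := (map_zero q).symm
  have hinv (u : freeNilpotentLie (ZMod N) L c) : (q u)⁻¹ = q (-u) := (map_neg q u).symm
  Group.ofLeftAxioms
    (fun x y z ↦ by rw [← hq x, ← hq y, ← hq z, hmul, hmul, hmul, hmul, bch_assoc])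
    (fun x ↦ by rw [← hq x, hone, hmul, bch_zero_left])
    (fun x ↦ by rw [← hq x, hone, hinv, hmul, bch_neg_left])

theorem lazardCorrespondent_bchGroup : letI := bchGroup hL; LazardCorrespondent N c L L :=
  letI := bchGroup hL
  ⟨_, hL, Equiv.refl L, fun f ↦ map_bch_eq_subst hL f _ _⟩

end BchGroup

end LazardExistence

section TypeInvariants

theorem coe_omegaSubgroup {p : ℕ} {G : Type} [Group G] {i : ℕ}
    (hmul : ∀ g h : G, g ^ p ^ i = 1 → h ^ p ^ i = 1 → (g * h) ^ p ^ i = 1) :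
    (OmegaSubgroup p G i : Set G) = {g | g ^ p ^ i = 1} := by
  let H : Subgroup G :=
    { carrier := {g | g ^ p ^ i = 1}
      mul_mem' := hmul _ _
      one_mem' := one_pow _
      inv_mem' := fun {g} hg ↦ (inv_pow g _).trans (inv_eq_one.2 hg) }
  exact congrArg SetLike.coe H.closure_eq

theorem coe_aOmega (p : ℕ) (A : Type) [AddCommGroup A] (i : ℕ) :
    (aOmega p A i : Set A) = {x | p ^ i • x = 0} :=
  congrArg SetLike.coe (nsmulAddMonoidHom (α := A) (p ^ i)).ker.closure_eq

theorem omegaInv_eq_factorization_div {p : ℕ} {G : Type} [Group G] [Finite G] (i : ℕ) :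
    omegaInv p G i = (Nat.card (OmegaSubgroup p G i) /
      Nat.card (OmegaSubgroup p G (i - 1))).factorization p := by
  have hle : OmegaSubgroup p G (i - 1) ≤ OmegaSubgroup p G i :=
    Subgroup.closure_mono fun g hg ↦ orderOf_dvd_iff_pow_eq_one.1 <|
      (orderOf_dvd_iff_pow_eq_one.2 hg).trans (pow_dvd_pow p (Nat.sub_le i 1))
  have hcard := Subgroup.relIndex_mul_relIndex ⊥ _ _ bot_le hle
  rw [Subgroup.relIndex_bot_left, Subgroup.relIndex_bot_left] at hcard
  rw [omegaInv, ← hcard, Nat.mul_div_cancel_left _ Nat.card_pos]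

theorem aOmegaInv_eq_factorization_div {p : ℕ} {A : Type} [AddCommGroup A] [Finite A] (i : ℕ) :
    aOmegaInv p A i = (Nat.card (aOmega p A i) /
      Nat.card (aOmega p A (i - 1))).factorization p := by
  have hle : aOmega p A (i - 1) ≤ aOmega p A i :=
    AddSubgroup.closure_mono fun x hx ↦ addOrderOf_dvd_iff_nsmul_eq_zero.1 <|
      (addOrderOf_dvd_iff_nsmul_eq_zero.2 hx).trans (pow_dvd_pow p (Nat.sub_le i 1))
  have hcard := AddSubgroup.relIndex_mul_relIndex ⊥ _ _ bot_le hle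
  rw [AddSubgroup.relIndex_bot_left, AddSubgroup.relIndex_bot_left] at hcard
  rw [aOmegaInv, ← hcard, Nat.mul_div_cancel_left _ Nat.card_pos]

end TypeInvariants

theorem coe_lieLCS (R : Type*) {L : Type} [CommRing R] [LieRing L] [LieAlgebra R L] (k : ℕ) :
    (lieLCS L k : Set L) = LieModule.lowerCentralSeries R L L k := by
  rw [LieModule.coe_lowerCentralSeries_eq_int]
  induction k with
  | zero => rfl
  | succ k ih =>
    rw [LieModule.lowerCentralSeries_succ, ← LieSubmodule.coe_toSubmodule,
      LieSubmodule.lieIdeal_oper_eq_linear_span', ← Submodule.coe_toAddSubgroup,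
      Submodule.span_int_eq_addSubgroupClosure, ← AddSubgroup.closure_neg]
    refine congrArg (fun s : Set L ↦ (AddSubgroup.closure s : Set L)) (Set.ext fun x ↦ ?_)
    have hmem (y : L) : y ∈ lieLCS L k ↔ y ∈ LieModule.lowerCentralSeries ℤ L L k :=
      Set.ext_iff.1 ih y
    constructor
    · rintro ⟨y, hy, z, rfl⟩
      exact ⟨z, trivial, y, (hmem y).1 hy, (lie_skew z y).symm ▸ rfl⟩
    · rintro ⟨z, -, y, hy, hzy⟩
      exact ⟨y, (hmem y).2 hy, z, by rw [← lie_skew, hzy, neg_neg]⟩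

theorem isNilpotentLieRing_and_lieNilClass_lt_iff {p : ℕ} (hp : p ≠ 0) {L : Type} [LieRing L] :
    IsNilpotentLieRing L ∧ lieNilClass L < p ↔ lieLCS L (p - 1) = ⊥ := by
  refine ⟨fun ⟨hnil, hlt⟩ ↦ ?_, fun h ↦ ⟨⟨_, h⟩, ?_⟩⟩
  · have hbot : lieLCS L (lieNilClass L) = ⊥ := Nat.sInf_mem (s := {c | lieLCS L c = ⊥}) hnil
    have hanti := LieModule.antitone_lowerCentralSeries ℤ L L (Nat.le_sub_one_of_lt hlt)
    rw [← SetLike.coe_subset_coe, ← coe_lieLCS, ← coe_lieLCS, hbot] at hanti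
    exact le_bot_iff.1 hanti
  · have hle : lieNilClass L ≤ p - 1 := Nat.sInf_le h
    omega

namespace LazardCorrespondent

variable {N c : ℕ} [FactorialInvertible (ZMod N) c]

section HasType

variable {L G : Type} [LieRing L] [Group G]

theorem isRegularPGroup (h : LazardCorrespondent N c L G) (p : ℕ) : IsRegularPGroup p G := by
  obtain ⟨_, hL, θ, hθ⟩ := h
  exact hθ.isRegularPGroup hL p

theorem lieLCS_eq_bot (h : LazardCorrespondent N c L G) : lieLCS L c = ⊥ := by
  obtain ⟨_, hL, -⟩ := h
  rw [← SetLike.coe_set_eq, coe_lieLCS (ZMod N), hL]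
  rfl

theorem card_omegaSubgroup (h : LazardCorrespondent N c L G) (p i : ℕ) :
    Nat.card (OmegaSubgroup p G i) = Nat.card (aOmega p L i) := by
  obtain ⟨_, hL, θ, hθ⟩ := h
  have hpow (x : L) : p ^ i • x = 0 ↔ θ x ^ p ^ i = 1 := by
    rw [← hθ.map_nsmul hL, ← hθ.map_zero, θ.injective.eq_iff]
  have hΩ := coe_omegaSubgroup fun g g' : G ↦ hθ.mul_pow_eq_one hL (k := p ^ i)
  refine (Nat.card_congr (θ.subtypeEquiv fun x ↦ ?_)).symm
  rw [← SetLike.mem_coe, ← SetLike.mem_coe, hΩ, coe_aOmega]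
  exact hpow x

theorem hasTypeInvariants_iff [Finite L] (h : LazardCorrespondent N c L G) (p : ℕ) (l : List ℕ) :
    HasTypeInvariants p G l ↔ aHasType p L l := by
  have : Finite G := by
    obtain ⟨_, -, θ, -⟩ := h
    exact .of_equiv L θ
  simp only [HasTypeInvariants, aHasType, muInv, aMuInv, omegaInv_eq_factorization_div,
    aOmegaInv_eq_factorization_div, h.card_omegaSubgroup]

end HasType

variable {L L' G G' : Type*} [LieRing L] [LieRing L'] [Group G] [Group G']

theorem nonempty_mulEquiv_iff (h : LazardCorrespondent N c L G)
    (h' : LazardCorrespondent N c L' G') :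
    Nonempty (G ≃* G') ↔ ∃ e : L ≃+ L', ∀ x y, e ⁅x, y⁆ = ⁅e x, e y⁆ := by
  obtain ⟨_, hL, θ, hθ⟩ := h
  obtain ⟨_, hL', θ', hθ'⟩ := h'
  constructor
  · rintro ⟨σ⟩
    have hσ : IsLazard N c (θ.trans σ.toEquiv) := fun f ↦ by simp [hθ f]
    let e := hσ.lieEquiv hL hL' hθ'
    exact ⟨e.toLinearEquiv.toAddEquiv, e.map_lie⟩
  · rintro ⟨e, he⟩
    let e' : L ≃ₗ⁅ZMod N⁆ L' :=
      { e with
        map_smul' := ZMod.map_smul e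
        map_lie' := he _ _ }
    exact ⟨(hθ.symm_trans e').mulEquiv hL' hθ'⟩

end LazardCorrespondent

section FrattiniPGroup

variable {p : ℕ} [Fact p.Prime] {G : Type*} [Group G] [Finite G]

theorem normal_and_index_eq_of_isCoatom (hG : IsPGroup p G) {M : Subgroup G} (hM : IsCoatom M) :
    M.Normal ∧ M.index = p := by
  have := hG.isNilpotent
  have hnormal : M.Normal :=
    Subgroup.NormalizerCondition.normal_of_coatom M Group.normalizerCondition_of_isNilpotent hM
  obtain ⟨n, hn⟩ := IsPGroup.iff_card.1 (hG.to_subgroup M)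
  obtain ⟨m, hm⟩ := hG.index M
  have hm0 : m ≠ 0 := by
    rintro rfl
    exact hM.1 (Subgroup.index_eq_one.1 (hm.trans (pow_zero p)))
  have hcard : Nat.card G = p ^ n * p ^ m := by rw [← M.card_mul_index, hn, hm]
  obtain ⟨K, hK, hMK⟩ := Sylow.exists_subgroup_card_pow_succ (p := p) (n := n)
    (hcard ▸ pow_add p n m ▸ Nat.pow_dvd_pow p (by lia)) hn
  have hlt : M < K := lt_of_le_of_ne hMK fun h ↦ by
    rw [h, hK] at hn
    exact (Nat.lt_succ_self n).ne' (Nat.pow_right_injective (Fact.out : p.Prime).two_le hn)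
  rw [hM.lt_iff.1 hlt, Subgroup.card_top, hcard, pow_succ] at hK
  exact ⟨hnormal, hm.trans (Nat.eq_of_mul_eq_mul_left (pow_pos (Fact.out : p.Prime).pos n) hK)⟩

theorem commutator_le_frattini (hG : IsPGroup p G) : commutator G ≤ frattini G := by
  refine le_iInf₂ fun M hM ↦ ?_
  obtain ⟨_, hindex⟩ := normal_and_index_eq_of_isCoatom hG hM
  have : IsCyclic (G ⧸ M) := isCyclic_of_prime_card (M.index_eq_card.symm.trans hindex)
  exact Subgroup.Normal.quotient_commutative_iff_commutator_le.1 IsCyclic.isMulCommutative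

theorem pow_mem_frattini (hG : IsPGroup p G) (g : G) : g ^ p ∈ frattini G := by
  refine Subgroup.mem_iInf.2 fun M ↦ Subgroup.mem_iInf.2 fun hM ↦ ?_
  obtain ⟨_, hindex⟩ := normal_and_index_eq_of_isCoatom hG hM
  exact hindex ▸ M.pow_index_mem g

theorem zpowers_sup_commutator_ne_top (hG : IsPGroup p G) (hcomm : ¬ IsMulCommutative G) (g : G) :
    Subgroup.zpowers g ⊔ commutator G ≠ ⊤ := by
  intro htop
  have hzpowers : Subgroup.zpowers g = ⊤ := frattini_nongenerating
    (top_le_iff.1 (htop ▸ sup_le_sup_left (commutator_le_frattini hG) _))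
  have : IsCyclic G := isCyclic_iff_exists_zpowers_eq_top.2 ⟨g, hzpowers⟩
  exact hcomm IsCyclic.isMulCommutative

theorem commutator_le_of_isCyclic_quotient {N : Subgroup G} [N.Normal]
    [IsCyclic (G ⧸ (frattini G ⊔ N))] : commutator G ≤ N := by
  obtain ⟨q, hq⟩ := IsCyclic.exists_generator (α := G ⧸ (frattini G ⊔ N))
  obtain ⟨x, rfl⟩ := QuotientGroup.mk_surjective q
  have htop : N ⊔ Subgroup.zpowers x = ⊤ := by
    refine frattini_nongenerating (top_le_iff.1 fun g _ ↦ ?_)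
    obtain ⟨i, hi⟩ := hq g
    have hmem : (x ^ i)⁻¹ * g ∈ frattini G ⊔ N := QuotientGroup.eq.1 hi
    rw [← mul_inv_cancel_left (x ^ i) g]
    refine mul_mem ?_ ((sup_comm (frattini G) N).le.trans (sup_le_sup_right le_sup_left _) hmem)
    exact (le_sup_right.trans le_sup_left : Subgroup.zpowers x ≤ _ ⊔ frattini G)
      (Subgroup.zpow_mem_zpowers x i)
  exact Subgroup.Normal.commutator_le_of_self_sup_commutative_eq_top htop inferInstance

theorem isCyclic_of_isPGroup_of_card_le (hG : IsPGroup p G) (h : Nat.card G ≤ p) :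
    IsCyclic G := by
  obtain ⟨n, hn⟩ := IsPGroup.iff_card.1 hG
  have hn1 : n ≤ 1 := by
    rw [hn] at h
    exact (Nat.pow_le_pow_iff_right (Fact.out : p.Prime).one_lt).1 (h.trans_eq (pow_one p).symm)
  exact isCyclic_of_card_dvd_prime (hn ▸ (Nat.pow_dvd_pow p hn1).trans (pow_one p).dvd)

omit [Finite G] in
theorem commutator_le_of_closure_pair_eq_top {x y : G} (hxy : Subgroup.closure {x, y} = ⊤)
    {N : Subgroup G} [N.Normal] (h : ⁅x, y⁆ ∈ N) : commutator G ≤ N := by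
  have hcomm : Commute (x : G ⧸ N) y :=
    commutatorElement_eq_one_iff_commute.1 ((QuotientGroup.eq_one_iff ⁅x, y⁆).2 h)
  have hclosure : Subgroup.closure {(x : G ⧸ N), (y : G ⧸ N)} = ⊤ := by
    have hmap := congrArg (Subgroup.map (QuotientGroup.mk' N)) hxy
    rwa [MonoidHom.map_closure, Set.image_pair,
      Subgroup.map_top_of_surjective _ (QuotientGroup.mk'_surjective N)] at hmap
  have : IsMulCommutative (Subgroup.closure {(x : G ⧸ N), (y : G ⧸ N)}) := by
    refine Subgroup.isMulCommutative_closure ?_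
    rintro _ (rfl | rfl) _ (rfl | rfl)
    exacts [rfl, hcomm, hcomm.symm, rfl]
  rw [hclosure] at this
  refine Subgroup.Normal.quotient_commutative_iff_commutator_le.1 ⟨⟨fun a b ↦ ?_⟩⟩
  exact congrArg Subtype.val (mul_comm' (⟨a, trivial⟩ : (⊤ : Subgroup (G ⧸ N))) ⟨b, trivial⟩)

end FrattiniPGroup

section MhoOne

variable {p : ℕ} {G : Type} [Group G]

theorem map_mhoOne {H : Type} [Group H] (f : G →* H) (K : Subgroup G) :
    (MhoOne p K).map f = MhoOne p (K.map f) := by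
  rw [MhoOne, MhoOne, MonoidHom.map_closure]
  congr 1
  ext y
  constructor
  · rintro ⟨_, ⟨x, hx, rfl⟩, rfl⟩
    exact ⟨f x, Subgroup.mem_map_of_mem f hx, map_pow _ _ _⟩
  · rintro ⟨_, ⟨x, hx, rfl⟩, rfl⟩
    exact ⟨x ^ p, ⟨x, hx, rfl⟩, map_pow _ _ _⟩

theorem pow_mem_mhoOne {K : Subgroup G} {x : G} (hx : x ∈ K) : x ^ p ∈ MhoOne p K :=
  Subgroup.subset_closure ⟨x, hx, rfl⟩

theorem mhoOne_mono {H K : Subgroup G} (h : H ≤ K) : MhoOne p H ≤ MhoOne p K :=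
  (Subgroup.closure_le _).2 fun _ ⟨_, hx, hy⟩ ↦ hy ▸ pow_mem_mhoOne (h hx)

theorem mem_mhoOne_iff_of_mul {K : Subgroup G}
    (hmul : ∀ x ∈ K, ∀ y ∈ K, ∃ w ∈ K, x ^ p * y ^ p = w ^ p) {y : G} :
    y ∈ MhoOne p K ↔ ∃ x ∈ K, y = x ^ p := by
  refine ⟨fun hy ↦ ?_, fun ⟨x, hx, hy⟩ ↦ hy ▸ pow_mem_mhoOne hx⟩
  induction hy using Subgroup.closure_induction with
  | mem _ hy => exact hy
  | one => exact ⟨1, one_mem _, (one_pow _).symm⟩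
  | mul _ _ _ _ ha hb =>
    obtain ⟨a, ha, rfl⟩ := ha
    obtain ⟨b, hb, rfl⟩ := hb
    exact hmul a ha b hb
  | inv _ _ ha =>
    obtain ⟨a, ha, rfl⟩ := ha
    exact ⟨a⁻¹, inv_mem ha, (inv_pow _ _).symm⟩

end MhoOne

namespace IsRegularPGroup

variable {p : ℕ} {G : Type} [Group G]

theorem map_mhoOne_commutator_closure_pair {H : Type} [Group H] (f : G →* H) (x y : G) :
    (MhoOne p ⁅Subgroup.closure {x, y}, Subgroup.closure {x, y}⁆).map f =
      MhoOne p ⁅Subgroup.closure {f x, f y}, Subgroup.closure {f x, f y}⁆ := by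
  rw [map_mhoOne, Subgroup.map_commutator, MonoidHom.map_closure, Set.image_pair]

theorem to_subgroup (hr : IsRegularPGroup p G) (H : Subgroup G) : IsRegularPGroup p H := by
  intro x y
  obtain ⟨z, hz, h⟩ := hr x y
  obtain ⟨z', hz', rfl⟩ := (map_mhoOne_commutator_closure_pair H.subtype x y).ge hz
  exact ⟨z', hz', Subtype.ext h⟩

theorem of_surjective (hr : IsRegularPGroup p G) {H : Type} [Group H] (f : G →* H)
    (hf : Function.Surjective f) : IsRegularPGroup p H := by
  refine hf.forall₂.2 fun x y ↦ ?_
  obtain ⟨z, hz, h⟩ := hr x y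
  refine ⟨f z, (map_mhoOne_commutator_closure_pair f x y).le (Subgroup.mem_map_of_mem f hz), ?_⟩
  rw [← map_pow, ← map_pow, ← map_mul, h, map_mul, map_pow, map_mul]

theorem exists_mul_pow_eq (hr : IsRegularPGroup p G) {H K : Subgroup G} (h : ⁅H, H⁆ ≤ K) {x y : G}
    (hx : x ∈ H) (hy : y ∈ H) : ∃ z ∈ MhoOne p K, (x * y) ^ p = x ^ p * y ^ p * z := by
  obtain ⟨z, hz, hxy⟩ := hr x y
  have hclosure : Subgroup.closure {x, y} ≤ H := (Subgroup.closure_le H).2 (Set.pair_subset hx hy)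
  refine ⟨z⁻¹, inv_mem (mhoOne_mono ((Subgroup.commutator_mono hclosure hclosure).trans h) hz), ?_⟩
  rw [hxy, mul_inv_cancel_right]

theorem induction_on_subgroups {motive : ∀ (G : Type) [Group G], Prop}
    (ind : ∀ (G : Type) [Group G] [Finite G], IsPGroup p G → IsRegularPGroup p G →
      (∀ H : Subgroup G, H ≠ ⊤ → motive H) → motive G)
    [Finite G] (hG : IsPGroup p G) (hr : IsRegularPGroup p G) : motive G := by
  induction hn : Nat.card G using Nat.strong_induction_on generalizing G with
  | _ n ih =>
    refine ind G hG hr fun H hH ↦ ih _ ?_ (hG.to_subgroup H) (hr.to_subgroup H) rfl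
    exact hn ▸ lt_of_le_of_ne H.card_le_card_group fun h ↦ hH (H.eq_top_of_card_eq h)

variable [hp : Fact p.Prime]

theorem exists_pow_mul_pow_eq_pow [Finite G] (hG : IsPGroup p G) (hr : IsRegularPGroup p G) :
    ∀ x y : G, ∃ w : G, x ^ p * y ^ p = w ^ p := by
  refine induction_on_subgroups (motive := fun G _ ↦ ∀ x y : G, ∃ w : G, x ^ p * y ^ p = w ^ p)
    (fun G _ _ hG hr ih x y ↦ ?_) hG hr
  by_cases hcomm : IsMulCommutative G
  · exact ⟨x * y, ((show Commute x y from mul_comm' x y).mul_pow p).symm⟩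
  set K := Subgroup.zpowers (x * y) ⊔ commutator G
  have hmul : ∀ a ∈ K, ∀ b ∈ K, ∃ w ∈ K, a ^ p * b ^ p = w ^ p := by
    intro a ha b hb
    obtain ⟨w, hw⟩ := ih K (zpowers_sup_commutator_ne_top hG hcomm _) ⟨a, ha⟩ ⟨b, hb⟩
    exact ⟨w, w.2, congrArg Subtype.val hw⟩
  obtain ⟨z, hz, h⟩ := hr x y
  have hzK : z ∈ MhoOne p K :=
    mhoOne_mono ((Subgroup.commutator_mono le_top le_top).trans le_sup_right) hz
  obtain ⟨c, hc, rfl⟩ := (mem_mhoOne_iff_of_mul hmul).1 hzK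
  obtain ⟨w, _, hw⟩ :=
    hmul (x * y) (le_sup_left (a := Subgroup.zpowers (x * y)) (Subgroup.mem_zpowers _)) c hc
  exact ⟨w, h.trans hw⟩

theorem mem_mhoOne_iff [Finite G] (hG : IsPGroup p G) (hr : IsRegularPGroup p G) {K : Subgroup G}
    {y : G} : y ∈ MhoOne p K ↔ ∃ x ∈ K, y = x ^ p := by
  refine mem_mhoOne_iff_of_mul fun a ha b hb ↦ ?_
  obtain ⟨w, hw⟩ :=
    exists_pow_mul_pow_eq_pow (hG.to_subgroup K) (hr.to_subgroup K) ⟨a, ha⟩ ⟨b, hb⟩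
  exact ⟨w, w.2, congrArg Subtype.val hw⟩

end IsRegularPGroup

/-- The `k`-torsion elements of `G` form a subgroup whose cosets are the fibres of `g ↦ g ^ k`.
Regular `p`-groups have this property for every `k = p ^ t`. -/
def PowEqIff (k : ℕ) (G : Type*) [Group G] : Prop :=
  ∀ a b : G, a ^ k = b ^ k ↔ (a⁻¹ * b) ^ k = 1

namespace PowEqIff

variable {k : ℕ} {G : Type*} [Group G]

theorem of_isMulCommutative (k : ℕ) [IsMulCommutative G] : PowEqIff k G := fun a b ↦ by
  rw [(show Commute a⁻¹ b from mul_comm' _ _).mul_pow, inv_pow, inv_mul_eq_one]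

/-- The subgroup of elements of order dividing `k`. -/
def torsion (h : PowEqIff k G) : Subgroup G where
  carrier := {g | g ^ k = 1}
  mul_mem' := fun {a b} ha hb ↦ by
    have hab : (a⁻¹) ^ k = b ^ k := by rw [inv_pow, ha.out, hb.out, inv_one]
    have hmul := (h a⁻¹ b).1 hab
    rwa [inv_inv] at hmul
  one_mem' := one_pow _
  inv_mem' := fun {g} hg ↦ (inv_pow g k).trans (inv_eq_one.2 hg)

instance (h : PowEqIff k G) : h.torsion.Normal where
  conj_mem := fun n hn g ↦ by
    change (g * n * g⁻¹) ^ k = 1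
    rw [conj_pow, hn.out, mul_one, mul_inv_cancel]

theorem mem_map_torsion {H : Subgroup G} (h : PowEqIff k H) {g : G} :
    g ∈ h.torsion.map H.subtype ↔ g ∈ H ∧ g ^ k = 1 := by
  constructor
  · rintro ⟨g, hg, rfl⟩
    exact ⟨g.2, congrArg Subtype.val hg⟩
  · rintro ⟨hgH, hg⟩
    exact ⟨⟨g, hgH⟩, Subtype.ext hg, rfl⟩

instance {H : Subgroup G} [hH : H.Normal] (h : PowEqIff k H) :
    (h.torsion.map H.subtype).Normal where
  conj_mem := fun n hn g ↦ by
    rw [mem_map_torsion] at hn ⊢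
    exact ⟨hH.conj_mem n hn.1 g, by rw [conj_pow, hn.2, mul_one, mul_inv_cancel]⟩

theorem commutator_pow_eq_one {H : Subgroup G} (h : PowEqIff k H) {x y : G} (hx : x ∈ H)
    (hcomm : commutator G ≤ H) (hxy : Commute (x ^ k) y) : ⁅x⁻¹, y⁆ ^ k = 1 := by
  have hconj : y * x * y⁻¹ = x * ⁅x⁻¹, y⁆ := by rw [commutatorElement_def]; group
  have hxyH : x * ⁅x⁻¹, y⁆ ∈ H := mul_mem hx
    (hcomm (Subgroup.commutator_mem_commutator (Subgroup.mem_top _) (Subgroup.mem_top _)))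
  have hpow : x ^ k = (x * ⁅x⁻¹, y⁆) ^ k := by
    rw [← hconj, conj_pow, ← hxy.eq, mul_inv_cancel_right]
  have hH := congrArg Subtype.val ((h ⟨x, hx⟩ ⟨_, hxyH⟩).1 (Subtype.ext hpow))
  change (x⁻¹ * (x * ⁅x⁻¹, y⁆)) ^ k = 1 at hH
  rwa [inv_mul_cancel_left] at hH

theorem commute_pow_of_commutator_le (h : PowEqIff k G) (hcomm : commutator G ≤ h.torsion)
    (x g : G) : Commute (x ^ k) g := by
  have hmem : ⁅x⁻¹, g⁆ ∈ h.torsion :=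
    hcomm (Subgroup.commutator_mem_commutator (Subgroup.mem_top _) (Subgroup.mem_top _))
  have hpow : x ^ k = (g * x * g⁻¹) ^ k := (h _ _).2 <| by
    rwa [show x⁻¹ * (g * x * g⁻¹) = ⁅x⁻¹, g⁆ by rw [commutatorElement_def]; group]
  rw [conj_pow, eq_mul_inv_iff_mul_eq] at hpow
  exact hpow

theorem pow_mul {m n : ℕ} (h : PowEqIff m G) (hquot : PowEqIff n (G ⧸ h.torsion)) :
    PowEqIff (m * n) G := by
  intro a b
  have hleft : (a : G ⧸ h.torsion) ^ n = (b : G ⧸ h.torsion) ^ n ↔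
      ((a ^ n)⁻¹ * b ^ n) ^ m = 1 := by
    rw [← QuotientGroup.mk_pow, ← QuotientGroup.mk_pow, QuotientGroup.eq]; rfl
  have hright : ((a : G ⧸ h.torsion)⁻¹ * b) ^ n = 1 ↔ ((a⁻¹ * b) ^ n) ^ m = 1 := by
    rw [← QuotientGroup.mk_inv, ← QuotientGroup.mk_mul, ← QuotientGroup.mk_pow,
      QuotientGroup.eq_one_iff]; rfl
  rw [pow_mul', pow_mul', pow_mul', h, ← hleft, ← hright, hquot]

end PowEqIff

namespace IsRegularPGroup

variable {p : ℕ} [hp : Fact p.Prime] {G : Type} [Group G] [Finite G]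

-- `⁅x⁻¹, y⁆` is `p`-torsion by the hypothesis on `⟨x⟩G'`, and the `p`-torsion of `G'` is a normal
-- subgroup of `G` by the hypothesis on `G'`; modulo it the generators `x`, `y` commute.
theorem mhoOne_commutator_eq_bot (hG : IsPGroup p G)
    (ih : ∀ H : Subgroup G, H ≠ ⊤ → PowEqIff p H) (hcomm : ¬ IsMulCommutative G) {x y : G}
    (hxy : Subgroup.closure {x, y} = ⊤) (h : Commute (x ^ p) y) :
    MhoOne p (commutator G) = ⊥ := by
  have hsup := zpowers_sup_commutator_ne_top hG hcomm x
  have hC : PowEqIff p (commutator G) :=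
    ih _ (ne_top_of_le_ne_top hsup le_sup_right)
  have hpow : ⁅x⁻¹, y⁆ ^ p = 1 := (ih _ hsup).commutator_pow_eq_one
    (le_sup_left (a := Subgroup.zpowers x) (Subgroup.mem_zpowers x)) le_sup_right h
  have hclosure : Subgroup.closure {x⁻¹, y} = ⊤ := by
    rw [← top_le_iff, ← hxy, Subgroup.closure_le]
    refine Set.pair_subset ?_ (Subgroup.subset_closure (by simp))
    exact inv_mem_iff.1 (Subgroup.subset_closure (Set.mem_insert _ _))
  have hle : commutator G ≤ hC.torsion.map (commutator G).subtype :=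
    commutator_le_of_closure_pair_eq_top hclosure (hC.mem_map_torsion.2
      ⟨Subgroup.commutator_mem_commutator (Subgroup.mem_top _) (Subgroup.mem_top _), hpow⟩)
  rw [← le_bot_iff, MhoOne, Subgroup.closure_le]
  rintro _ ⟨c, hc, rfl⟩
  exact (hC.mem_map_torsion.1 (hle hc)).2

omit hp [Finite G] in
theorem mul_pow_of_mhoOne_commutator_eq_bot (hr : IsRegularPGroup p G)
    (h : MhoOne p (commutator G) = ⊥) (x y : G) : (x * y) ^ p = x ^ p * y ^ p := by
  obtain ⟨z, hz, hxy⟩ := hr.exists_mul_pow_eq (H := ⊤) (K := commutator G) le_rfl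
    (Subgroup.mem_top x) (Subgroup.mem_top y)
  rw [h, Subgroup.mem_bot] at hz
  rw [hxy, hz, mul_one]

theorem powEqIff_self (hG : IsPGroup p G) (hr : IsRegularPGroup p G) : PowEqIff p G := by
  refine induction_on_subgroups (motive := fun G _ ↦ PowEqIff p G)
    (fun G _ _ hG hr ih a b ↦ ?_) hG hr
  by_cases hcomm : IsMulCommutative G
  · exact PowEqIff.of_isMulCommutative p a b
  by_cases htop : Subgroup.closure {a, b} = ⊤
  · constructor
    · intro h
      have hbot := mhoOne_commutator_eq_bot hG ih hcomm htop (h ▸ (Commute.refl b).pow_left p)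
      rw [hr.mul_pow_of_mhoOne_commutator_eq_bot hbot, inv_pow, h, inv_mul_cancel]
    · intro h
      have htop' : Subgroup.closure {a⁻¹ * b, a} = ⊤ := by
        have ha : a ∈ Subgroup.closure {a⁻¹ * b, a} := Subgroup.subset_closure (by simp)
        have hb : a⁻¹ * b ∈ Subgroup.closure {a⁻¹ * b, a} := Subgroup.subset_closure (by simp)
        have hmul := mul_mem ha hb
        rw [mul_inv_cancel_left] at hmul
        rw [← top_le_iff, ← htop, Subgroup.closure_le]
        exact Set.pair_subset ha hmul
      have hbot := mhoOne_commutator_eq_bot hG ih hcomm htop' (h ▸ Commute.one_left a)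
      have hb := hr.mul_pow_of_mhoOne_commutator_eq_bot hbot a (a⁻¹ * b)
      rw [mul_inv_cancel_left, h, mul_one] at hb
      exact hb.symm
  · have hsub := ih _ htop ⟨a, Subgroup.subset_closure (by simp)⟩
      ⟨b, Subgroup.subset_closure (by simp)⟩
    rwa [Subtype.ext_iff, Subtype.ext_iff] at hsub

theorem powEqIff (hG : IsPGroup p G) (hr : IsRegularPGroup p G) (t : ℕ) :
    PowEqIff (p ^ t) G := by
  induction t generalizing G with
  | zero => exact fun a b ↦ by simp only [pow_zero, pow_one, inv_mul_eq_one]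
  | succ t ih =>
    have hself := powEqIff_self hG hr
    exact pow_succ' p t ▸ hself.pow_mul (ih (hG.to_quotient hself.torsion)
      (hr.of_surjective (QuotientGroup.mk' hself.torsion) (QuotientGroup.mk'_surjective _)))

end IsRegularPGroup

section GammaDrop

variable {p : ℕ} {G : Type*} [Group G] {M N : Subgroup G} [N.Normal]

theorem le_of_le_commutator_top_sup [hG : Group.IsNilpotent G] (h : M ≤ ⁅M, (⊤ : Subgroup G)⁆ ⊔ N) :
    M ≤ N := by
  have hgamma : ∀ j, M ≤ gammaSeries G (j + 1) ⊔ N := by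
    intro j
    induction j with
    | zero => exact le_sup_of_le_left le_top
    | succ j ih =>
      refine h.trans (sup_le (Subgroup.commutator_le.2 fun a ha b hb ↦ ?_) le_sup_right)
      obtain ⟨c, hc, d, hd, rfl⟩ := Subgroup.mem_sup_of_normal_right.1 (ih ha)
      rw [commutatorElement_mul_left_eq_conj_mul]
      refine mul_mem (Subgroup.mem_sup_right ?_)
        (Subgroup.mem_sup_left (Subgroup.commutator_mem_commutator hc hb))
      exact Subgroup.Normal.conj_mem inferInstance _
        (Subgroup.commutator_le_left N ⊤ (Subgroup.commutator_mem_commutator hd hb)) c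
  obtain ⟨n, hn⟩ := Subgroup.nilpotent_iff_lowerCentralSeries.1 hG
  exact (hgamma n).trans (sup_le (hn.le.trans bot_le) le_rfl)

variable [hp : Fact p.Prime] [Finite G]

theorem mul_card_le_card_of_lt (hG : IsPGroup p G) {H K : Subgroup G} (h : H < K) :
    p * Nat.card H ≤ Nat.card K := by
  obtain ⟨a, ha⟩ := IsPGroup.iff_card.1 (hG.to_subgroup H)
  obtain ⟨b, hb⟩ := IsPGroup.iff_card.1 (hG.to_subgroup K)
  have hlt : Nat.card H < Nat.card K := (Subgroup.card_le_of_le h.le).lt_of_ne fun heq ↦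
    h.ne (Subgroup.eq_of_le_of_card_ge h.le heq.ge)
  rw [ha, hb, Nat.pow_lt_pow_iff_right hp.out.one_lt] at hlt
  rw [ha, hb, ← pow_succ']
  exact Nat.pow_le_pow_right hp.out.pos hlt

theorem gammaSeries_le_of_card_le (hG : IsPGroup p G) {k s : ℕ} [M.Normal] (hNM : N ≤ M)
    (hcard : Nat.card M ≤ p ^ k * Nat.card N) (hs : gammaSeries G (s + 1) ≤ M) :
    gammaSeries G (s + k + 1) ≤ N := by
  induction k generalizing M s with
  | zero =>
    rw [pow_zero, one_mul] at hcard
    exact hs.trans (Subgroup.eq_of_le_of_card_ge hNM hcard).ge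
  | succ k ih =>
    by_cases hMN : M ≤ N
    · exact (gammaSeries_antitone G (by lia)).trans (hs.trans hMN)
    have := hG.isNilpotent
    have hlt : ⁅M, (⊤ : Subgroup G)⁆ ⊔ N < M :=
      (sup_le (Subgroup.commutator_le_left M ⊤) hNM).lt_of_not_ge
        fun h ↦ hMN (le_of_le_commutator_top_sup h)
    have hcard' := (mul_card_le_card_of_lt hG hlt).trans hcard
    rw [pow_succ', mul_assoc] at hcard'
    rw [add_comm k 1, ← add_assoc s 1 k]
    exact ih le_sup_right (Nat.le_of_mul_le_mul_left hcard' hp.out.pos)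
      ((Subgroup.commutator_mono hs le_rfl).trans le_sup_left)

end GammaDrop

/-- The subgroup `℧ₜ(K)`, generated by `p`-th powers `t` times over; in a regular `p`-group it
consists of the `p ^ t`-th powers of the elements of `K`. -/
def iteratedMho (p : ℕ) {G : Type} [Group G] : ℕ → Subgroup G → Subgroup G
  | 0, K => K
  | t + 1, K => MhoOne p (iteratedMho p t K)

section IteratedMho

variable {p : ℕ} {G : Type} [Group G]

theorem iteratedMho_mono (t : ℕ) {H K : Subgroup G} (h : H ≤ K) :
    iteratedMho p t H ≤ iteratedMho p t K := by
  induction t with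
  | zero => exact h
  | succ t ih => exact mhoOne_mono ih

theorem iteratedMho_succ_top_le [Fact p.Prime] [Finite G] (hG : IsPGroup p G) (t : ℕ) :
    iteratedMho p (t + 1) (⊤ : Subgroup G) ≤ iteratedMho p t (frattini G) := by
  induction t with
  | zero => exact (Subgroup.closure_le _).2 fun _ ⟨x, _, hx⟩ ↦ hx ▸ pow_mem_frattini hG x
  | succ t ih => exact mhoOne_mono ih

end IteratedMho

namespace IsRegularPGroup

variable {p : ℕ} [hp : Fact p.Prime] {G : Type} [Group G] [Finite G]
  (hG : IsPGroup p G) (hr : IsRegularPGroup p G)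

include hG hr

theorem mem_iteratedMho_iff {t : ℕ} {K : Subgroup G} {y : G} :
    y ∈ iteratedMho p t K ↔ ∃ x ∈ K, y = x ^ p ^ t := by
  induction t generalizing y with
  | zero => simp only [iteratedMho, pow_zero, pow_one, exists_eq_right']
  | succ t ih =>
    rw [iteratedMho, mem_mhoOne_iff hG hr]
    simp only [ih, pow_succ, pow_mul]
    constructor
    · rintro ⟨_, ⟨z, hz, rfl⟩, rfl⟩
      exact ⟨z, hz, rfl⟩
    · rintro ⟨z, hz, rfl⟩
      exact ⟨_, ⟨z, hz, rfl⟩, rfl⟩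

theorem pow_mem_iteratedMho_top (t : ℕ) (x : G) : x ^ p ^ t ∈ iteratedMho p t (⊤ : Subgroup G) :=
  (mem_iteratedMho_iff hG hr).2 ⟨x, Subgroup.mem_top x, rfl⟩

theorem normal_iteratedMho (t : ℕ) (K : Subgroup G) [hK : K.Normal] :
    (iteratedMho p t K).Normal := by
  refine ⟨fun n hn g ↦ ?_⟩
  rw [mem_iteratedMho_iff hG hr] at hn ⊢
  obtain ⟨x, hx, rfl⟩ := hn
  exact ⟨g * x * g⁻¹, hK.conj_mem x hx g, conj_pow.symm⟩

theorem commutator_iteratedMho_top_le (t : ℕ) :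
    ⁅iteratedMho p t (⊤ : Subgroup G), (⊤ : Subgroup G)⁆ ≤ iteratedMho p t (frattini G) := by
  induction t with
  | zero => exact commutator_le_frattini hG
  | succ t ih =>
    have hnormal := normal_iteratedMho hG hr (t + 1) (frattini G)
    rw [Subgroup.commutator_comm] at ih ⊢
    refine Subgroup.commutator_le.2 fun g hg h hh ↦ ?_
    obtain ⟨y, hy, rfl⟩ := (mem_mhoOne_iff hG hr).1 hh
    have hgy : ⁅g, y⁆ ∈ iteratedMho p t (frattini G) :=
      ih (Subgroup.commutator_mem_commutator hg hy)
    obtain ⟨z, hz, hpow⟩ := hr.exists_mul_pow_eq ((Subgroup.commutator_mono le_top le_rfl).trans ih)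
      (iteratedMho_mono t le_top hgy) hy
    have hconj : ⁅g, y⁆ * y = g * y * g⁻¹ := by rw [commutatorElement_def]; group
    have hexpand : ⁅g, y ^ p⁆ = ⁅g, y⁆ ^ p * (y ^ p * z * (y ^ p)⁻¹) := by
      rw [hconj, conj_pow] at hpow
      rw [commutatorElement_def, hpow]
      group
    rw [hexpand]
    exact mul_mem (pow_mem_mhoOne hgy) (hnormal.conj_mem z hz _)

theorem exists_mul_pow_pow_eq (t : ℕ) (a b : G) :
    ∃ z ∈ iteratedMho p t (frattini G), (a * b) ^ p ^ t = a ^ p ^ t * b ^ p ^ t * z := by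
  induction t with
  | zero => exact ⟨1, one_mem _, by simp only [pow_zero, pow_one, mul_one]⟩
  | succ t ih =>
    obtain ⟨z, hz, h⟩ := ih
    have hcomm : ⁅iteratedMho p t (⊤ : Subgroup G), iteratedMho p t ⊤⁆ ≤
        iteratedMho p t (frattini G) :=
      (Subgroup.commutator_mono le_rfl le_top).trans (commutator_iteratedMho_top_le hG hr t)
    have ha := pow_mem_iteratedMho_top hG hr t a
    have hb := pow_mem_iteratedMho_top hG hr t b
    obtain ⟨u, hu, hzu⟩ := hr.exists_mul_pow_eq hcomm (mul_mem ha hb) (iteratedMho_mono t le_top hz)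
    obtain ⟨v, hv, hab⟩ := hr.exists_mul_pow_eq hcomm ha hb
    refine ⟨v * z ^ p * u, mul_mem (mul_mem hv (pow_mem_mhoOne hz)) hu, ?_⟩
    rw [pow_succ, pow_mul, pow_mul, pow_mul, h, hzu, hab]
    group

-- `g ↦ g ^ p ^ t` induces a homomorphism onto `℧ₜ(G) / ℧ₜ(Φ)` with kernel `Φ Ωₜ`. So `G / Φ Ωₜ`
-- is cyclic, hence so is `G / Ωₜ`, and the commutators of `G` have order dividing `p ^ t`.
theorem commutator_le_torsion {t : ℕ} (h : Nat.card (iteratedMho p t (⊤ : Subgroup G)) ≤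
    p * Nat.card (iteratedMho p t (frattini G))) :
    commutator G ≤ (powEqIff hG hr t).torsion := by
  set T := (powEqIff hG hr t).torsion
  set K := iteratedMho p t (frattini G)
  have hK : K.Normal := normal_iteratedMho hG hr t (frattini G)
  let ρ : G →* G ⧸ K := MonoidHom.mk' (fun g ↦ ((g ^ p ^ t : G) : G ⧸ K)) fun a b ↦ by
    obtain ⟨z, hz, hab⟩ := exists_mul_pow_pow_eq hG hr t a b
    rw [hab, QuotientGroup.mk_mul, QuotientGroup.mk_mul, (QuotientGroup.eq_one_iff z).2 hz, mul_one]
  have hker : ρ.ker = frattini G ⊔ T := by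
    ext g
    rw [MonoidHom.mem_ker, Subgroup.mem_sup_of_normal_right]
    refine (QuotientGroup.eq_one_iff (g ^ p ^ t)).trans
      ((mem_iteratedMho_iff hG hr).trans (exists_congr fun f ↦ and_congr_right fun _ ↦ ?_))
    rw [eq_comm, powEqIff hG hr t]
    exact ⟨fun hf ↦ ⟨f⁻¹ * g, hf, mul_inv_cancel_left f g⟩,
      fun ⟨d, hd, hfd⟩ ↦ hfd ▸ (inv_mul_cancel_left f d).symm ▸ hd⟩
  have hrange : ρ.range = (iteratedMho p t (⊤ : Subgroup G)).map (QuotientGroup.mk' K) := by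
    ext q
    constructor
    · rintro ⟨g, rfl⟩
      exact ⟨g ^ p ^ t, pow_mem_iteratedMho_top hG hr t g, rfl⟩
    · rintro ⟨y, hy, rfl⟩
      obtain ⟨g, _, rfl⟩ := (mem_iteratedMho_iff hG hr).1 hy
      exact ⟨g, rfl⟩
  have hcard : Nat.card ρ.range * Nat.card K = Nat.card (iteratedMho p t (⊤ : Subgroup G)) := by
    rw [hrange, ← Subgroup.relIndex_ker, QuotientGroup.ker_mk', mul_comm,
      ← Subgroup.relIndex_bot_left, ← Subgroup.relIndex_bot_left]
    exact Subgroup.relIndex_mul_relIndex _ _ _ bot_le (iteratedMho_mono t le_top)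
  rw [← hcard] at h
  have : IsCyclic (G ⧸ (frattini G ⊔ T)) := by
    refine isCyclic_of_isPGroup_of_card_le (hG.to_quotient _) ?_
    rw [← hker, Nat.card_congr (QuotientGroup.quotientKerEquivRange ρ).toEquiv]
    exact Nat.le_of_mul_le_mul_right h Nat.card_pos
  exact commutator_le_of_isCyclic_quotient

theorem commutator_iteratedMho_eq_bot {t : ℕ} (h : Nat.card (iteratedMho p t (⊤ : Subgroup G)) ≤
    p * Nat.card (iteratedMho p t (frattini G))) :
    ⁅iteratedMho p t (⊤ : Subgroup G), (⊤ : Subgroup G)⁆ = ⊥ := by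
  refine le_bot_iff.1 (Subgroup.commutator_le.2 fun y hy g _ ↦ ?_)
  obtain ⟨x, _, rfl⟩ := (mem_iteratedMho_iff hG hr).1 hy
  rw [Subgroup.mem_bot, commutatorElement_eq_one_iff_commute]
  exact (powEqIff hG hr t).commute_pow_of_commutator_le (commutator_le_torsion hG hr h) x g

theorem exists_gammaSeries_le_iteratedMho_succ {t s : ℕ}
    (h : p * Nat.card (iteratedMho p t (frattini G)) < Nat.card (iteratedMho p t (⊤ : Subgroup G)))
    (hs : gammaSeries G (s + 1) ≤ iteratedMho p t ⊤) :
    ∃ s', gammaSeries G (s' + 1) ≤ iteratedMho p (t + 1) ⊤ ∧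
      p ^ (s' + 1) * Nat.card (iteratedMho p (t + 1) (⊤ : Subgroup G)) ≤
        p ^ s * Nat.card (iteratedMho p t (⊤ : Subgroup G)) := by
  have := normal_iteratedMho hG hr t (frattini G)
  have := normal_iteratedMho hG hr (t + 1) (⊤ : Subgroup G)
  have hle := Subgroup.card_le_of_le (iteratedMho_succ_top_le hG t)
  obtain ⟨a, ha⟩ := IsPGroup.iff_card.1 (hG.to_subgroup (iteratedMho p t ⊤))
  obtain ⟨b, hb⟩ := IsPGroup.iff_card.1 (hG.to_subgroup (iteratedMho p t (frattini G)))
  obtain ⟨c, hc⟩ := IsPGroup.iff_card.1 (hG.to_subgroup (iteratedMho p (t + 1) ⊤))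
  rw [hb, hc, Nat.pow_le_pow_iff_right hp.out.one_lt] at hle
  rw [ha, hb, ← pow_succ', Nat.pow_lt_pow_iff_right hp.out.one_lt] at h
  refine ⟨s + 1 + (b - c), gammaSeries_le_of_card_le hG (iteratedMho_succ_top_le hG t) ?_
    ((Subgroup.commutator_mono hs le_rfl).trans (commutator_iteratedMho_top_le hG hr t)), ?_⟩
  · rw [hb, hc, ← pow_add, Nat.sub_add_cancel hle]
  · rw [ha, hc, ← pow_add, ← pow_add]
    exact Nat.pow_le_pow_right hp.out.pos (by lia)

theorem exists_gammaSeries_le_iteratedMho {t : ℕ} (h : ∀ i < t,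
    p * Nat.card (iteratedMho p i (frattini G)) < Nat.card (iteratedMho p i (⊤ : Subgroup G))) :
    ∃ s, gammaSeries G (s + 1) ≤ iteratedMho p t ⊤ ∧
      p ^ (s + t) * Nat.card (iteratedMho p t (⊤ : Subgroup G)) ≤ Nat.card G := by
  induction t with
  | zero => exact ⟨0, le_top, by rw [pow_zero, one_mul]; exact Subgroup.card_le_card_group _⟩
  | succ t ih =>
    obtain ⟨s, hs, hcard⟩ := ih fun i hi ↦ h i (hi.trans t.lt_succ_self)
    obtain ⟨s', hs', hcard'⟩ :=
      exists_gammaSeries_le_iteratedMho_succ hG hr (h t t.lt_succ_self) hs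
    refine ⟨s', hs', le_trans ?_ hcard⟩
    rw [← add_assoc, Nat.add_right_comm, pow_add _ _ t, pow_add _ _ t, mul_right_comm,
      mul_right_comm _ _ (Nat.card _)]
    exact Nat.mul_le_mul_right _ hcard'

theorem exists_card_iteratedMho_le : ∃ t, Nat.card (iteratedMho p t (⊤ : Subgroup G)) ≤
    p * Nat.card (iteratedMho p t (frattini G)) := by
  obtain ⟨n, hn⟩ := IsPGroup.iff_card.1 hG
  refine ⟨n, le_trans (le_of_eq ?_) (Nat.mul_pos hp.out.pos Nat.card_pos)⟩
  refine Subgroup.card_eq_one.2 ((Subgroup.eq_bot_iff_forall _).2 fun y hy ↦ ?_)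
  obtain ⟨x, _, rfl⟩ := (mem_iteratedMho_iff hG hr).1 hy
  rw [← hn, pow_card_eq_one']

theorem lt_add_of_pow_ne_one {x : G} {k t c : ℕ} (hx : x ^ p ^ k ≠ 1)
    (hc : Nat.card (iteratedMho p t (⊤ : Subgroup G)) = p ^ c) : k < t + c := by
  by_contra! hle
  obtain ⟨d, rfl⟩ := Nat.exists_eq_add_of_le hle
  have hpow : (x ^ p ^ t) ^ p ^ c = 1 := by
    rw [← hc]
    exact congrArg Subtype.val (pow_card_eq_one' (x := (⟨_, pow_mem_iteratedMho_top hG hr t x⟩ :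
      iteratedMho p t (⊤ : Subgroup G))))
  exact hx (by rw [pow_add, pow_add, pow_mul, pow_mul, hpow, one_pow])

theorem gammaSeries_eq_bot {k m : ℕ} (hcard : Nat.card G = p ^ (k + m)) {x : G}
    (hx : x ^ p ^ k ≠ 1) : gammaSeries G (m + 1) = ⊥ := by
  classical
  have hex := exists_card_iteratedMho_le hG hr
  set t := Nat.find hex
  obtain ⟨s, hs, hst⟩ := exists_gammaSeries_le_iteratedMho hG hr (t := t)
    fun i hi ↦ not_le.1 (Nat.find_min hex hi)
  have hbot : gammaSeries G (s + 2) = ⊥ := le_bot_iff.1 <|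
    (Subgroup.commutator_mono hs le_rfl).trans
      (commutator_iteratedMho_eq_bot hG hr (Nat.find_spec hex)).le
  obtain ⟨c, hc⟩ := IsPGroup.iff_card.1 (hG.to_subgroup (iteratedMho p t ⊤))
  rw [hc, hcard, ← pow_add, Nat.pow_le_pow_iff_right hp.out.one_lt] at hst
  have hk := lt_add_of_pow_ne_one hG hr hx hc
  exact le_bot_iff.1 ((gammaSeries_antitone G (by lia)).trans hbot.le)

end IsRegularPGroup

theorem factorialInvertible_zmod_prime_pow {p : ℕ} (hp : p.Prime) (n : ℕ) :
    FactorialInvertible (ZMod (p ^ n)) (p - 1) where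
  isUnit_factorial := (ZMod.isUnit_iff_coprime _ _).2 <| Nat.Coprime.pow_right n <|
    (hp.coprime_factorial_of_lt (Nat.sub_one_lt hp.ne_zero)).symm

section TypeInvariants

variable {p : ℕ} {G : Type} [Group G]

theorem muInv_one_le_of_pow_eq_one {k : ℕ} (h : ∀ x : G, x ^ p ^ k = 1) : muInv p G 1 ≤ k := by
  have htop : ∀ i, k ≤ i → OmegaSubgroup p G i = ⊤ := by
    refine fun i hi ↦ top_le_iff.1 fun x _ ↦ Subgroup.subset_closure ?_
    exact orderOf_dvd_iff_pow_eq_one.1 ((orderOf_dvd_of_pow_eq_one (h x)).trans (pow_dvd_pow p hi))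
  have hsub : {i | 1 ≤ i ∧ 1 ≤ omegaInv p G i} ⊆ Set.Icc 1 k := by
    refine fun i ⟨hi, hω⟩ ↦ ⟨hi, le_of_not_gt fun hki ↦ ?_⟩
    rw [omegaInv, htop i hki.le, htop (i - 1) (Nat.le_sub_one_of_lt hki), Subgroup.relIndex_self,
      Nat.factorization_one] at hω
    exact Nat.not_succ_le_zero 0 hω
  have hcard := Nat.card_mono (Set.finite_Icc 1 k) hsub
  rwa [Nat.card_coe_set_eq (Set.Icc 1 k), ← Finset.coe_Icc, Set.ncard_coe_finset, Nat.card_Icc,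
    Nat.add_sub_cancel] at hcard

theorem IsRegularPGroup.gammaSeries_eq_bot_of_hasTypeInvariants [Fact p.Prime] [Finite G]
    (hr : IsRegularPGroup p G) {e : ℕ} (he : 0 < e) {l : List ℕ}
    (htype : HasTypeInvariants p G (e :: l)) (hcard : Nat.card G = p ^ (e + l.sum)) :
    gammaSeries G (l.sum + 2) = ⊥ := by
  obtain ⟨k, rfl⟩ := Nat.exists_eq_succ_of_ne_zero he.ne'
  obtain ⟨x, hx⟩ : ∃ x : G, x ^ p ^ k ≠ 1 := by
    by_contra! h
    exact (muInv_one_le_of_pow_eq_one h).not_gt ((htype 0).symm ▸ k.lt_succ_self)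
  refine gammaSeries_eq_bot (IsPGroup.of_card hcard) hr (k := k) (m := l.sum + 1) ?_ hx
  rw [hcard, Nat.succ_add_eq_add_succ]

end TypeInvariants

section Counting

theorem card_quot_eq_of_biTotal {α β : Type*} {r : α → α → Prop} {s : β → β → Prop}
    (hs : Equivalence s) {ρ : α → β → Prop} (hρ : Relator.BiTotal ρ)
    (h : ∀ ⦃a b⦄, ρ a b → ∀ ⦃a' b'⦄, ρ a' b' → (r a a' ↔ s b b')) :
    Nat.card (Quot r) = Nat.card (Quot s) := by
  choose f hf using hρ.1
  refine Nat.card_eq_of_bijective (Quot.map f fun a a' ↦ (h (hf a) (hf a')).1) ⟨?_, ?_⟩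
  · rintro ⟨a⟩ ⟨a'⟩ haa'
    exact Quot.sound ((h (hf a) (hf a')).2 (hs.eqvGen_iff.1 (Quot.eqvGen_exact haa')))
  · rintro ⟨b⟩
    obtain ⟨a, hab⟩ := hρ.2 b
    exact ⟨Quot.mk r a, Quot.sound ((h (hf a) hab).1 ((h hab hab).2 (hs.refl b)))⟩

variable {N c : ℕ} [FactorialInvertible (ZMod N) c]

theorem exists_group_lazardCorrespondent {L : Type} [LieRing L] (hN : ∀ x : L, N • x = 0)
    (hL : lieLCS L c = ⊥) : ∃ _ : Group L, LazardCorrespondent N c L L := by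
  let := lieAlgebraZMod hN
  refine ⟨_, lazardCorrespondent_bchGroup (c := c) (SetLike.coe_injective ?_)⟩
  rw [← coe_lieLCS, hL]
  rfl

theorem equivalence_nonempty_mulEquiv {T : Type} (Q : Group T → Prop) :
    Equivalence fun s t : {s : Group T // Q s} ↦
      Nonempty (@MulEquiv T T (mulOfGroup _ s.1) (mulOfGroup _ t.1)) where
  refl s := ⟨@MulEquiv.refl T (mulOfGroup _ s.1)⟩
  symm := fun {s t} ⟨f⟩ ↦ ⟨@MulEquiv.symm T T (mulOfGroup _ s.1) (mulOfGroup _ t.1) f⟩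
  trans := fun {s t u} ⟨f⟩ ⟨g⟩ ↦
    ⟨@MulEquiv.trans T T T (mulOfGroup _ s.1) (mulOfGroup _ t.1) (mulOfGroup _ u.1) f g⟩

theorem groupClassCount_eq_lieClassCount {Q : Group (Fin N) → Prop} {Q' : LieRing (Fin N) → Prop}
    (hQ : ∀ (g : Group (Fin N)) (s : LieRing (Fin N)),
      LazardCorrespondent N c (Fin N) (Fin N) → (Q g ↔ Q' s))
    (hgroup : ∀ g : Group (Fin N), Q g → gammaSeries (Fin N) (c + 1) = ⊥)
    (hlie : ∀ s : LieRing (Fin N), Q' s → lieLCS (Fin N) c = ⊥) :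
    groupClassCount N Q = lieClassCount N Q' := by
  refine (card_quot_eq_of_biTotal (equivalence_nonempty_mulEquiv Q)
    (ρ := fun s g ↦ @LazardCorrespondent N c _ (Fin N) (Fin N) s.1 g.1) ⟨?_, ?_⟩ ?_).symm
  · rintro ⟨s, hs⟩
    obtain ⟨g, hg⟩ := exists_group_lazardCorrespondent (N := N)
      (fun x : Fin N ↦ by simpa using card_nsmul_eq_zero' (x := x)) (hlie s hs)
    exact ⟨⟨g, (hQ g s hg).2 hs⟩, hg⟩
  · rintro ⟨g, hg⟩
    obtain ⟨s, hs⟩ := exists_lieRing_lazardCorrespondent (N := N)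
      (fun x : Fin N ↦ by simpa using pow_card_eq_one' (x := x)) (hgroup g hg)
    exact ⟨⟨s, (hQ g s hs).1 hg⟩, hs⟩
  · exact fun s g h s' g' h' ↦
      (@LazardCorrespondent.nonempty_mulEquiv_iff N c _ _ _ _ _ s.1 s'.1 g.1 g'.1 h h').symm

end Counting

/-- Let `p` be a prime and `e ≥ λ_1 ≥ ... ≥ λ_k` positive integers with
`p > λ_1 + ... + λ_k + 1`.  Then `Ψ_e^p(λ_1, ..., λ_k)` equals the number of isomorphism
classes of nilpotent Lie rings of order `p ^ (e + λ_1 + ... + λ_k)` with type invariants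
`(e, λ_1, ..., λ_k)` and nilpotency class less than `p`. -/
theorem psi_type_eq_lie_count (p e : ℕ) (hp : p.Prime) (l : List ℕ)
    (hsort : List.Pairwise (· ≥ ·) (e :: l))
    (hpos : ∀ x ∈ e :: l, 0 < x)
    (hpl : p > l.sum + 1) :
    PsiType p e l =
      lieClassCount (p ^ (e + l.sum)) (fun s =>
        letI := s
        IsNilpotentLieRing (Fin (p ^ (e + l.sum))) ∧
          lieNilClass (Fin (p ^ (e + l.sum))) < p ∧
          aHasType p (Fin (p ^ (e + l.sum))) (e :: l)) := by
  have : Fact p.Prime := ⟨hp⟩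
  have := factorialInvertible_zmod_prime_pow hp (e + l.sum)
  refine groupClassCount_eq_lieClassCount (c := p - 1) (fun g s h ↦ ?_) (fun g hg ↦ ?_)
    fun s hs ↦ (isNilpotentLieRing_and_lieNilClass_lt_iff hp.ne_zero).1 ⟨hs.1, hs.2.1⟩
  · rw [← and_assoc, isNilpotentLieRing_and_lieNilClass_lt_iff hp.ne_zero,
      h.hasTypeInvariants_iff p (e :: l)]
    exact and_congr_left' (iff_of_true (h.isRegularPGroup p) h.lieLCS_eq_bot)
  · have hbot := hg.1.gammaSeries_eq_bot_of_hasTypeInvariants (hpos e List.mem_cons_self) hg.2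
      (Nat.card_fin _)
    exact le_bot_iff.1 ((gammaSeries_antitone _ (by lia)).trans hbot.le)
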